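/- arXiv:1109.5199 — 12 statements merged into one kernel-verified Lean document; each statement's English description precedes it below -/
import Mathlib

section
/- Suppose 1/s₁ + 1/s₂ ≤ 1. Then for every admissible a ≥ 0 the map W_a has an absolutely continuous invariant probability measure μ_a whose support is all of [0,1], and W_a is exact with respect to μ_a: for every measurable set A ⊆ [0,1] with μ_a(A) > 0, one has μ_a(W_a^n(A)) → 1 as n → ∞. -/
open MeasureTheory Filter Topology

/-- The W-like map `W_a` with parameters `s₁ s₂ p q r` and perturbation `a`. -/
noncomputable def Wmap (s₁ s₂ p q r a : ℝ) (x : ℝ) : ℝ :=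
  if x < 1/2 - (1/2 + r*a)/(s₁ + p*a) then
    1 - (2*(s₁ + p*a)/(s₁ - 1 + p*a - 2*r*a)) * x
  else if x < 1/2 then
    (s₁ + p*a)*(x - 1/2) + 1/2 + r*a
  else if x < 1/2 + (1/2 + r*a)/(s₂ + q*a) then
    -(s₂ + q*a)*(x - 1/2) + 1/2 + r*a
  else
    1 + (2*(s₂ + q*a)/(s₂ - 1 + q*a - 2*r*a)) * (x - 1)

/-- Abstract form of the W-like map. -/
structure PW (W : ℝ → ℝ) (σ1 σ2 τ1 τ2 b1 b2 h : ℝ) : Prop where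
  b1pos : 0 < b1
  b1lt : b1 < 1/2
  b2gt : 1/2 < b2
  b2lt : b2 < 1
  hge : 1/2 ≤ h
  hle : h ≤ 1
  σ1gt : 1 < σ1
  σ2gt : 1 < σ2
  τ1gt : 1 < τ1
  τ2gt : 1 < τ2
  e1 : τ1 * b1 = 1
  e2 : σ1 * (1/2 - b1) = h
  e3 : σ2 * (b2 - 1/2) = h
  e4 : τ2 * (1 - b2) = 1
  w1 : ∀ x, x ≤ b1 → W x = 1 - τ1 * x
  w2 : ∀ x, b1 ≤ x → x ≤ 1/2 → W x = σ1 * (x - 1/2) + h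
  w3 : ∀ x, 1/2 ≤ x → x ≤ b2 → W x = -σ2 * (x - 1/2) + h
  w4 : ∀ x, b2 ≤ x → W x = 1 + τ2 * (x - 1)
  cond : h = 1/2 ∨ σ1 + σ2 < σ1 * σ2
  maps : Set.MapsTo W (Set.Icc 0 1) (Set.Icc 0 1)

theorem Wmap_PW
    (s₁ s₂ p q r : ℝ) (hs₁ : 1 < s₁) (hs₂ : 1 < s₂)
    (hp : 0 < p) (hq : 0 < q) (hr : 0 < r)
    (hsum : 1/s₁ + 1/s₂ ≤ 1)
    (a : ℝ) (ha : 0 ≤ a)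
    (hden₁ : 0 < s₁ - 1 + p*a - 2*r*a) (hden₂ : 0 < s₂ - 1 + q*a - 2*r*a)
    (hadm : Set.MapsTo (Wmap s₁ s₂ p q r a) (Set.Icc 0 1) (Set.Icc 0 1)) :
    PW (Wmap s₁ s₂ p q r a) (s₁ + p*a) (s₂ + q*a) (2*(s₁ + p*a)/(s₁ - 1 + p*a - 2*r*a))
      (2*(s₂ + q*a)/(s₂ - 1 + q*a - 2*r*a)) (1/2 - (1/2 + r*a)/(s₁ + p*a))
      (1/2 + (1/2 + r*a)/(s₂ + q*a)) (1/2 + r*a) := by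
  have hpa : 0 ≤ p*a := by positivity
  have hqa : 0 ≤ q*a := by positivity
  have hra : 0 ≤ r*a := by positivity
  have hσ1 : 1 < s₁ + p*a := by linarith
  have hσ2 : 1 < s₂ + q*a := by linarith
  have hd1 : s₁ - 1 + p*a - 2*r*a = (s₁ + p*a) - 2*(1/2+r*a) := by ring
  have hd2 : s₂ - 1 + q*a - 2*r*a = (s₂ + q*a) - 2*(1/2+r*a) := by ring
  have hss : s₁ + s₂ ≤ s₁ * s₂ := by
    have h1 : 0 < s₁ := by linarith
    have h2 : 0 < s₂ := by linarith
    rw [div_add_div _ _ h1.ne' h2.ne', div_le_one (by positivity)] at hsum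
    linarith
  have hcond : 1/2 + r*a = 1/2 ∨ (s₁ + p*a) + (s₂ + q*a) < (s₁ + p*a) * (s₂ + q*a) := by
    rcases ha.eq_or_lt with h0 | h0
    · left; rw [← h0]; ring
    · right
      have h3 : 0 < p*a := by positivity
      have h4 : 0 < q*a := by positivity
      nlinarith [mul_pos h3 h4, mul_pos h3 (sub_pos.2 hs₂), mul_pos h4 (sub_pos.2 hs₁)]
  have hWd : ∀ x, Wmap s₁ s₂ p q r a x =
    if x < 1/2 - (1/2 + r*a)/(s₁ + p*a) then
    1 - (2*(s₁ + p*a)/(s₁ - 1 + p*a - 2*r*a)) * x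
  else if x < 1/2 then
    (s₁ + p*a)*(x - 1/2) + (1/2 + r*a)
  else if x < 1/2 + (1/2 + r*a)/(s₂ + q*a) then
    -(s₂ + q*a)*(x - 1/2) + (1/2 + r*a)
  else
    1 + (2*(s₂ + q*a)/(s₂ - 1 + q*a - 2*r*a)) * (x - 1) := by
    intro x; unfold Wmap; simp only [add_assoc]
  rw [hd1] at hden₁ hWd ⊢
  rw [hd2] at hden₂ hWd ⊢
  have hh0 : 1/2 ≤ 1/2 + r*a := by linarith
  generalize Wmap s₁ s₂ p q r a = W at *
  generalize s₁ + p*a = σ1 at *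
  generalize s₂ + q*a = σ2 at *
  generalize 1/2 + r*a = h at *
  have p1 : 0 < σ1 := by linarith
  have p2 : 0 < σ2 := by linarith
  have q1 : h/σ1 < 1/2 := by rw [div_lt_iff₀ p1]; linarith
  have q2 : h/σ2 < 1/2 := by rw [div_lt_iff₀ p2]; linarith
  have q3 : 0 < h/σ1 := by apply div_pos <;> linarith
  have q4 : 0 < h/σ2 := by apply div_pos <;> linarith
  have hle : h ≤ 1 := by
    have := (hadm (show (1/2:ℝ) ∈ Set.Icc 0 1 by constructor <;> norm_num)).2
    rw [hWd, if_neg (by linarith), if_neg (lt_irrefl _), if_pos (by linarith)] at this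
    linarith
  have e1 : 2 * σ1 / (σ1 - 2 * h) * (1 / 2 - h / σ1) = 1 := by
    field_simp
  have e4 : 2 * σ2 / (σ2 - 2 * h) * (1 - (1 / 2 + h / σ2)) = 1 := by
    field_simp; ring
  have e2 : σ1 * (1 / 2 - (1 / 2 - h / σ1)) = h := by field_simp; ring
  have e3 : σ2 * ((1 / 2 + h / σ2) - 1/2) = h := by field_simp; ring
  refine ⟨by linarith, by linarith, by linarith, by linarith, hh0, hle, hσ1, hσ2, ?_, ?_, e1, e2, e3,
    e4, ?_, ?_, ?_, ?_, hcond, hadm⟩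
  · rw [lt_div_iff₀ hden₁]; linarith
  · rw [lt_div_iff₀ hden₂]; linarith
  · intro x hx
    rw [hWd]
    rcases hx.eq_or_lt with h0 | h0
    · rw [if_neg (by linarith), if_pos (by linarith), h0]; linarith
    · rw [if_pos h0]
  · intro x hx hx2
    rw [hWd, if_neg (by linarith)]
    rcases hx2.eq_or_lt with h0 | h0
    · rw [if_neg (by linarith), if_pos (by linarith), h0]; linarith
    · rw [if_pos h0]
  · intro x hx hx2
    rw [hWd, if_neg (by linarith), if_neg (by linarith)]
    rcases hx2.eq_or_lt with h0 | h0
    · rw [if_neg (by linarith), h0]; linarith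
    · rw [if_pos h0]
  · intro x hx
    rw [hWd, if_neg (by linarith), if_neg (by linarith), if_neg (by linarith)]

namespace PW

variable {W : ℝ → ℝ} {σ1 σ2 τ1 τ2 b1 b2 h : ℝ}

theorem cont (H : PW W σ1 σ2 τ1 τ2 b1 b2 h) : Continuous W := by
  have : W = fun x => max (max (1 - τ1 * x) (1 + τ2 * (x - 1)))
      (min (σ1 * (x - 1/2) + h) (-σ2 * (x - 1/2) + h)) := by
    have i1 := H.b1pos
    have i2 := H.b1lt
    have i3 := H.b2gt
    have i4 := H.b2lt
    have s1 := H.σ1gt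
    have s2 := H.σ2gt
    have t1 := H.τ1gt
    have t2 := H.τ2gt
    have e1 := H.e1
    have e2 := H.e2
    have e3 := H.e3
    have e4 := H.e4
    have j1 : ∀ x, x ≤ b1 → 0 ≤ 1 - τ1 * x ∧ σ1 * (x - 1/2) + h ≤ 0 := fun x hx =>
      ⟨by nlinarith, by nlinarith⟩
    have j2 : ∀ x, b1 ≤ x → 1 - τ1 * x ≤ 0 ∧ 0 ≤ σ1 * (x - 1/2) + h := fun x hx =>
      ⟨by nlinarith, by nlinarith⟩
    have j3 : ∀ x, x ≤ b2 → 1 + τ2 * (x - 1) ≤ 0 ∧ 0 ≤ -σ2 * (x - 1/2) + h := fun x hx =>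
      ⟨by nlinarith, by nlinarith⟩
    have j4 : ∀ x, b2 ≤ x → 0 ≤ 1 + τ2 * (x - 1) ∧ -σ2 * (x - 1/2) + h ≤ 0 := fun x hx =>
      ⟨by nlinarith, by nlinarith⟩
    funext x
    rcases le_total x b1 with h1 | h1
    · rw [H.w1 x h1, max_eq_left (a := 1 - τ1 * x), max_eq_left]
      · exact (min_le_left _ _).trans (by linarith [j1 x h1])
      · linarith [j1 x h1, j3 x (by linarith)]
    rcases le_total x (1/2) with h2 | h2
    · rw [H.w2 x h1 h2, min_eq_left, max_eq_right]
      · exact max_le (by linarith [j2 x h1]) (by linarith [j2 x h1, j3 x (by linarith)])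
      · nlinarith
    rcases le_total x b2 with h3 | h3
    · rw [H.w3 x h2 h3, min_eq_right, max_eq_right]
      · exact max_le (by linarith [j2 x h1, j3 x h3]) (by linarith [j3 x (by linarith)])
      · nlinarith
    · rw [H.w4 x h3, max_eq_right (b := 1 + τ2 * (x - 1)), max_eq_left]
      · exact (min_le_right _ _).trans (by linarith [j4 x h3])
      · linarith [j2 x h1, j4 x h3]
  rw [this]
  fun_prop

theorem vol_affine (s d : ℝ) (S : Set ℝ) :
    volume ((fun x => s * x + d) '' S) ≤ ENNReal.ofReal |s| * volume S := by
  have : (fun x => s * x + d) '' S = (fun x => x + d) '' ((fun x => s * x) '' S) := by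
    rw [Set.image_image]
  rw [this, Set.image_add_right, measure_preimage_add_right]
  have := Measure.addHaar_image_linearMap (volume : Measure ℝ) (LinearMap.mulLeft ℝ s) S
  have h2 : (LinearMap.mulLeft ℝ s).det = s := by
    rw [show LinearMap.mulLeft ℝ s = s • LinearMap.id by ext; simp]
    simp
  rw [h2] at this
  exact this.le

theorem vol_image (H : PW W σ1 σ2 τ1 τ2 b1 b2 h) :
    ∃ K : ENNReal, K ≠ ⊤ ∧ ∀ S : Set ℝ, volume (W '' S) ≤ K * volume S := by
  refine ⟨ENNReal.ofReal |-τ1| + ENNReal.ofReal |σ1| + ENNReal.ofReal |-σ2| + ENNReal.ofReal |τ2|,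
    by simp, fun S => ?_⟩
  have : W '' S ⊆ (((fun x => (-τ1) * x + 1) '' S ∪ (fun x => σ1 * x + (-σ1*(1/2) + h)) '' S) ∪
      (fun x => (-σ2) * x + (σ2*(1/2) + h)) '' S) ∪ (fun x => τ2 * x + (1 - τ2)) '' S := by
    rintro _ ⟨x, hx, rfl⟩
    rcases le_total x b1 with h1 | h1
    · left; left; left; exact ⟨x, hx, by rw [H.w1 x h1]; ring⟩
    rcases le_total x (1/2) with h2 | h2
    · left; left; right; exact ⟨x, hx, by rw [H.w2 x h1 h2]; ring⟩
    rcases le_total x b2 with h3 | h3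
    · left; right; exact ⟨x, hx, by rw [H.w3 x h2 h3]; ring⟩
    · right; exact ⟨x, hx, by rw [H.w4 x h3]; ring⟩
  refine (measure_mono this).trans ?_
  rw [add_mul, add_mul, add_mul]
  refine (measure_union_le _ _).trans (add_le_add ?_ (vol_affine _ _ _))
  refine (measure_union_le _ _).trans (add_le_add ?_ (vol_affine _ _ _))
  exact (measure_union_le _ _).trans (add_le_add (vol_affine _ _ _) (vol_affine _ _ _))

theorem vol_image_iter (H : PW W σ1 σ2 τ1 τ2 b1 b2 h) (n : ℕ) :
    ∃ K : ENNReal, K ≠ ⊤ ∧ ∀ S : Set ℝ, volume (W^[n] '' S) ≤ K * volume S := by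
  obtain ⟨K, hK, hS⟩ := H.vol_image
  refine ⟨K ^ n, ENNReal.pow_ne_top hK, fun S => ?_⟩
  induction n with
  | zero => simp
  | succ n ih =>
    rw [Function.iterate_succ', Set.image_comp, pow_succ', mul_assoc]
    exact (hS _).trans (mul_le_mul_right ih _)

/-- minimal slope -/
theorem exists_slope (H : PW W σ1 σ2 τ1 τ2 b1 b2 h) :
    ∃ l : ℝ, 1 < l ∧ l ≤ σ1 ∧ l ≤ σ2 ∧ l ≤ τ1 ∧ l ≤ τ2 := by
  refine ⟨min (min σ1 σ2) (min τ1 τ2), ?_, ?_, ?_, ?_, ?_⟩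
  · simp [H.σ1gt, H.σ2gt, H.τ1gt, H.τ2gt]
  all_goals simp

/-- the interval eventually covers everything -/
def Cov (W : ℝ → ℝ) (u v : ℝ) : Prop := ∃ n : ℕ, Set.Icc (0:ℝ) 1 ⊆ W^[n] '' Set.Icc u v

theorem cov_step {u v u' v' : ℝ} (hs : Set.Icc u' v' ⊆ W '' Set.Icc u v) (hc : Cov W u' v') :
    Cov W u v := by
  obtain ⟨n, hn⟩ := hc
  refine ⟨n + 1, hn.trans ?_⟩
  rw [Function.iterate_succ, Set.image_comp]
  exact Set.image_mono hs

theorem cov_mono {u v u' v' : ℝ} (hu : u ≤ u') (hv : v' ≤ v) (hc : Cov W u' v') :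
    Cov W u v := by
  obtain ⟨n, hn⟩ := hc
  exact ⟨n, hn.trans (Set.image_mono (Set.Icc_subset_Icc hu hv))⟩

theorem cov_growth (Q : ℝ → ℝ → Prop) (θ : ℝ) (hθ : 1 < θ)
    (hQ : ∀ u v, Q u v → 0 ≤ u ∧ u < v ∧ v ≤ 1)
    (hst : ∀ u v, Q u v → Cov W u v ∨ ∃ u' v', Q u' v' ∧ Set.Icc u' v' ⊆ W '' Set.Icc u v ∧
      θ * (v - u) ≤ v' - u') (u v : ℝ) (h0 : Q u v) : Cov W u v := by
  have key : ∀ n : ℕ, ∀ u v, Q u v → 1 < θ ^ n * (v - u) → Cov W u v := by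
    intro n
    induction n with
    | zero => intro u v h1 h2; have := hQ u v h1; simp at h2; linarith
    | succ n ih =>
      intro u v h1 h2
      rcases hst u v h1 with h3 | ⟨u', v', h3, h4, h5⟩
      · exact h3
      · refine cov_step h4 (ih _ _ h3 (h2.trans_le ?_))
        rw [pow_succ, mul_assoc]
        have : 0 < θ ^ n := by positivity
        exact mul_le_mul_of_nonneg_left h5 this.le
  have h1 := hQ u v h0
  obtain ⟨n, hn⟩ := pow_unbounded_of_one_lt (1 / (v - u)) hθ
  refine key n u v h0 ?_
  rwa [div_lt_iff₀ (by linarith)] at hn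

theorem icc_image (H : PW W σ1 σ2 τ1 τ2 b1 b2 h) {u v x y : ℝ} (hx : x ∈ Set.Icc u v)
    (hy : y ∈ Set.Icc u v) : Set.Icc (W x) (W y) ⊆ W '' Set.Icc u v := by
  have hc : (W '' Set.Icc u v).OrdConnected :=
    (isPreconnected_Icc.image W H.cont.continuousOn).ordConnected
  exact hc.out ⟨x, hx, rfl⟩ ⟨y, hy, rfl⟩

theorem W_one (H : PW W σ1 σ2 τ1 τ2 b1 b2 h) : W 1 = 1 := by
  rw [H.w4 1 H.b2lt.le]; ring
theorem W_zero (H : PW W σ1 σ2 τ1 τ2 b1 b2 h) : W 0 = 1 := by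
  rw [H.w1 0 H.b1pos.le]; ring
theorem W_b1 (H : PW W σ1 σ2 τ1 τ2 b1 b2 h) : W b1 = 0 := by
  rw [H.w1 b1 le_rfl, H.e1]; ring
theorem W_b2 (H : PW W σ1 σ2 τ1 τ2 b1 b2 h) : W b2 = 0 := by
  rw [H.w4 b2 le_rfl]; linarith [H.e4]
theorem W_half (H : PW W σ1 σ2 τ1 τ2 b1 b2 h) : W (1/2) = h := by
  rw [H.w2 (1/2) H.b1lt.le le_rfl]; ring

theorem cov_right (H : PW W σ1 σ2 τ1 τ2 b1 b2 h) (u : ℝ) (hu : 0 ≤ u) (hu1 : u < 1) :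
    Cov W u 1 := by
  refine cov_growth (fun u v => 0 ≤ u ∧ u < 1 ∧ v = 1) τ2 H.τ2gt ?_ ?_ u 1 ⟨hu, hu1, rfl⟩
  · rintro u v ⟨h1, h2, rfl⟩; exact ⟨h1, h2, le_rfl⟩
  · rintro u v ⟨h1, h2, rfl⟩
    rcases le_or_gt u b2 with h3 | h3
    · left
      refine ⟨1, ?_⟩
      have := H.icc_image (u := u) (v := 1) (x := b2) (y := 1) ⟨h3, H.b2lt.le⟩ ⟨h2.le, le_rfl⟩
      rwa [H.W_one, H.W_b2] at this
    · right
      refine ⟨W u, 1, ⟨(H.maps ⟨h1, h2.le⟩).1, ?_, rfl⟩, ?_, ?_⟩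
      · rw [H.w4 u h3.le]; nlinarith [H.τ2gt]
      · have := H.icc_image (u := u) (v := 1) (x := u) (y := 1) ⟨le_rfl, h2.le⟩ ⟨h2.le, le_rfl⟩
        rwa [H.W_one] at this
      · rw [H.w4 u h3.le]; linarith

theorem cov_left (H : PW W σ1 σ2 τ1 τ2 b1 b2 h) (v : ℝ) (hv : 0 < v) :
    Cov W 0 v := by
  have hm : 0 < min v b1 := lt_min hv H.b1pos
  have hm1 : min v b1 ≤ b1 := min_le_right _ _
  have hb : b1 ≤ 1 := by linarith [H.b1lt]
  refine cov_step (u' := W (min v b1)) (v' := 1) ?_ (H.cov_right _ ?_ ?_)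
  · have := H.icc_image (u := 0) (v := v) (x := min v b1) (y := 0) ⟨hm.le, min_le_left _ _⟩
      ⟨le_rfl, hv.le⟩
    rwa [H.W_zero] at this
  · exact (H.maps ⟨hm.le, by linarith⟩).1
  · rw [H.w1 _ hm1]; nlinarith [H.τ1gt]

theorem cov_b1 (H : PW W σ1 σ2 τ1 τ2 b1 b2 h) (u v : ℝ) (hu : u ≤ b1) (hv : b1 < v) :
    Cov W u v := by
  have hm : b1 < min v (1/2) := lt_min hv H.b1lt
  have hm1 : min v (1/2) ≤ 1/2 := min_le_right _ _
  refine cov_step (u' := 0) (v' := W (min v (1/2))) ?_ (H.cov_left _ ?_)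
  · have := H.icc_image (u := u) (v := v) (x := b1) (y := min v (1/2)) ⟨hu, hv.le⟩
      ⟨by linarith, min_le_left _ _⟩
    rwa [H.W_b1] at this
  · rw [H.w2 _ hm.le hm1]; nlinarith [H.σ1gt, H.e2]

theorem cov_b2 (H : PW W σ1 σ2 τ1 τ2 b1 b2 h) (u v : ℝ) (hu : u < b2) (hv : b2 ≤ v) :
    Cov W u v := by
  have hm : max u (1/2) < b2 := max_lt hu H.b2gt
  have hm1 : 1/2 ≤ max u (1/2) := le_max_right _ _
  refine cov_step (u' := 0) (v' := W (max u (1/2))) ?_ (H.cov_left _ ?_)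
  · have := H.icc_image (u := u) (v := v) (x := b2) (y := max u (1/2)) ⟨hu.le, hv⟩
      ⟨le_max_left _ _, by linarith⟩
    rwa [H.W_b2] at this
  · rw [H.w3 _ hm1 hm.le]; nlinarith [H.σ2gt, H.e3]

theorem cov_half (H : PW W σ1 σ2 τ1 τ2 b1 b2 h) (hh : h = 1/2) (u : ℝ) (hu : 0 ≤ u)
    (hu1 : u < 1/2) : Cov W u (1/2) := by
  refine cov_growth (fun u v => 0 ≤ u ∧ u < 1/2 ∧ v = 1/2) σ1 H.σ1gt ?_ ?_ u (1/2) ⟨hu, hu1, rfl⟩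
  · rintro u v ⟨h1, h2, rfl⟩; exact ⟨h1, h2, by norm_num⟩
  · rintro u v ⟨h1, h2, rfl⟩
    rcases le_or_gt u b1 with h3 | h3
    · left
      exact H.cov_b1 u (1/2) h3 H.b1lt
    · right
      refine ⟨W u, 1/2, ⟨(H.maps ⟨h1, by linarith⟩).1, ?_, rfl⟩, ?_, ?_⟩
      · rw [H.w2 u h3.le h2.le]; nlinarith [H.σ1gt]
      · have := H.icc_image (u := u) (v := 1/2) (x := u) (y := 1/2) ⟨le_rfl, h2.le⟩ ⟨h2.le, le_rfl⟩
        rwa [H.W_half, hh] at this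
      · rw [H.w2 u h3.le h2.le, hh]; linarith

theorem cov (H : PW W σ1 σ2 τ1 τ2 b1 b2 h) (u v : ℝ) (hu : 0 ≤ u) (huv : u < v) (hv : v ≤ 1) :
    Cov W u v := by
  obtain ⟨l, l1, l2, l3, l4, l5⟩ := H.exists_slope
  have i1 := H.b1pos
  have i2 := H.b1lt
  have i3 := H.b2gt
  have i4 := H.b2lt
  have s1 := H.σ1gt
  have s2 := H.σ2gt
  obtain ⟨θ, t1, t2, t3⟩ : ∃ θ : ℝ, 1 < θ ∧ θ ≤ l ∧ (h = 1/2 ∨ θ * (σ1 + σ2) ≤ σ1 * σ2) := by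
    rcases H.cond with hc | hc
    · exact ⟨l, l1, le_rfl, Or.inl hc⟩
    · refine ⟨min l (σ1 * σ2 / (σ1 + σ2)), ?_, min_le_left _ _, Or.inr ?_⟩
      · refine lt_min l1 ?_
        rw [lt_div_iff₀ (by linarith)]; linarith
      · rw [← le_div_iff₀ (by linarith)]; exact min_le_right _ _
  refine cov_growth (fun u v => 0 ≤ u ∧ u < v ∧ v ≤ 1) θ t1 (fun u v h => h) ?_ u v ⟨hu, huv, hv⟩
  clear hu huv hv u v
  rintro u v ⟨hu, huv, hv⟩
  have mu := H.maps (show u ∈ Set.Icc (0:ℝ) 1 from ⟨hu, by linarith⟩)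
  have mv := H.maps (show v ∈ Set.Icc (0:ℝ) 1 from ⟨by linarith, hv⟩)
  have memu : u ∈ Set.Icc u v := ⟨le_rfl, huv.le⟩
  have memv : v ∈ Set.Icc u v := ⟨huv.le, le_rfl⟩
  have up : l * (v - u) ≤ W v - W u → ∃ u' v', (0 ≤ u' ∧ u' < v' ∧ v' ≤ 1) ∧
      Set.Icc u' v' ⊆ W '' Set.Icc u v ∧ θ * (v - u) ≤ v' - u' := fun hl =>
    ⟨W u, W v, ⟨mu.1, by nlinarith, mv.2⟩, H.icc_image memu memv, by nlinarith⟩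
  have dn : l * (v - u) ≤ W u - W v → ∃ u' v', (0 ≤ u' ∧ u' < v' ∧ v' ≤ 1) ∧
      Set.Icc u' v' ⊆ W '' Set.Icc u v ∧ θ * (v - u) ≤ v' - u' := fun hl =>
    ⟨W v, W u, ⟨mv.1, by nlinarith, mu.2⟩, H.icc_image memv memu, by nlinarith⟩
  rcases le_or_gt v b1 with h1 | h1
  · right; apply dn; rw [H.w1 u (by linarith), H.w1 v h1]; nlinarith
  rcases le_or_gt u b1 with h2 | h2
  · left; exact H.cov_b1 u v h2 h1
  rcases le_or_gt b2 u with h3 | h3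
  · right; apply up; rw [H.w4 u h3, H.w4 v (by linarith)]; nlinarith
  rcases le_or_gt b2 v with h4 | h4
  · left; exact H.cov_b2 u v h3 h4
  rcases le_or_gt v (1/2) with h5 | h5
  · right; apply up; rw [H.w2 u h2.le (by linarith), H.w2 v h1.le h5]; nlinarith
  rcases le_or_gt (1/2) u with h6 | h6
  · right; apply dn; rw [H.w3 u h6 h3.le, H.w3 v (by linarith) h4.le]; nlinarith
  have wu := H.w2 u h2.le h6.le
  have wv := H.w3 v h5.le h4.le
  have memh : (1/2 : ℝ) ∈ Set.Icc u v := ⟨h6.le, h5.le⟩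
  rcases t3 with t3 | t3
  · left
    exact cov_mono le_rfl h5.le (H.cov_half t3 u hu h6)
  · right
    have g : θ * (v - u) ≤ h - W u ∨ θ * (v - u) ≤ h - W v := by
      rw [wu, wv]
      by_contra! hcon
      obtain ⟨c1, c2⟩ := hcon
      have c3 : σ1 * (1/2 - u) < θ * (v - u) := by linarith
      have c4 : σ2 * (v - 1/2) < θ * (v - u) := by linarith
      have c5 := mul_lt_mul_of_pos_left c3 (show 0 < σ2 by linarith)
      have c6 := mul_lt_mul_of_pos_left c4 (show 0 < σ1 by linarith)
      have c7 := mul_le_mul_of_nonneg_right t3 (show 0 ≤ v - u by linarith)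
      nlinarith
    have hp : 0 < θ * (v - u) := by apply mul_pos <;> linarith
    rcases g with g | g
    · refine ⟨W u, h, ⟨mu.1, by linarith, H.hle⟩, ?_, g⟩
      have := H.icc_image memu memh
      rwa [H.W_half] at this
    · refine ⟨W v, h, ⟨mv.1, by linarith, H.hle⟩, ?_, g⟩
      have := H.icc_image memv memh
      rwa [H.W_half] at this

theorem bdd_ii {g : ℝ → ℝ} (hg : Measurable g) (hb : ∀ x, |g x| ≤ 1) (u v : ℝ) :
    IntervalIntegrable g volume u v := by
  have : IntervalIntegrable (fun _ => (1:ℝ)) volume u v := intervalIntegrable_const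
  refine this.mono_fun hg.aestronglyMeasurable (Eventually.of_forall fun x => ?_)
  simpa using hb x

theorem seg {g : ℝ → ℝ} (hg : Measurable g) (hb : ∀ x, |g x| ≤ 1) {u v s d : ℝ} (huv : u ≤ v)
    (hs : s ≠ 0) (hW : ∀ x, u ≤ x → x ≤ v → W x = s * x + d) :
    ∫ x in u..v, g (W x) = s⁻¹ * ((∫ x in (0:ℝ)..(W v), g x) - ∫ x in (0:ℝ)..(W u), g x) := by
  have h1 : ∫ x in u..v, g (W x) = ∫ x in u..v, g (s * x + d) := by
    apply intervalIntegral.integral_congr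
    intro x hx
    rw [Set.uIcc_of_le huv] at hx
    simp only [hW x hx.1 hx.2]
  rw [h1, intervalIntegral.integral_comp_mul_add g hs, ← hW u le_rfl huv, ← hW v huv le_rfl,
    intervalIntegral.integral_interval_sub_left (bdd_ii hg hb _ _) (bdd_ii hg hb _ _), smul_eq_mul]

/-- inverse slope -/
noncomputable def gam (σ1 σ2 τ1 τ2 b1 b2 c : ℝ) : ℝ :=
  if c ≤ b1 then (-τ1)⁻¹ else if c ≤ 1/2 then σ1⁻¹ else if c ≤ b2 then (-σ2)⁻¹ else τ2⁻¹

/-- weight of the critical interval -/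
noncomputable def bet (σ1 σ2 c : ℝ) : ℝ := if c ≤ 1/2 then 0 else σ1⁻¹ + σ2⁻¹

theorem key (H : PW W σ1 σ2 τ1 τ2 b1 b2 h) {g : ℝ → ℝ} (hg : Measurable g)
    (hb : ∀ x, |g x| ≤ 1) {c : ℝ} (hc : c ∈ Set.Icc (0:ℝ) 1) :
    ∫ x in (0:ℝ)..c, g (W x) = τ1⁻¹ * (∫ x in (0:ℝ)..1, g x) +
      bet σ1 σ2 c * (∫ x in (0:ℝ)..h, g x) +
      gam σ1 σ2 τ1 τ2 b1 b2 c * ∫ x in (0:ℝ)..(W c), g x := by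
  have i1 := H.b1pos
  have i2 := H.b1lt
  have i3 := H.b2gt
  have i4 := H.b2lt
  have s1 := H.σ1gt
  have s2 := H.σ2gt
  have t1 := H.τ1gt
  have t2 := H.τ2gt
  have hg' : Measurable (fun x => g (W x)) := hg.comp H.cont.measurable
  have hb' : ∀ x, |g (W x)| ≤ 1 := fun x => hb _
  have A1 : ∀ c, 0 ≤ c → c ≤ b1 → ∫ x in (0:ℝ)..c, g (W x) =
      (-τ1)⁻¹ * ((∫ x in (0:ℝ)..(W c), g x) - ∫ x in (0:ℝ)..1, g x) := by
    intro c h0 h1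
    rw [seg hg hb (s := -τ1) (d := 1) h0 (by linarith), H.W_zero]
    intro x _ hx; rw [H.w1 x (by linarith)]; ring
  have A2 : ∀ c, b1 ≤ c → c ≤ 1/2 → ∫ x in b1..c, g (W x) =
      σ1⁻¹ * (∫ x in (0:ℝ)..(W c), g x) := by
    intro c h0 h1
    rw [seg hg hb (s := σ1) (d := - σ1 * (1/2) + h) h0 (by linarith), H.W_b1]
    · simp
    intro x hx1 hx; rw [H.w2 x (by linarith) (by linarith)]; ring
  have A3 : ∀ c, 1/2 ≤ c → c ≤ b2 → ∫ x in (1/2)..c, g (W x) =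
      (-σ2)⁻¹ * ((∫ x in (0:ℝ)..(W c), g x) - ∫ x in (0:ℝ)..h, g x) := by
    intro c h0 h1
    rw [seg hg hb (s := -σ2) (d := σ2 * (1/2) + h) h0 (by linarith), H.W_half]
    intro x hx1 hx; rw [H.w3 x (by linarith) (by linarith)]; ring
  have A4 : ∀ c, b2 ≤ c → ∫ x in b2..c, g (W x) =
      τ2⁻¹ * (∫ x in (0:ℝ)..(W c), g x) := by
    intro c h0
    rw [seg hg hb (s := τ2) (d := 1 - τ2) h0 (by linarith), H.W_b2]
    · simp
    intro x hx1 hx; rw [H.w4 x (by linarith)]; ring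
  have ad : ∀ a b c, (∫ x in a..b, g (W x)) + ∫ x in b..c, g (W x) = ∫ x in a..c, g (W x) :=
    fun a b c => intervalIntegral.integral_add_adjacent_intervals (bdd_ii hg' hb' _ _)
      (bdd_ii hg' hb' _ _)
  unfold gam bet
  rcases le_or_gt c b1 with h1 | h1
  · rw [A1 c hc.1 h1, if_pos h1, if_pos (by linarith), inv_neg]; ring
  rw [if_neg h1.not_ge]
  have B1 := A1 b1 i1.le le_rfl
  rw [H.W_b1] at B1
  simp only [intervalIntegral.integral_same] at B1
  rcases le_or_gt c (1/2) with h2 | h2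
  · rw [← ad 0 b1 c, B1, A2 c h1.le h2, if_pos h2, if_pos h2, inv_neg]; ring
  rw [if_neg h2.not_ge, if_neg h2.not_ge]
  have B2 := A2 (1/2) i2.le le_rfl
  rw [H.W_half] at B2
  rcases le_or_gt c b2 with h3 | h3
  · rw [← ad 0 b1 c, ← ad b1 (1/2) c, B1, B2, A3 c h2.le h3, if_pos h3, inv_neg, inv_neg]; ring
  have B3 := A3 b2 i3.le le_rfl
  rw [H.W_b2] at B3
  simp only [intervalIntegral.integral_same] at B3
  rw [← ad 0 b1 c, ← ad b1 (1/2) c, ← ad (1/2) b2 c, B1, B2, B3, A4 c h3.le, if_neg h3.not_ge,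
    inv_neg, inv_neg]
  ring

theorem gam_bound (H : PW W σ1 σ2 τ1 τ2 b1 b2 h) :
    ∃ θ : ℝ, 0 ≤ θ ∧ θ < 1 ∧ ∀ c, |gam σ1 σ2 τ1 τ2 b1 b2 c| ≤ θ := by
  obtain ⟨l, l1, l2, l3, l4, l5⟩ := H.exists_slope
  have lp : 0 < l := by linarith
  refine ⟨l⁻¹, by positivity, inv_lt_one_of_one_lt₀ l1, fun c => ?_⟩
  unfold gam
  split_ifs
  · rw [abs_inv, abs_neg, abs_of_pos (by linarith)]; exact inv_anti₀ lp l4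
  · rw [abs_inv, abs_of_pos (by linarith)]; exact inv_anti₀ lp l2
  · rw [abs_inv, abs_neg, abs_of_pos (by linarith)]; exact inv_anti₀ lp l3
  · rw [abs_inv, abs_of_pos (by linarith)]; exact inv_anti₀ lp l5

theorem inv_sum (H : PW W σ1 σ2 τ1 τ2 b1 b2 h) :
    τ1⁻¹ + τ2⁻¹ + h * (σ1⁻¹ + σ2⁻¹) = 1 := by
  have s1 := H.σ1gt
  have s2 := H.σ2gt
  have t1 := H.τ1gt
  have t2 := H.τ2gt
  have e1 : τ1⁻¹ = b1 := by rw [inv_eq_iff_eq_inv]; exact eq_inv_of_mul_eq_one_left H.e1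
  have e4 : τ2⁻¹ = 1 - b2 := by rw [inv_eq_iff_eq_inv]; exact eq_inv_of_mul_eq_one_left H.e4
  have e2 : h * σ1⁻¹ = 1/2 - b1 := by rw [← H.e2]; field_simp
  have e3 : h * σ2⁻¹ = b2 - 1/2 := by rw [← H.e3]; field_simp
  rw [mul_add, e1, e4, e2, e3]; ring

/-- a signed invariant density -/
def Good (W f : ℝ → ℝ) : Prop :=
  Measurable f ∧ (∃ C, ∀ x, |f x| ≤ C) ∧ (∀ x, x ∉ Set.Ioc (0:ℝ) 1 → f x = 0) ∧
  (∀ E, MeasurableSet E → ∫ x in W ⁻¹' E, f x = ∫ x in E, f x)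

theorem ind_mul (c : ℝ) (hc : 0 ≤ c) (g : ℝ → ℝ) :
    ∫ x, (Set.Ioc 0 c).indicator 1 x * g x = ∫ x in (0:ℝ)..c, g x := by
  rw [intervalIntegral.integral_of_le hc, ← integral_indicator measurableSet_Ioc]
  congr 1; funext x
  by_cases hx : x ∈ Set.Ioc 0 c <;> simp [hx]

theorem int_ind (E : Set ℝ) (hE : MeasurableSet E) (f : ℝ → ℝ) :
    ∫ x in E, f x = ∫ x, f x * E.indicator 1 x := by
  rw [← integral_indicator hE]
  congr 1; funext x
  by_cases hx : x ∈ E <;> simp [hx]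

theorem ind_bdd (E : Set ℝ) (x : ℝ) : |E.indicator (1 : ℝ → ℝ) x| ≤ 1 := by
  by_cases hx : x ∈ E <;> simp [hx]

theorem exists_good_one (H : PW W σ1 σ2 τ1 τ2 b1 b2 h) (h1 : h = 1) :
    Good W ((Set.Ioc (0:ℝ) 1).indicator 1) := by
  refine ⟨measurable_one.indicator measurableSet_Ioc, ⟨1, ind_bdd _⟩,
    fun x hx => Set.indicator_of_notMem hx _, fun E hE => ?_⟩
  rw [int_ind _ hE, int_ind _ (H.cont.measurable hE), ind_mul _ zero_le_one,
    ind_mul _ zero_le_one]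
  have := H.key (g := E.indicator 1) (measurable_one.indicator hE) (ind_bdd E)
    (c := 1) (by simp)
  have h2 : ∀ x, E.indicator (1 : ℝ → ℝ) (W x) = (W ⁻¹' E).indicator 1 x := fun x => by
    by_cases hx : W x ∈ E <;> simp [hx]
  simp only [h2] at this
  have i := H.inv_sum
  have b1lt := H.b1lt
  have b2lt := H.b2lt
  rw [this, H.W_one, gam, if_neg (by linarith), if_neg (by linarith), if_neg (by linarith), bet,
    if_neg (by linarith)]
  rw [h1] at i ⊢
  rw [← add_mul, ← add_mul, show τ1⁻¹ + (σ1⁻¹ + σ2⁻¹) + τ2⁻¹ = 1 by linarith, one_mul]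

/-- coefficients -/
noncomputable def del (W : ℝ → ℝ) (σ1 σ2 τ1 τ2 b1 b2 h : ℝ) : ℕ → ℝ
  | 0 => 1
  | n + 1 => gam σ1 σ2 τ1 τ2 b1 b2 (W^[n] h) * del W σ1 σ2 τ1 τ2 b1 b2 h n

theorem exists_good (H : PW W σ1 σ2 τ1 τ2 b1 b2 h) (h1 : h < 1) :
    ∃ f, Good W f ∧ ∃ u v ε : ℝ, 0 ≤ u ∧ u < v ∧ v ≤ 1 ∧ 0 < ε ∧
      ((∀ x ∈ Set.Ioo u v, ε ≤ f x) ∨ (∀ x ∈ Set.Ioo u v, f x ≤ -ε)) := by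
  have hge := H.hge
  obtain ⟨θ, θ0, θ1, hθ⟩ := H.gam_bound
  set γ := gam σ1 σ2 τ1 τ2 b1 b2 with hγ
  set β := bet σ1 σ2 with hβ
  set δ := del W σ1 σ2 τ1 τ2 b1 b2 h with hδ
  set c : ℕ → ℝ := fun n => W^[n] h with hc
  have δ0 : δ 0 = 1 := rfl
  have δs : ∀ n, δ (n+1) = γ (c n) * δ n := fun n => rfl
  have c0 : c 0 = h := rfl
  have cs : ∀ n, c (n+1) = W (c n) := fun n => Function.iterate_succ_apply' _ _ _
  have cm : ∀ n, c n ∈ Set.Icc (0:ℝ) 1 := by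
    intro n
    induction n with
    | zero => rw [c0]; constructor <;> linarith
    | succ n ih => rw [cs]; exact H.maps ih
  have δb : ∀ n, |δ n| ≤ θ ^ n := by
    intro n
    induction n with
    | zero => simp [δ0]
    | succ n ih =>
      rw [δs, abs_mul, pow_succ']
      exact mul_le_mul (hθ _) ih (abs_nonneg _) θ0
  have sθ : Summable (fun n : ℕ => θ ^ n) := summable_geometric_of_lt_one θ0 θ1
  have sm : ∀ (a : ℕ → ℝ) (M : ℝ), (∀ n, |a n| ≤ M) → Summable (fun n => δ n * a n) := by
    intro a M ha
    refine Summable.of_norm_bounded (sθ.mul_right M) fun n => ?_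
    rw [Real.norm_eq_abs, abs_mul]
    exact mul_le_mul (δb n) (ha n) (abs_nonneg _) (by positivity)
  have κp : 0 < σ1⁻¹ + σ2⁻¹ := by
    have := H.σ1gt
    have := H.σ2gt
    positivity
  set κ := σ1⁻¹ + σ2⁻¹ with hκ
  have βb : ∀ n, |β (c n)| ≤ κ := by
    intro n
    rw [hβ]; unfold bet
    split_ifs
    · simp [κp.le]
    · rw [← hκ, abs_of_pos κp]
  set S0 := ∑' n, δ n with hS0
  set T := ∑' n, δ n * β (c n) with hT
  have hS0s : HasSum δ S0 := by
    have := sm (fun _ => 1) 1 (by simp)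
    simp only [mul_one] at this
    exact this.hasSum
  have hTs : HasSum (fun n => δ n * β (c n)) T := (sm _ κ βb).hasSum
  -- bounds on N
  have Nb : ∀ g : ℝ → ℝ, (∀ x, |g x| ≤ 1) → ∀ n, |∫ x in (0:ℝ)..(c n), g x| ≤ 1 := by
    intro g hb n
    have := intervalIntegral.norm_integral_le_of_norm_le_const (a := 0) (b := c n) (C := 1)
      (f := g) (fun x _ => hb x)
    rw [Real.norm_eq_abs] at this
    refine this.trans ?_
    rw [sub_zero, one_mul, abs_of_nonneg (cm n).1]
    exact (cm n).2
  -- main identity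
  have main : ∀ g : ℝ → ℝ, Measurable g → (∀ x, |g x| ≤ 1) →
      (∑' n, δ n * ∫ x in (0:ℝ)..(c n), g (W x)) =
      S0 * τ1⁻¹ * (∫ x in (0:ℝ)..1, g x) + (T - 1) * (∫ x in (0:ℝ)..h, g x) +
      ∑' n, δ n * ∫ x in (0:ℝ)..(c n), g x := by
    intro g hg hb
    set N : ℝ → ℝ := fun y => ∫ x in (0:ℝ)..y, g x with hN
    have e1 : HasSum (fun n => δ n * N (c n)) (∑' n, δ n * N (c n)) := (sm _ 1 (Nb g hb)).hasSum
    have e2 : HasSum (fun n => δ (n+1) * N (c (n+1))) ((∑' n, δ n * N (c n)) - N h) := by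
      have := (hasSum_nat_add_iff' 1).2 e1
      simpa [δ0, c0] using this
    have e3 : HasSum (fun n => δ n * (τ1⁻¹ * N 1) + δ n * β (c n) * N h + δ (n+1) * N (c (n+1)))
        (S0 * (τ1⁻¹ * N 1) + T * N h + ((∑' n, δ n * N (c n)) - N h)) :=
      ((hS0s.mul_right _).add (hTs.mul_right _)).add e2
    have e4 : (fun n => δ n * ∫ x in (0:ℝ)..(c n), g (W x)) =
      (fun n => δ n * (τ1⁻¹ * N 1) + δ n * β (c n) * N h + δ (n+1) * N (c (n+1))) := by
      funext n
      rw [H.key hg hb (cm n), δs, cs]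
      ring
    rw [e4, e3.tsum_eq]
    ring
  have hrel : h * (1 - T) = S0 * τ1⁻¹ := by
    have := main (fun _ => 1) measurable_const (by simp)
    simp at this
    linarith
  have hinv := H.inv_sum
  rw [← hκ] at hinv
  set A := S0 * τ1⁻¹ / (h * κ) with hA
  have hAeq : A * (h * κ) = S0 * τ1⁻¹ := by
    rw [hA]; apply div_mul_cancel₀
    have : 0 < h * κ := by apply mul_pos _ κp; linarith
    exact this.ne'
  have hAT : A * κ = 1 - T := by
    have : h * (A * κ) = h * (1 - T) := by rw [hrel, ← hAeq]; ring
    exact mul_left_cancel₀ (by linarith) this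
  let F : ℕ → ℝ → ℝ := fun n x => δ n * (Set.Ioc 0 (c n)).indicator 1 x
  let f : ℝ → ℝ := fun x => A * (Set.Ioc (0:ℝ) 1).indicator 1 x + ∑' n, F n x
  have Fm : ∀ n, Measurable (F n) := fun n =>
    (measurable_one.indicator measurableSet_Ioc).const_mul _
  have fm : Measurable f :=
    ((measurable_one.indicator measurableSet_Ioc).const_mul _).add (Measurable.tsum Fm)
  have Fb : ∀ n x, |F n x| ≤ θ ^ n := by
    intro n x
    simp only [F, abs_mul]
    calc _ ≤ θ ^ n * 1 := mul_le_mul (δb n) (ind_bdd _ x) (abs_nonneg _) (by positivity)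
      _ = _ := mul_one _
  have fint : ∀ g : ℝ → ℝ, Measurable g → (∀ x, |g x| ≤ 1) → ∫ x, f x * g x =
      A * (∫ x in (0:ℝ)..1, g x) + ∑' n, δ n * ∫ x in (0:ℝ)..(c n), g x := by
    intro g hg hb
    have ii : ∀ c ∈ Set.Icc (0:ℝ) 1, Integrable (fun x => (Set.Ioc 0 c).indicator 1 x * g x) := by
      intro c hc
      have : Integrable ((Set.Ioc 0 c).indicator (1:ℝ → ℝ)) := by
        rw [integrable_indicator_iff measurableSet_Ioc]
        exact integrableOn_const (by simp)
      refine this.mono (((measurable_one.indicator measurableSet_Ioc).mul hg).aestronglyMeasurable)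
        (Eventually.of_forall fun x => ?_)
      rw [norm_mul]
      exact mul_le_of_le_one_right (norm_nonneg _) (hb x)
    have iF : ∀ n, Integrable (fun x => F n x * g x) := by
      intro n
      have := (ii (c n) (cm n)).const_mul (δ n)
      refine this.congr (Eventually.of_forall fun x => ?_)
      simp only [F]; ring
    have nF : ∀ n, ∫ x, ‖F n x * g x‖ ≤ θ ^ n := by
      intro n
      have i1 : Integrable ((Set.Ioc (0:ℝ) 1).indicator (fun _ => θ ^ n)) := by
        rw [integrable_indicator_iff measurableSet_Ioc]
        exact integrableOn_const (by simp)
      calc ∫ x, ‖F n x * g x‖ ≤ ∫ x, (Set.Ioc (0:ℝ) 1).indicator (fun _ => θ ^ n) x := by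
            refine integral_mono (iF n).norm i1 fun x => ?_
            simp only
            by_cases hx : x ∈ Set.Ioc (0:ℝ) 1
            · rw [Set.indicator_of_mem hx, norm_mul]
              calc _ ≤ θ ^ n * 1 := mul_le_mul (Fb n x) (hb x) (abs_nonneg _) (by positivity)
                _ = _ := mul_one _
            · rw [Set.indicator_of_notMem hx]
              have : x ∉ Set.Ioc 0 (c n) := fun h' => hx ⟨h'.1, h'.2.trans (cm n).2⟩
              simp [F, this]
        _ = θ ^ n := by
            rw [integral_indicator measurableSet_Ioc]; simp
    have sF : Summable (fun n => ∫ x, ‖F n x * g x‖) :=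
      Summable.of_nonneg_of_le (fun n => integral_nonneg fun x => norm_nonneg _) nF sθ
    have hs := hasSum_integral_of_summable_integral_norm iF sF
    have e1 : ∀ n, ∫ x, F n x * g x = δ n * ∫ x in (0:ℝ)..(c n), g x := by
      intro n
      rw [← ind_mul _ (cm n).1, ← integral_const_mul]
      congr 1; funext x; simp only [F]; ring
    have e2 : ∀ x, f x * g x = A * ((Set.Ioc (0:ℝ) 1).indicator 1 x * g x) + ∑' n, F n x * g x := by
      intro x
      rw [tsum_mul_right]; simp only [f]; ring
    have iS : Integrable (fun x => ∑' n, F n x * g x) := by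
      have i1 : Integrable ((Set.Ioc (0:ℝ) 1).indicator (fun _ => ∑' n, θ ^ n)) := by
        rw [integrable_indicator_iff measurableSet_Ioc]
        exact integrableOn_const (by simp)
      refine i1.mono (Measurable.tsum fun n => (Fm n).mul hg).aestronglyMeasurable
        (Eventually.of_forall fun x => ?_)
      by_cases hx : x ∈ Set.Ioc (0:ℝ) 1
      · rw [Set.indicator_of_mem hx]
        refine (tsum_of_norm_bounded sθ.hasSum fun n => ?_).trans (le_abs_self _)
        rw [norm_mul]
        calc _ ≤ θ ^ n * 1 := mul_le_mul (Fb n x) (hb x) (abs_nonneg _) (by positivity)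
          _ = _ := mul_one _
      · have : ∀ n, F n x * g x = 0 := by
          intro n
          have : x ∉ Set.Ioc 0 (c n) := fun h' => hx ⟨h'.1, h'.2.trans (cm n).2⟩
          simp [F, this]
        simp [this]
    simp only [e2]
    rw [integral_add ((ii 1 (by simp)).const_mul A) iS, integral_const_mul,
      ind_mul _ zero_le_one, ← hs.tsum_eq]
    simp only [e1]
  refine ⟨f, ⟨fm, ⟨|A| + ∑' n, θ ^ n, fun x => ?_⟩, fun x hx => ?_, fun E hE => ?_⟩, ?_⟩
  · refine (abs_add_le _ _).trans (add_le_add ?_ ?_)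
    · rw [abs_mul]; exact mul_le_of_le_one_right (abs_nonneg _) (ind_bdd _ x)
    · exact tsum_of_norm_bounded (f := fun n => F n x) sθ.hasSum fun n => Fb n x
  · have : ∀ n, F n x = 0 := by
      intro n
      have : x ∉ Set.Ioc 0 (c n) := fun h' => hx ⟨h'.1, h'.2.trans (cm n).2⟩
      simp [F, this]
    simp only [f, this, Set.indicator_of_notMem hx]; simp
  · have gm : Measurable (E.indicator (1 : ℝ → ℝ)) := measurable_one.indicator hE
    rw [int_ind _ hE, int_ind _ (H.cont.measurable hE), fint _ gm (ind_bdd E)]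
    have h2 : (W ⁻¹' E).indicator (1 : ℝ → ℝ) = fun x => E.indicator (1 : ℝ → ℝ) (W x) := by
      funext x
      by_cases hx : W x ∈ E <;> simp [hx]
    rw [h2, fint (fun x => E.indicator 1 (W x)) (gm.comp H.cont.measurable) (fun x => ind_bdd E _),
      main _ gm (ind_bdd E), H.key gm (ind_bdd E) (by simp), H.W_one]
    have b1lt := H.b1lt
    have b2lt := H.b2lt
    rw [gam, if_neg (by linarith), if_neg (by linarith), if_neg (by linarith), bet,
      if_neg (by linarith), ← hκ]
    generalize (∫ x in (0:ℝ)..1, E.indicator (1 : ℝ → ℝ) x) = N1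
    generalize (∫ x in (0:ℝ)..h, E.indicator (1 : ℝ → ℝ) x) = Nh
    have k1 : A * (τ1⁻¹ + τ2⁻¹) + S0 * τ1⁻¹ = A := by
      rw [← hAeq, show τ1⁻¹ + τ2⁻¹ = 1 - h * κ by linarith]; ring
    linear_combination N1 * k1 + Nh * hAT
  · -- jump at h
    have hpos : 0 < h := by linarith
    have tl : Tendsto f (𝓝[<] h) (𝓝 (A + ∑' n, δ n * (Set.Ici h).indicator 1 (c n))) := by
      apply Tendsto.add
      · refine tendsto_const_nhds.congr' ?_
        filter_upwards [Ioo_mem_nhdsLT hpos] with x hx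
        rw [Set.indicator_of_mem (show x ∈ Set.Ioc (0:ℝ) 1 from ⟨hx.1, by linarith [hx.2]⟩)]
        simp
      · refine tendsto_tsum_of_dominated_convergence sθ (fun n => ?_)
          (Eventually.of_forall fun x n => Fb n x)
        refine tendsto_const_nhds.congr' ?_
        rcases le_or_gt h (c n) with hh | hh
        · filter_upwards [Ioo_mem_nhdsLT hpos] with x hx
          have : x ∈ Set.Ioc 0 (c n) := ⟨hx.1, by linarith [hx.2]⟩
          simp only [F, Set.indicator_of_mem this, Set.indicator_of_mem (show c n ∈ Set.Ici h from hh)]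
          rfl
        · filter_upwards [Ioo_mem_nhdsLT hh] with x hx
          have : x ∉ Set.Ioc 0 (c n) := fun h' => by linarith [hx.1, h'.2]
          simp only [F, Set.indicator_of_notMem this,
            Set.indicator_of_notMem (show c n ∉ Set.Ici h from not_le.2 hh)]
    have tr : Tendsto f (𝓝[>] h) (𝓝 (A + ∑' n, δ n * (Set.Ioi h).indicator 1 (c n))) := by
      apply Tendsto.add
      · refine tendsto_const_nhds.congr' ?_
        filter_upwards [Ioo_mem_nhdsGT h1] with x hx
        rw [Set.indicator_of_mem (show x ∈ Set.Ioc (0:ℝ) 1 from ⟨by linarith [hx.1], hx.2.le⟩)]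
        simp
      · refine tendsto_tsum_of_dominated_convergence sθ (fun n => ?_)
          (Eventually.of_forall fun x n => Fb n x)
        refine tendsto_const_nhds.congr' ?_
        rcases le_or_gt (c n) h with hh | hh
        · filter_upwards [self_mem_nhdsWithin] with x hx
          have hx' : h < x := hx
          have : x ∉ Set.Ioc 0 (c n) := fun h' => by linarith [h'.2]
          simp only [F, Set.indicator_of_notMem this,
            Set.indicator_of_notMem (show c n ∉ Set.Ioi h from not_lt.2 hh)]
        · filter_upwards [Ioo_mem_nhdsGT hh] with x hx
          have : x ∈ Set.Ioc 0 (c n) := ⟨by linarith [hx.1], hx.2.le⟩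
          simp only [F, Set.indicator_of_mem this, Set.indicator_of_mem (show c n ∈ Set.Ioi h from hh)]
          rfl
    set L := A + ∑' n, δ n * (Set.Ici h).indicator 1 (c n) with hL
    set R := A + ∑' n, δ n * (Set.Ioi h).indicator 1 (c n) with hR
    have smI : ∀ s : Set ℝ, Summable (fun n => δ n * s.indicator 1 (c n)) := fun s =>
      sm (fun n => s.indicator 1 (c n)) 1 fun n => ind_bdd _ _
    have hLR : L - R ≠ 0 := by
      have e1 : L - R = ∑' n, δ n * ({h} : Set ℝ).indicator 1 (c n) := by
        rw [hL, hR, add_sub_add_left_eq_sub, ← (smI _).tsum_sub (smI _)]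
        congr 1; funext n
        rcases lt_trichotomy (c n) h with hh | hh | hh
        · simp [hh.not_ge, hh.ne, hh.le]
        · simp [hh]
        · simp [hh, hh.le, hh.ne']
      rw [e1]
      set S := ∑' n, δ n * ({h} : Set ℝ).indicator 1 (c n) with hS
      by_cases hret : ∃ k, 0 < k ∧ c k = h
      · classical
        set k := Nat.find hret with hk
        obtain ⟨k0, kh⟩ : 0 < k ∧ c k = h := Nat.find_spec hret
        have kmin : ∀ j, 0 < j → j < k → c j ≠ h := fun j j0 jk hj =>
          Nat.find_min hret jk ⟨j0, hj⟩
        have ck : ∀ m, c (m + k) = c m := by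
          intro m
          simp only [hc]
          rw [Function.iterate_add_apply]
          simp only [hc] at kh
          rw [kh]
        have dk : ∀ m, δ (m + k) = δ k * δ m := by
          intro m
          induction m with
          | zero => simp [δ0]
          | succ m ih =>
            rw [show m + 1 + k = (m + k) + 1 by ring, δs, ih, ck, δs]; ring
        have e2 := (smI {h}).sum_add_tsum_nat_add k
        have e3 : ∑ i ∈ Finset.range k, δ i * ({h} : Set ℝ).indicator 1 (c i) = 1 := by
          rw [Finset.sum_eq_single 0]
          · simp [δ0, c0]
          · intro j hj j0
            rw [Set.indicator_of_notMem (by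
              simpa using kmin j (Nat.pos_of_ne_zero j0) (Finset.mem_range.1 hj))]
            simp
          · intro h'; exact absurd (Finset.mem_range.2 k0) h'
        have e4 : ∑' i, δ (i + k) * ({h} : Set ℝ).indicator 1 (c (i + k)) = δ k * S := by
          simp only [ck, dk, mul_assoc]
          rw [tsum_mul_left]
        rw [e3, e4] at e2
        intro hS0
        rw [← hS, hS0] at e2
        simp at e2
      · push Not at hret
        have : S = 1 := by
          rw [hS, tsum_eq_single 0]
          · simp [δ0, c0]
          · intro n hn
            rw [Set.indicator_of_notMem (by simpa using hret n (Nat.pos_of_ne_zero hn))]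
            simp
        rw [this]; exact one_ne_zero
    have nl : ∀ M : ℝ, M ≠ 0 → Tendsto f (𝓝[<] h) (𝓝 M) → ∃ u v ε : ℝ, 0 ≤ u ∧ u < v ∧ v ≤ 1 ∧
        0 < ε ∧ ((∀ x ∈ Set.Ioo u v, ε ≤ f x) ∨ (∀ x ∈ Set.Ioo u v, f x ≤ -ε)) := by
      intro M hM hT
      rcases lt_or_gt_of_ne hM with hM | hM
      · have := (hT.eventually (gt_mem_nhds (show M < M/2 by linarith))).and (Ioo_mem_nhdsLT hpos)
        obtain ⟨u, hu, hs⟩ := (mem_nhdsLT_iff_exists_Ioo_subset' hpos).1 this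
        refine ⟨max u 0, h, -(M/2), le_max_right _ _, max_lt hu hpos, by linarith, by linarith,
          Or.inr fun x hx => ?_⟩
        have := hs ⟨(le_max_left _ _).trans_lt hx.1, hx.2⟩
        rw [neg_neg]
        exact this.1.le
      · have := (hT.eventually (lt_mem_nhds (show M/2 < M by linarith))).and (Ioo_mem_nhdsLT hpos)
        obtain ⟨u, hu, hs⟩ := (mem_nhdsLT_iff_exists_Ioo_subset' hpos).1 this
        refine ⟨max u 0, h, (M/2), le_max_right _ _, max_lt hu hpos, by linarith, by linarith,
          Or.inl fun x hx => ?_⟩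
        have := hs ⟨(le_max_left _ _).trans_lt hx.1, hx.2⟩
        exact this.1.le
    have nr : ∀ M : ℝ, M ≠ 0 → Tendsto f (𝓝[>] h) (𝓝 M) → ∃ u v ε : ℝ, 0 ≤ u ∧ u < v ∧ v ≤ 1 ∧
        0 < ε ∧ ((∀ x ∈ Set.Ioo u v, ε ≤ f x) ∨ (∀ x ∈ Set.Ioo u v, f x ≤ -ε)) := by
      intro M hM hT
      rcases lt_or_gt_of_ne hM with hM | hM
      · have := hT.eventually (gt_mem_nhds (show M < M/2 by linarith))
        obtain ⟨u, hu, hs⟩ := (mem_nhdsGT_iff_exists_Ioo_subset' h1).1 this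
        refine ⟨h, min u 1, -(M/2), hpos.le, lt_min hu h1, min_le_right _ _, by linarith,
          Or.inr fun x hx => ?_⟩
        have := hs ⟨hx.1, hx.2.trans_le (min_le_left _ _)⟩
        rw [neg_neg]
        exact le_of_lt this
      · have := hT.eventually (lt_mem_nhds (show M/2 < M by linarith))
        obtain ⟨u, hu, hs⟩ := (mem_nhdsGT_iff_exists_Ioo_subset' h1).1 this
        refine ⟨h, min u 1, (M/2), hpos.le, lt_min hu h1, min_le_right _ _, by linarith,
          Or.inl fun x hx => ?_⟩
        have := hs ⟨hx.1, hx.2.trans_le (min_le_left _ _)⟩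
        exact le_of_lt this
    by_cases hL0 : L = 0
    · exact nr R (fun hR0 => hLR (by rw [hL0, hR0, sub_zero])) tr
    · exact nl L hL0 tl

/-- positive version -/
theorem exists_good_pos (H : PW W σ1 σ2 τ1 τ2 b1 b2 h) :
    ∃ f, Good W f ∧ ∃ u v ε : ℝ, 0 ≤ u ∧ u < v ∧ v ≤ 1 ∧ 0 < ε ∧ (∀ x ∈ Set.Ioo u v, ε ≤ f x) := by
  rcases H.hle.eq_or_lt with h1 | h1
  · refine ⟨_, H.exists_good_one h1, 0, 1, 1, le_rfl, one_pos, le_rfl, one_pos, fun x hx => ?_⟩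
    rw [Set.indicator_of_mem (Set.Ioo_subset_Ioc_self hx)]; simp
  · obtain ⟨f, hf, u, v, ε, h2, h3, h4, h5, h6 | h6⟩ := H.exists_good h1
    · exact ⟨f, hf, u, v, ε, h2, h3, h4, h5, h6⟩
    · obtain ⟨g1, ⟨C, g2⟩, g3, g4⟩ := hf
      refine ⟨fun x => - f x, ⟨g1.neg, ⟨C, fun x => by rw [abs_neg]; exact g2 x⟩, fun x hx => by
        simp only [g3 x hx, neg_zero], fun E hE => ?_⟩, u, v, ε, h2, h3, h4, h5, fun x hx => by
        linarith [h6 x hx]⟩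
      rw [integral_neg, integral_neg, g4 E hE]

theorem exists_mu (H : PW W σ1 σ2 τ1 τ2 b1 b2 h) :
    ∃ μ : Measure ℝ, IsProbabilityMeasure μ ∧
      (∃ C : ℝ, 0 < C ∧ ∀ S, μ S ≤ ENNReal.ofReal C * volume S) ∧
      μ (Set.Icc (0:ℝ) 1)ᶜ = 0 ∧ MeasurePreserving W μ μ ∧
      ∃ u v : ℝ, 0 ≤ u ∧ u < v ∧ v ≤ 1 ∧
        ∀ S, MeasurableSet S → S ⊆ Set.Ioo u v → μ S = 0 → volume S = 0 := by
  obtain ⟨f, ⟨fm, ⟨C, fC⟩, f0, finv⟩, u, v, ε, hu, huv, hv, hε, hf⟩ := H.exists_good_pos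
  have Wm := H.cont.measurable
  have Cn : 0 ≤ C := (abs_nonneg _).trans (fC 0)
  have fi : Integrable f := by
    have i1 : Integrable ((Set.Ioc (0:ℝ) 1).indicator (fun _ => C)) := by
      rw [integrable_indicator_iff measurableSet_Ioc]
      exact integrableOn_const (by simp)
    refine i1.mono fm.aestronglyMeasurable (Eventually.of_forall fun x => ?_)
    by_cases hx : x ∈ Set.Ioc (0:ℝ) 1
    · rw [Set.indicator_of_mem hx]; exact (fC x).trans (le_abs_self _)
    · rw [f0 x hx]; simp
  set μ0 : Measure ℝ := volume.withDensity (fun x => ENNReal.ofReal (f x)) with hμ0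
  have bd : ∀ S, μ0 S ≤ ENNReal.ofReal C * volume S := by
    have : μ0 ≤ volume.withDensity (fun _ => ENNReal.ofReal C) :=
      withDensity_mono (Eventually.of_forall fun x =>
        ENNReal.ofReal_le_ofReal ((le_abs_self _).trans (fC x)))
    rw [withDensity_const] at this
    intro S
    simpa using this S
  have z : μ0 (Set.Ioc (0:ℝ) 1)ᶜ = 0 := by
    rw [hμ0, withDensity_apply _ measurableSet_Ioc.compl]
    rw [setLIntegral_congr_fun measurableSet_Ioc.compl (g := fun _ => 0)
      (fun x hx => by simp [f0 x hx])]
    simp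
  have fin : μ0 Set.univ ≠ ⊤ := by
    have h1 : μ0 Set.univ ≤ μ0 (Set.Ioc (0:ℝ) 1) + μ0 (Set.Ioc (0:ℝ) 1)ᶜ := by
      rw [← Set.union_compl_self (Set.Ioc (0:ℝ) 1)]; exact measure_union_le _ _
    rw [z, add_zero] at h1
    refine ne_top_of_le_ne_top ?_ (h1.trans (bd _))
    simp [ENNReal.mul_eq_top]
  have ge : ∀ E, MeasurableSet E → μ0 E ≤ μ0 (W ⁻¹' E) := by
    intro E hE
    have hP : MeasurableSet {x | 0 < f x} := measurableSet_lt measurable_const fm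
    set P := {x | 0 < f x} with hPd
    have hEP := hE.inter hP
    have e1 : μ0 E = μ0 (E ∩ P) := by
      refine le_antisymm ?_ (measure_mono Set.inter_subset_left)
      have : E ⊆ (E ∩ P) ∪ Pᶜ := by
        intro x hx
        by_cases h : x ∈ P
        · exact Or.inl ⟨hx, h⟩
        · exact Or.inr h
      have z2 : μ0 Pᶜ = 0 := by
        rw [hμ0, withDensity_apply _ hP.compl]
        rw [setLIntegral_congr_fun hP.compl (g := fun _ => 0)
          (fun x hx => by simpa [hPd] using hx)]
        simp
      refine (measure_mono this).trans ((measure_union_le _ _).trans ?_)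
      rw [z2, add_zero]
    have e2 : μ0 (E ∩ P) = ENNReal.ofReal (∫ x in E ∩ P, f x) := by
      rw [ofReal_integral_eq_lintegral_ofReal fi.integrableOn, hμ0, withDensity_apply _ hEP]
      refine (ae_restrict_iff' hEP).2 (Eventually.of_forall fun x hx => ?_)
      exact le_of_lt hx.2
    rw [e1, e2, ← finv _ hEP]
    calc ENNReal.ofReal (∫ x in W ⁻¹' (E ∩ P), f x)
        ≤ ENNReal.ofReal (∫ x in W ⁻¹' (E ∩ P), max (f x) 0) := by
          apply ENNReal.ofReal_le_ofReal
          exact integral_mono fi.integrableOn fi.pos_part.integrableOn fun x => le_max_left _ _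
      _ = μ0 (W ⁻¹' (E ∩ P)) := by
          rw [ofReal_integral_eq_lintegral_ofReal fi.pos_part.integrableOn
            (Eventually.of_forall fun x => le_max_right _ _), hμ0, withDensity_apply _ (Wm hEP)]
          congr 1; funext x
          rcases le_total (f x) 0 with h | h
          · rw [max_eq_right h, ENNReal.ofReal_of_nonpos h, ENNReal.ofReal_zero]
          · rw [max_eq_left h]
      _ ≤ _ := measure_mono (Set.preimage_mono Set.inter_subset_left)
  have inv : ∀ E, MeasurableSet E → μ0 (W ⁻¹' E) = μ0 E := by
    intro E hE
    refine le_antisymm ?_ (ge E hE)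
    have h1 := measure_add_measure_compl (μ := μ0) hE
    have h2 := measure_add_measure_compl (μ := μ0) (Wm hE)
    have h3 := ge _ hE.compl
    rw [Set.preimage_compl] at h3
    have f3 : μ0 Eᶜ ≠ ⊤ := ne_top_of_le_ne_top fin (measure_mono (Set.subset_univ _))
    have : μ0 (W ⁻¹' E) + μ0 Eᶜ ≤ μ0 E + μ0 Eᶜ := by
      rw [h1, ← h2]; exact add_le_add le_rfl h3
    exact (ENNReal.add_le_add_iff_right f3).1 this
  have low : ∀ S, MeasurableSet S → S ⊆ Set.Ioo u v → μ0 S = 0 → volume S = 0 := by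
    intro S hS hSu h0
    have : ENNReal.ofReal ε * volume S ≤ μ0 S := by
      rw [hμ0, withDensity_apply _ hS, ← setLIntegral_const]
      exact setLIntegral_mono' hS fun x hx => ENNReal.ofReal_le_ofReal (hf x (hSu hx))
    rw [h0, nonpos_iff_eq_zero, mul_eq_zero] at this
    rcases this with h | h
    · exact absurd (ENNReal.ofReal_eq_zero.1 h) (not_le.2 hε)
    · exact h
  have pos : μ0 Set.univ ≠ 0 := by
    intro h0
    have := low (Set.Ioo u v) measurableSet_Ioo le_rfl (measure_mono_null (Set.subset_univ _) h0)
    rw [Real.volume_Ioo, ENNReal.ofReal_eq_zero] at this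
    linarith
  have kf : (μ0 Set.univ)⁻¹ ≠ ⊤ := ENNReal.inv_ne_top.2 pos
  have k0 : (μ0 Set.univ)⁻¹ ≠ 0 := ENNReal.inv_ne_zero.2 fin
  refine ⟨(μ0 Set.univ)⁻¹ • μ0, ⟨?_⟩, ⟨(μ0 Set.univ)⁻¹.toReal * (C + 1), ?_, fun S => ?_⟩, ?_, ⟨Wm, ?_⟩,
    u, v, hu, huv, hv, ?_⟩
  · rw [Measure.smul_apply, smul_eq_mul, ENNReal.inv_mul_cancel pos fin]
  · exact mul_pos (ENNReal.toReal_pos k0 kf) (by linarith)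
  · rw [Measure.smul_apply, smul_eq_mul, ENNReal.ofReal_mul ENNReal.toReal_nonneg,
      ENNReal.ofReal_toReal kf, mul_assoc]
    refine mul_le_mul_right ((bd S).trans (mul_le_mul_left ?_ _)) _
    exact ENNReal.ofReal_le_ofReal (by linarith)
  · rw [Measure.smul_apply, smul_eq_mul]
    rw [measure_mono_null (Set.compl_subset_compl.2 Set.Ioc_subset_Icc_self) z, mul_zero]
  · ext E hE
    rw [Measure.map_apply Wm hE, Measure.smul_apply, Measure.smul_apply, inv E hE]
  · intro S hS hSu h0
    refine low S hS hSu ?_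
    rw [Measure.smul_apply, smul_eq_mul, mul_eq_zero] at h0
    exact h0.resolve_left k0

theorem supp (H : PW W σ1 σ2 τ1 τ2 b1 b2 h) {μ : Measure ℝ} (hμ : MeasurePreserving W μ μ)
    {u v : ℝ} (hu : 0 ≤ u) (huv : u < v) (hv : v ≤ 1)
    (low : ∀ S, MeasurableSet S → S ⊆ Set.Ioo u v → μ S = 0 → volume S = 0)
    (U : Set ℝ) (hU : IsOpen U) (hne : (U ∩ Set.Icc (0:ℝ) 1).Nonempty) : 0 < μ U := by
  obtain ⟨n, hn⟩ := H.cov (u + (v-u)/3) (v - (v-u)/3) (by linarith) (by linarith) (by linarith)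
  obtain ⟨K, hK, hKS⟩ := H.vol_image_iter n
  have hne' : (U ∩ Set.Ioo (0:ℝ) 1).Nonempty := by
    obtain ⟨x, hx, hx1⟩ := hne
    rw [← closure_Ioo zero_ne_one] at hx1
    exact mem_closure_iff.1 hx1 U hU hx
  have hop : IsOpen (U ∩ Set.Ioo (0:ℝ) 1) := hU.inter isOpen_Ioo
  have vp : 0 < volume (U ∩ Set.Ioo (0:ℝ) 1) := hop.measure_pos _ hne'
  set S := Set.Icc (u + (v-u)/3) (v - (v-u)/3) ∩ W^[n] ⁻¹' (U ∩ Set.Ioo (0:ℝ) 1) with hS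
  have Sm : MeasurableSet S :=
    measurableSet_Icc.inter ((H.cont.iterate n).measurable hop.measurableSet)
  have sub : U ∩ Set.Ioo (0:ℝ) 1 ⊆ W^[n] '' S := by
    intro y hy
    obtain ⟨x, hx, rfl⟩ := hn (Set.Ioo_subset_Icc_self hy.2)
    exact ⟨x, ⟨hx, hy⟩, rfl⟩
  by_contra h0
  have h0 : μ U = 0 := by simpa using h0
  have h1 : μ (U ∩ Set.Ioo (0:ℝ) 1) = 0 := measure_mono_null Set.inter_subset_left h0
  rw [← (hμ.iterate n).measure_preimage hop.measurableSet.nullMeasurableSet] at h1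
  have h2 : μ S = 0 := measure_mono_null Set.inter_subset_right h1
  have h3 := low S Sm (fun x hx => ⟨by linarith [hx.1.1], by linarith [hx.1.2]⟩) h2
  have h4 := (measure_mono sub).trans (hKS S)
  rw [h3, mul_zero] at h4
  exact absurd h4 (not_le.2 vp)

theorem slope_at (H : PW W σ1 σ2 τ1 τ2 b1 b2 h) {l : ℝ} (l2 : l ≤ σ1) (l3 : l ≤ σ2)
    (l4 : l ≤ τ1) (l5 : l ≤ τ2) (x d : ℝ) (d0 : 0 ≤ d)
    (h1 : d ≤ |x - b1|) (h2 : d ≤ |x - 1/2|) (h3 : d ≤ |x - b2|) :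
    ∃ t, l ≤ |t| ∧ ∀ z, |z - x| ≤ d → W z = W x + t * (z - x) := by
  have i2 := H.b1lt
  have i3 := H.b2gt
  have s1 := H.σ1gt
  have s2 := H.σ2gt
  have t1 := H.τ1gt
  have t2 := H.τ2gt
  rcases le_total x b1 with c1 | c1
  · refine ⟨-τ1, by rw [abs_neg, abs_of_pos] <;> linarith, fun z hz => ?_⟩
    rw [abs_of_nonpos (by linarith)] at h1
    have := abs_le.1 hz
    rw [H.w1 x c1, H.w1 z (by linarith)]; ring
  rw [abs_of_nonneg (by linarith)] at h1
  rcases le_total x (1/2) with c2 | c2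
  · refine ⟨σ1, by rw [abs_of_pos] <;> linarith, fun z hz => ?_⟩
    rw [abs_of_nonpos (by linarith)] at h2
    have := abs_le.1 hz
    rw [H.w2 x c1 c2, H.w2 z (by linarith) (by linarith)]; ring
  rw [abs_of_nonneg (by linarith)] at h2
  rcases le_total x b2 with c3 | c3
  · refine ⟨-σ2, by rw [abs_neg, abs_of_pos] <;> linarith, fun z hz => ?_⟩
    rw [abs_of_nonpos (by linarith)] at h3
    have := abs_le.1 hz
    rw [H.w3 x c2 c3, H.w3 z (by linarith) (by linarith)]; ring
  rw [abs_of_nonneg (by linarith)] at h3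
  refine ⟨τ2, by rw [abs_of_pos] <;> linarith, fun z hz => ?_⟩
  have := abs_le.1 hz
  rw [H.w4 x c3, H.w4 z (by linarith)]; ring

/-- neighbourhood of the breakpoints -/
def Bad (b1 b2 d : ℝ) : Set ℝ := Metric.ball b1 d ∪ Metric.ball (1/2) d ∪ Metric.ball b2 d

theorem affine_iter (H : PW W σ1 σ2 τ1 τ2 b1 b2 h) {l : ℝ} (l1 : 1 < l) (l2 : l ≤ σ1) (l3 : l ≤ σ2)
    (l4 : l ≤ τ1) (l5 : l ≤ τ2) {η : ℝ} (hη : 0 < η) (n : ℕ) : ∀ x,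
    (∀ j < n, W^[j] x ∉ Bad b1 b2 (η / l ^ (n - j))) →
    ∃ s, l ^ n ≤ |s| ∧ ∀ z, |z - x| ≤ η / |s| → W^[n] z = W^[n] x + s * (z - x) := by
  have lp : 0 < l := by linarith
  induction n with
  | zero => intro x _; exact ⟨1, by simp, fun z _ => by simp⟩
  | succ n ih =>
    intro x hx
    obtain ⟨s, hs, hz⟩ := ih (W x) (fun j hj => by
      have := hx (j+1) (by omega)
      rwa [Function.iterate_succ_apply, show n + 1 - (j + 1) = n - j by omega] at this)
    have h0 := hx 0 (by omega)
    simp only [Bad, Function.iterate_zero, id, Set.mem_union, Metric.mem_ball, Real.dist_eq, not_or,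
      not_lt, Nat.sub_zero] at h0
    obtain ⟨t, ht, htz⟩ := H.slope_at l2 l3 l4 l5 x (η / l ^ (n+1)) (by positivity) h0.1.1 h0.1.2 h0.2
    have hts : l ^ (n+1) ≤ |s * t| := by
      rw [abs_mul, pow_succ]; exact mul_le_mul hs ht lp.le (abs_nonneg _)
    have sp : 0 < |s| := lt_of_lt_of_le (by positivity) hs
    have tp : 0 < |t| := lt_of_lt_of_le lp ht
    refine ⟨s * t, hts, fun z hzx => ?_⟩
    have hW := htz z (hzx.trans (by gcongr))
    rw [Function.iterate_succ_apply, Function.iterate_succ_apply, hz (W z) ?_, hW]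
    · ring
    · rw [hW, add_sub_cancel_left, abs_mul]
      rw [abs_mul, le_div_iff₀ (by positivity)] at hzx
      rw [le_div_iff₀ sp]
      linarith

theorem bad_bound {μ : Measure ℝ} (hμ : MeasurePreserving W μ μ) {C : ℝ} (hC : 0 < C)
    (hCS : ∀ S, μ S ≤ ENNReal.ofReal C * volume S) {l : ℝ} (l1 : 1 < l) {η : ℝ} (hη : 0 < η) (n : ℕ) :
    μ (⋃ j ∈ Finset.range n, W^[j] ⁻¹' Bad b1 b2 (η / l ^ (n - j))) ≤
      ENNReal.ofReal (C * (6 * η / (l - 1))) := by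
  have lp : 0 < l := by linarith
  have hB : ∀ d, 0 ≤ d → μ (Bad b1 b2 d) ≤ ENNReal.ofReal (C * (6 * d)) := by
    intro d hd
    refine (hCS _).trans ?_
    rw [ENNReal.ofReal_mul hC.le]
    refine mul_le_mul_right ?_ _
    unfold Bad
    refine (measure_union_le _ _).trans ((add_le_add (measure_union_le _ _) le_rfl).trans ?_)
    simp only [Real.volume_ball]
    rw [← ENNReal.ofReal_add (by positivity) (by positivity),
      ← ENNReal.ofReal_add (by positivity) (by positivity)]
    exact ENNReal.ofReal_le_ofReal (by linarith)
  have hsum : ∀ n : ℕ, ∑ j ∈ Finset.range n, 1 / l ^ (n - j) ≤ 1 / (l - 1) := by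
    intro n
    induction n with
    | zero => simp; linarith
    | succ n ih =>
      rw [Finset.sum_range_succ]
      have e : ∑ j ∈ Finset.range n, 1 / l ^ (n + 1 - j) =
          (∑ j ∈ Finset.range n, 1 / l ^ (n - j)) * (1 / l) := by
        rw [Finset.sum_mul]
        refine Finset.sum_congr rfl fun j hj => ?_
        rw [show n + 1 - j = (n - j) + 1 by have := Finset.mem_range.1 hj; omega, pow_succ]
        field_simp
      rw [e, show n + 1 - n = 1 by omega, pow_one]
      have : 1 / (l - 1) = (1 / (l-1)) * (1 / l) + 1 / l := by
        have : l - 1 ≠ 0 := by linarith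
        field_simp; ring
      rw [this]
      have : 0 < 1 / l := by positivity
      nlinarith
  refine (measure_biUnion_finset_le _ _).trans ?_
  calc ∑ j ∈ Finset.range n, μ (W^[j] ⁻¹' Bad b1 b2 (η / l ^ (n - j)))
      ≤ ∑ j ∈ Finset.range n, ENNReal.ofReal (C * (6 * (η / l ^ (n - j)))) := by
        refine Finset.sum_le_sum fun j _ => ?_
        rw [(hμ.iterate j).measure_preimage]
        · exact hB _ (by positivity)
        · unfold Bad
          exact ((Metric.isOpen_ball.union Metric.isOpen_ball).union
            Metric.isOpen_ball).measurableSet.nullMeasurableSet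
    _ = ENNReal.ofReal (C * (6 * η) * ∑ j ∈ Finset.range n, 1 / l ^ (n - j)) := by
        rw [← ENNReal.ofReal_sum_of_nonneg (fun j _ => by positivity), Finset.mul_sum]
        congr 1
        refine Finset.sum_congr rfl fun j _ => ?_
        ring
    _ ≤ _ := by
        apply ENNReal.ofReal_le_ofReal
        calc _ ≤ C * (6 * η) * (1 / (l - 1)) := mul_le_mul_of_nonneg_left (hsum n) (by positivity)
          _ = _ := by ring

theorem exact_core (H : PW W σ1 σ2 τ1 τ2 b1 b2 h) {l : ℝ} (l1 : 1 < l) (l2 : l ≤ σ1) (l3 : l ≤ σ2)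
    (l4 : l ≤ τ1) (l5 : l ≤ τ2) {η : ℝ} (hη : 0 < η) {A : Set ℝ} (hA : MeasurableSet A)
    {x : ℝ} (hx : x ∈ Set.Icc (0:ℝ) 1)
    (hd : Tendsto (fun r => volume (A ∩ Metric.closedBall x r) / volume (Metric.closedBall x r))
      (𝓝[>] 0) (𝓝 1))
    (hg : ∃ᶠ n in atTop, ∀ j < n, W^[j] x ∉ Bad b1 b2 (η / l ^ (n - j)))
    (ε : ENNReal) (hε : ε ≠ 0) : ∃ m, volume (Set.Icc (0:ℝ) 1 \ W^[m] '' A) ≤ ε := by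
  have lp : 0 < l := by linarith
  have hmem : ∀ n, W^[n] x ∈ Set.Icc (0:ℝ) 1 := fun n => H.maps.iterate n hx
  have : (atTop ⊓ 𝓟 {n : ℕ | ∀ j < n, W^[j] x ∉ Bad b1 b2 (η / l ^ (n - j))}).NeBot := by
    rw [← frequently_mem_iff_neBot]; exact hg
  obtain ⟨y, hy, hcl⟩ := (isCompact_Icc (a := (0:ℝ)) (b := 1)).exists_mapClusterPt
    (f := atTop ⊓ 𝓟 {n : ℕ | ∀ j < n, W^[j] x ∉ Bad b1 b2 (η / l ^ (n - j))})
    (u := fun n => W^[n] x) (tendsto_principal.2 (Eventually.of_forall hmem))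
  have hfr := hcl.frequently (Metric.ball_mem_nhds y (half_pos hη))
  rw [frequently_inf_principal] at hfr
  -- the fixed interval
  obtain ⟨N, hN⟩ := H.cov (max 0 (y - η/2)) (min 1 (y + η/2)) (le_max_left _ _)
    (max_lt (lt_min one_pos (by linarith [hy.1])) (lt_min (by linarith [hy.2]) (by linarith)))
    (min_le_left _ _)
  obtain ⟨K, hK, hKS⟩ := H.vol_image_iter N
  set D := K * ENNReal.ofReal (2 * η) with hD
  have hDt : D ≠ ⊤ := ENNReal.mul_ne_top hK ENNReal.ofReal_ne_top
  set δ := ε / (D + 1) with hδ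
  have δ0 : δ ≠ 0 := by
    rw [hδ, Ne, ENNReal.div_eq_zero_iff, not_or]
    exact ⟨hε, by simp [hDt]⟩
  have hDδ : D * δ ≤ ε := by
    calc D * δ ≤ (D + 1) * δ := mul_le_mul_left (by simp) _
      _ ≤ ε := ENNReal.mul_div_le
  -- density
  have hd2 : ∀ᶠ r in 𝓝[>] (0:ℝ), volume (Metric.closedBall x r \ A) ≤ δ * ENNReal.ofReal (2 * r) := by
    have t1 : Tendsto (fun r => 1 - volume (A ∩ Metric.closedBall x r) / volume (Metric.closedBall x r))
        (𝓝[>] 0) (𝓝 (1 - 1)) := ENNReal.Tendsto.sub tendsto_const_nhds hd (by simp)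
    rw [tsub_self] at t1
    have t2 := t1.eventually (gt_mem_nhds (pos_iff_ne_zero.2 δ0))
    filter_upwards [t2, self_mem_nhdsWithin] with r hr hr0
    have hr0 : 0 < r := hr0
    rw [Real.volume_closedBall] at hr
    have b0 : ENNReal.ofReal (2 * r) ≠ 0 := by
      rw [Ne, ENNReal.ofReal_eq_zero, not_le]; positivity
    have bt : ENNReal.ofReal (2 * r) ≠ ⊤ := ENNReal.ofReal_ne_top
    have e := measure_inter_add_diff (μ := volume) (Metric.closedBall x r) hA
    rw [Real.volume_closedBall, Set.inter_comm] at e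
    rw [← ENNReal.div_le_iff b0 bt]
    refine le_trans ?_ hr.le
    refine ENNReal.le_sub_of_add_le_left ?_ ?_
    · refine (ENNReal.div_lt_top ?_ b0).ne
      exact ne_top_of_le_ne_top bt (e ▸ le_self_add)
    · rw [← ENNReal.add_div, e, ENNReal.div_self b0 bt]
  obtain ⟨r0, hr0, hr0s⟩ := mem_nhdsGT_iff_exists_Ioo_subset.1 hd2
  have hr0 : 0 < r0 := hr0
  have hlarge : ∀ᶠ n : ℕ in atTop, η / l ^ n < r0 := by
    have : Tendsto (fun n : ℕ => η / l ^ n) atTop (𝓝 0) :=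
      (tendsto_pow_atTop_atTop_of_one_lt l1).const_div_atTop η
    exact this.eventually (gt_mem_nhds hr0)
  obtain ⟨n, ⟨hn1, hn2⟩, hn3⟩ := (hfr.and_eventually hlarge).exists
  have hgood : ∀ j < n, W^[j] x ∉ Bad b1 b2 (η / l ^ (n - j)) := by
    first | exact hn1 | exact hn2
  have hclose : |W^[n] x - y| < η/2 := by
    first | exact hn1 | exact hn2
  obtain ⟨s, hs, hsz⟩ := H.affine_iter l1 l2 l3 l4 l5 hη n x hgood
  have ln : 0 < l ^ n := by positivity
  have sp : 0 < |s| := ln.trans_le hs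
  have s0 : s ≠ 0 := abs_pos.1 sp
  set ρ := η / |s| with hρ
  have ρ0 : 0 < ρ := by positivity
  have hρr : ρ < r0 := by
    refine lt_of_le_of_lt ?_ hn3
    rw [hρ]; gcongr
  have hvol : volume (Metric.closedBall x ρ \ A) ≤ δ * ENNReal.ofReal (2 * ρ) := hr0s ⟨ρ0, hρr⟩
  set J := Set.Icc (max 0 (y - η/2)) (min 1 (y + η/2)) with hJ
  have hsub1 : J \ W^[n] '' A ⊆ (fun z => s * z + (W^[n] x - s * x)) '' (Metric.closedBall x ρ \ A) := by
    rintro w ⟨hwJ, hwA⟩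
    have hw1 : y - η/2 ≤ w := (le_max_right _ _).trans hwJ.1
    have hw2 : w ≤ y + η/2 := hwJ.2.trans (min_le_right _ _)
    have hw : |w - W^[n] x| ≤ η := by
      have := abs_lt.1 hclose
      rw [abs_le]; constructor <;> linarith
    have hzx : |x + (w - W^[n] x) / s - x| ≤ ρ := by
      rw [add_sub_cancel_left, abs_div, hρ]; gcongr
    have hzw : W^[n] (x + (w - W^[n] x) / s) = w := by
      rw [hsz _ hzx, add_sub_cancel_left, mul_div_cancel₀ _ s0]; ring
    refine ⟨x + (w - W^[n] x) / s, ⟨?_, fun hAz => hwA ⟨_, hAz, hzw⟩⟩, ?_⟩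
    · rw [Metric.mem_closedBall, Real.dist_eq]; exact hzx
    · simp only; field_simp; ring
  have hv1 : volume (J \ W^[n] '' A) ≤ δ * ENNReal.ofReal (2 * η) := by
    refine (measure_mono hsub1).trans ((vol_affine _ _ _).trans ?_)
    calc ENNReal.ofReal |s| * volume (Metric.closedBall x ρ \ A)
        ≤ ENNReal.ofReal |s| * (δ * ENNReal.ofReal (2 * ρ)) := mul_le_mul_right hvol _
      _ = δ * (ENNReal.ofReal |s| * ENNReal.ofReal (2 * ρ)) := by ring
      _ = δ * ENNReal.ofReal (2 * η) := by
          rw [← ENNReal.ofReal_mul (abs_nonneg _), hρ]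
          congr 2
          field_simp
  refine ⟨N + n, ?_⟩
  have hsub2 : Set.Icc (0:ℝ) 1 \ W^[N + n] '' A ⊆ W^[N] '' (J \ W^[n] '' A) := by
    rintro z ⟨hz, hzA⟩
    obtain ⟨w, hw, rfl⟩ := hN hz
    refine ⟨w, ⟨hw, ?_⟩, rfl⟩
    rintro ⟨a, ha, rfl⟩
    exact hzA ⟨a, ha, Function.iterate_add_apply _ _ _ _⟩
  calc _ ≤ volume (W^[N] '' (J \ W^[n] '' A)) := measure_mono hsub2
    _ ≤ K * volume (J \ W^[n] '' A) := hKS _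
    _ ≤ K * (δ * ENNReal.ofReal (2 * η)) := mul_le_mul_right hv1 _
    _ = D * δ := by rw [hD]; ring
    _ ≤ ε := hDδ

theorem exact_thm (H : PW W σ1 σ2 τ1 τ2 b1 b2 h) {μ : Measure ℝ} [IsProbabilityMeasure μ]
    (hμ : MeasurePreserving W μ μ) {C : ℝ} (hC : 0 < C)
    (hCS : ∀ S, μ S ≤ ENNReal.ofReal C * volume S) (h01 : μ (Set.Icc (0:ℝ) 1)ᶜ = 0)
    {A : Set ℝ} (hA1 : A ⊆ Set.Icc (0:ℝ) 1) (hA : MeasurableSet A) (hpos : 0 < μ A) :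
    Tendsto (fun n => μ (W^[n] '' A)) atTop (𝓝 1) := by
  obtain ⟨l, l1, l2, l3, l4, l5⟩ := H.exists_slope
  obtain ⟨η, hη, hηb⟩ : ∃ η : ℝ, 0 < η ∧ ENNReal.ofReal (C * (6 * η / (l - 1))) < μ A := by
    have mp : 0 < (μ A).toReal := ENNReal.toReal_pos hpos.ne' (measure_ne_top _ _)
    have lp : 0 < l - 1 := by linarith
    refine ⟨(μ A).toReal * (l - 1) / (12 * C), by positivity, ?_⟩
    rw [ENNReal.ofReal_lt_iff_lt_toReal (by positivity) (measure_ne_top _ _)]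
    have : C * (6 * ((μ A).toReal * (l - 1) / (12 * C)) / (l - 1)) = (μ A).toReal / 2 := by
      field_simp; norm_num
    rw [this]; linarith
  set bad : ℕ → Set ℝ := fun n => ⋃ j ∈ Finset.range n, W^[j] ⁻¹' Bad b1 b2 (η / l ^ (n - j))
    with hbad
  set E : Set ℝ := ⋃ M : ℕ, ⋂ n ∈ Set.Ici M, bad n with hE
  have hEm : μ E ≤ ENNReal.ofReal (C * (6 * η / (l - 1))) := by
    rw [hE, Monotone.measure_iUnion]
    · refine iSup_le fun M => ?_
      refine (measure_mono (Set.biInter_subset_of_mem (Set.mem_Ici.2 le_rfl))).trans ?_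
      exact bad_bound hμ hC hCS l1 hη M
    · intro M M' hMM
      exact Set.biInter_subset_biInter_left (Set.Ici_subset_Ici.2 hMM)
  have hAE : μ (A \ E) ≠ 0 := by
    intro h0
    have : μ A ≤ μ (A \ E) + μ E := by
      refine (measure_mono ?_).trans (measure_union_le _ _)
      intro x hx
      by_cases h : x ∈ E
      · exact Or.inr h
      · exact Or.inl ⟨hx, h⟩
    rw [h0, zero_add] at this
    exact absurd (this.trans hEm) (not_le.2 hηb)
  have hvAE : volume (A \ E) ≠ 0 := by
    intro h0
    have := hCS (A \ E)
    rw [h0, mul_zero] at this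
    exact hAE (le_antisymm this bot_le)
  have hdens := (ae_restrict_iff' hA).1 (Besicovitch.ae_tendsto_measure_inter_div volume A)
  obtain ⟨x, ⟨hxA, hxE⟩, hxd⟩ : ∃ x, x ∈ A \ E ∧ Tendsto (fun r =>
      volume (A ∩ Metric.closedBall x r) / volume (Metric.closedBall x r)) (𝓝[>] 0) (𝓝 1) := by
    by_contra! hcon
    refine hvAE (measure_mono_null ?_ (ae_iff.1 hdens))
    intro x hx
    simp only [Set.mem_setOf_eq]
    intro hh
    exact hcon x hx (hh hx.1)
  have hfreq : ∃ᶠ n in atTop, ∀ j < n, W^[j] x ∉ Bad b1 b2 (η / l ^ (n - j)) := by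
    rw [frequently_atTop]
    intro M
    by_contra! hcon
    apply hxE
    rw [hE, Set.mem_iUnion]
    refine ⟨M, Set.mem_iInter₂.2 fun n hn => ?_⟩
    obtain ⟨j, hj, hjb⟩ := hcon n hn
    exact Set.mem_iUnion₂.2 ⟨j, Finset.mem_range.2 hj, hjb⟩
  have core := H.exact_core l1 l2 l3 l4 l5 hη hA (hA1 hxA) hxd hfreq
  have mono : Monotone (fun n => μ (W^[n] '' A)) := by
    refine monotone_nat_of_le_succ fun n => ?_
    rw [← measure_toMeasurable (W^[n+1] '' A), ← hμ.measure_preimage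
      (measurableSet_toMeasurable _ _).nullMeasurableSet]
    refine measure_mono ?_
    rintro _ ⟨a, ha, rfl⟩
    exact subset_toMeasurable _ _ ⟨a, ha, Function.iterate_succ_apply' _ _ _⟩
  have hsup : ⨆ n, μ (W^[n] '' A) = 1 := by
    refine le_antisymm (iSup_le fun n => prob_le_one) ?_
    refine ENNReal.le_of_forall_pos_le_add fun ε hε _ => ?_
    have C0 : ENNReal.ofReal C ≠ 0 := by
      rw [Ne, ENNReal.ofReal_eq_zero, not_le]; exact hC
    obtain ⟨m, hm⟩ := core (ε / ENNReal.ofReal C) (by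
      rw [Ne, ENNReal.div_eq_zero_iff, not_or]
      exact ⟨by simpa using hε.ne', ENNReal.ofReal_ne_top⟩)
    have h1 : (1 : ENNReal) ≤ μ (W^[m] '' A) + μ (Set.Icc (0:ℝ) 1 \ W^[m] '' A) + μ (Set.Icc (0:ℝ) 1)ᶜ := by
      rw [← measure_univ (μ := μ)]
      refine (measure_mono ?_).trans ((measure_union_le _ _).trans
        (add_le_add (measure_union_le _ _) le_rfl))
      intro z _
      by_cases hz : z ∈ Set.Icc (0:ℝ) 1
      · by_cases hz2 : z ∈ W^[m] '' A
        · exact Or.inl (Or.inl hz2)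
        · exact Or.inl (Or.inr ⟨hz, hz2⟩)
      · exact Or.inr hz
    rw [h01, add_zero] at h1
    refine h1.trans (add_le_add (le_iSup (fun n => μ (W^[n] '' A)) m) ?_)
    refine (hCS _).trans ((mul_le_mul_right hm _).trans ?_)
    exact ENNReal.mul_div_le
  rw [← hsup]
  exact tendsto_atTop_iSup mono

end PW

/-- Proposition: if `1/s₁ + 1/s₂ ≤ 1`, then for every admissible `a ≥ 0` the map `W_a` has
an absolutely continuous invariant probability measure `μ_a` supported on all of `[0,1]`,
and `W_a` is exact with respect to `μ_a`. -/
theorem Wmap_acim_supported_and_exact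
    (s₁ s₂ p q r : ℝ) (hs₁ : 1 < s₁) (hs₂ : 1 < s₂)
    (hp : 0 < p) (hq : 0 < q) (hr : 0 < r)
    (hsum : 1/s₁ + 1/s₂ ≤ 1)
    (a : ℝ) (ha : 0 ≤ a)
    (hden₁ : 0 < s₁ - 1 + p*a - 2*r*a) (hden₂ : 0 < s₂ - 1 + q*a - 2*r*a)
    (hadm : Set.MapsTo (Wmap s₁ s₂ p q r a) (Set.Icc 0 1) (Set.Icc 0 1)) :
    ∃ μ : Measure ℝ, IsProbabilityMeasure μ ∧ μ ≪ volume ∧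
      μ (Set.Icc (0:ℝ) 1)ᶜ = 0 ∧
      (∀ A : Set ℝ, MeasurableSet A → μ (Wmap s₁ s₂ p q r a ⁻¹' A) = μ A) ∧
      (∀ U : Set ℝ, IsOpen U → (U ∩ Set.Icc (0:ℝ) 1).Nonempty → 0 < μ U) ∧
      (∀ A : Set ℝ, A ⊆ Set.Icc (0:ℝ) 1 → MeasurableSet A → 0 < μ A →
        Tendsto (fun n => μ ((Wmap s₁ s₂ p q r a)^[n] '' A)) atTop (𝓝 1)) := by
  have H := Wmap_PW s₁ s₂ p q r hs₁ hs₂ hp hq hr hsum a ha hden₁ hden₂ hadm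
  obtain ⟨μ, hprob, ⟨C, hC, hCS⟩, h01, hmp, u, v, hu, huv, hv, low⟩ := H.exists_mu
  refine ⟨μ, hprob, fun S hS => ?_, h01, fun A hA => hmp.measure_preimage hA.nullMeasurableSet,
    H.supp hmp hu huv hv low, fun A hA1 hA hpos => H.exact_thm hmp hC hCS h01 hA1 hA hpos⟩
  have := hCS S
  rw [hS, mul_zero] at this
  exact le_antisymm this bot_le
end

section
/- The piecewise constant function h_0 defined by h_0(x) = 2s₁(s₂+1)/(2s₁s₂+s₁−s₂) for 0 ≤ x < 1/2 and h_0(x) = 2s₂(s₁−1)/(2s₁s₂+s₁−s₂) for 1/2 ≤ x ≤ 1 is the normalized invariant density of W_0: the measure μ_0 with density h_0 with respect to Lebesgue measure on [0,1] is a probability measure and satisfies μ_0(W_0⁻¹(A)) = μ_0(A) for every Borel set A ⊆ [0,1]. -/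
open MeasureTheory Filter Topology

/-- The unperturbed map `W₀` with slopes `s₁` and `-s₂` at the turning fixed point `1/2`. -/
noncomputable def W0 (s₁ s₂ : ℝ) (x : ℝ) : ℝ :=
  if x < 1/2 - 1/(2*s₁) then
    1 - (2*s₁/(s₁-1)) * x
  else if x < 1/2 then
    s₁*(x - 1/2) + 1/2
  else if x < 1/2 + 1/(2*s₂) then
    -s₂*(x - 1/2) + 1/2
  else
    1 + (2*s₂/(s₂-1))*(x - 1)

/-- The invariant density of the unperturbed Markov map `W₀`. -/
noncomputable def h0 (s₁ s₂ : ℝ) (x : ℝ) : ℝ :=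
  if x < 1/2 then 2*s₁*(s₂+1)/(2*s₁*s₂+s₁-s₂) else 2*s₂*(s₁-1)/(2*s₁*s₂+s₁-s₂)

lemma vol_split (B : Set ℝ) (l m r : ℝ) (h1 : l ≤ m) (h2 : m ≤ r) :
    volume (B ∩ Set.Ico l r) = volume (B ∩ Set.Ico l m) + volume (B ∩ Set.Ico m r) := by
  rw [← measure_inter_add_sdiff (B ∩ Set.Ico l r) (measurableSet_Iio (a := m))]
  congr 2
  · ext x
    simp only [Set.mem_inter_iff, Set.mem_Ico, Set.mem_Iio]
    constructor
    · rintro ⟨⟨a, b, c⟩, d⟩; exact ⟨a, b, d⟩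
    · rintro ⟨a, b, c⟩; exact ⟨⟨a, b, by linarith⟩, c⟩
  · ext x
    simp only [Set.mem_inter_iff, Set.mem_Ico, Set.mem_Iio, Set.mem_sdiff, not_lt]
    constructor
    · rintro ⟨⟨a, b, c⟩, d⟩; exact ⟨a, d, c⟩
    · rintro ⟨a, b, c⟩; exact ⟨⟨a, by linarith, c⟩, b⟩

lemma vol_branch (W : ℝ → ℝ) (A I K : Set ℝ) (c d : ℝ) (hc : c ≠ 0)
    (hW : ∀ x ∈ I, W x = c * x + d) (hK : ∀ x, x ∈ I ↔ c * x + d ∈ K) :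
    volume (W ⁻¹' A ∩ I) = ENNReal.ofReal |c⁻¹| * volume (A ∩ K) := by
  have : W ⁻¹' A ∩ I = (fun x => c * x) ⁻¹' ((fun x => x + d) ⁻¹' (A ∩ K)) := by
    ext x
    simp only [Set.mem_inter_iff, Set.mem_preimage, ← hK]
    constructor
    · rintro ⟨a, b⟩; rw [hW x b] at a; exact ⟨a, b⟩
    · rintro ⟨a, b⟩; rw [← hW x b] at a; exact ⟨a, b⟩
  rw [this, Real.volume_preimage_mul_left hc, measure_preimage_add_right]

lemma vol_Ioc (A : Set ℝ) (l r : ℝ) : volume (A ∩ Set.Ioc l r) = volume (A ∩ Set.Ico l r) :=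
  measure_congr ((ae_eq_refl A).inter Ico_ae_eq_Ioc.symm)

lemma mu_eq (s₁ s₂ : ℝ) (B : Set ℝ) :
    ((volume.restrict (Set.Icc (0:ℝ) 1)).withDensity
        (fun x => ENNReal.ofReal (h0 s₁ s₂ x))) B =
    ENNReal.ofReal (2*s₁*(s₂+1)/(2*s₁*s₂+s₁-s₂)) * volume (B ∩ Set.Ico 0 (1/2)) +
    ENNReal.ofReal (2*s₂*(s₁-1)/(2*s₁*s₂+s₁-s₂)) * volume (B ∩ Set.Ico (1/2) 1) := by
  set a := 2*s₁*(s₂+1)/(2*s₁*s₂+s₁-s₂) with ha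
  set b := 2*s₂*(s₁-1)/(2*s₁*s₂+s₁-s₂) with hb
  rw [withDensity_apply', ← restrict_Ico_eq_restrict_Icc, Measure.restrict_restrict' measurableSet_Ico,
    ← lintegral_inter_add_sdiff _ _ (measurableSet_Iio (a := (1/2:ℝ)))]
  have e1 : B ∩ Set.Ico 0 1 ∩ Set.Iio (1/2:ℝ) = B ∩ Set.Ico 0 (1/2) := by
    ext x
    simp only [Set.mem_inter_iff, Set.mem_Ico, Set.mem_Iio]
    constructor
    · rintro ⟨⟨a, b, c⟩, d⟩; exact ⟨a, b, d⟩
    · rintro ⟨a, b, c⟩; exact ⟨⟨a, b, by linarith⟩, c⟩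
  have e2 : (B ∩ Set.Ico 0 1) \ Set.Iio (1/2:ℝ) = B ∩ Set.Ico (1/2) 1 := by
    ext x
    simp only [Set.mem_inter_iff, Set.mem_Ico, Set.mem_Iio, Set.mem_sdiff, not_lt]
    constructor
    · rintro ⟨⟨a, b, c⟩, d⟩; exact ⟨a, d, c⟩
    · rintro ⟨a, b, c⟩; exact ⟨⟨a, by linarith, c⟩, b⟩
  rw [e1, e2, ← setLIntegral_const, ← setLIntegral_const]
  have hm : ∀ l r : ℝ, ∀ f g : ℝ → ENNReal, (∀ x ∈ Set.Ico l r, f x = g x) →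
      ∫⁻ x in B ∩ Set.Ico l r, f x = ∫⁻ x in B ∩ Set.Ico l r, g x := by
    intro l r f g h
    rw [Set.inter_comm, ← Measure.restrict_restrict measurableSet_Ico]
    exact setLIntegral_congr_fun measurableSet_Ico h
  congr 1
  · apply hm
    intro x hx
    simp only [h0, if_pos hx.2, ha]
  · apply hm
    intro x hx
    simp only [h0, if_neg (not_lt.2 hx.1), hb]

set_option maxHeartbeats 2000000 in
theorem h0_invariant_density_of_W0
    (s₁ s₂ : ℝ) (hs₁ : 1 < s₁) (hs₂ : 1 < s₂) :
    IsProbabilityMeasure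
      ((volume.restrict (Set.Icc (0:ℝ) 1)).withDensity
        (fun x => ENNReal.ofReal (h0 s₁ s₂ x))) ∧
    ∀ A : Set ℝ, MeasurableSet A →
      ((volume.restrict (Set.Icc (0:ℝ) 1)).withDensity
        (fun x => ENNReal.ofReal (h0 s₁ s₂ x))) (W0 s₁ s₂ ⁻¹' A) =
      ((volume.restrict (Set.Icc (0:ℝ) 1)).withDensity
        (fun x => ENNReal.ofReal (h0 s₁ s₂ x))) A := by
  have p1 : 0 < s₁ := by linarith
  have p2 : 0 < s₂ := by linarith
  have q1 : 0 < s₁ - 1 := by linarith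
  have q2 : 0 < s₂ - 1 := by linarith
  have hD : 0 < 2*s₁*s₂+s₁-s₂ := by nlinarith
  have ha : 0 ≤ 2*s₁*(s₂+1)/(2*s₁*s₂+s₁-s₂) := by positivity
  have hb : 0 ≤ 2*s₂*(s₁-1)/(2*s₁*s₂+s₁-s₂) := by positivity
  constructor
  · constructor
    rw [mu_eq]
    simp only [Set.univ_inter, Real.volume_Ico]
    rw [← ENNReal.ofReal_mul ha, ← ENNReal.ofReal_mul hb,
      ← ENNReal.ofReal_add (by positivity) (by apply mul_nonneg hb; norm_num)]
    rw [← ENNReal.ofReal_one]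
    congr 1
    rw [div_mul_eq_mul_div, div_mul_eq_mul_div, ← add_div, div_eq_one_iff_eq hD.ne']
    ring
  · intro A _
    rw [mu_eq, mu_eq]
    have r1 : 1/(2*s₁) < 1/2 := by
      apply one_div_lt_one_div_of_lt <;> linarith
    have r2 : 1/(2*s₂) < 1/2 := by
      apply one_div_lt_one_div_of_lt <;> linarith
    have t1 : 0 < 1/(2*s₁) := by positivity
    have t2 : 0 < 1/(2*s₂) := by positivity
    have m1 : s₁ * (1/(2*s₁)) = 1/2 := by field_simp
    have m2 : s₂ * (1/(2*s₂)) = 1/2 := by field_simp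
    have k1 : (2*s₁/(s₁-1)) * (1/2 - 1/(2*s₁)) = 1 := by field_simp
    have k2 : (2*s₂/(s₂-1)) * (1/2 - 1/(2*s₂)) = 1 := by field_simp
    have c1 : 0 < 2*s₁/(s₁-1) := by positivity
    have c2 : 0 < 2*s₂/(s₂-1) := by positivity
    have i1 : (2*s₁/(s₁-1))⁻¹ = (s₁-1)/(2*s₁) := by rw [inv_div]
    have i2 : (2*s₂/(s₂-1))⁻¹ = (s₂-1)/(2*s₂) := by rw [inv_div]
    rw [vol_split _ 0 (1/2 - 1/(2*s₁)) (1/2) (by linarith) (by linarith),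
      vol_split _ (1/2) (1/2 + 1/(2*s₂)) 1 (by linarith) (by linarith)]
    rw [vol_branch (W0 s₁ s₂) A (Set.Ico 0 (1/2 - 1/(2*s₁))) (Set.Ioc 0 1) (-(2*s₁/(s₁-1))) 1
      (by linarith) ?_ ?_,
      vol_branch (W0 s₁ s₂) A (Set.Ico (1/2 - 1/(2*s₁)) (1/2)) (Set.Ico 0 (1/2)) s₁ (1/2 - s₁/2)
      (by linarith) ?_ ?_,
      vol_branch (W0 s₁ s₂) A (Set.Ico (1/2) (1/2 + 1/(2*s₂))) (Set.Ioc 0 (1/2)) (-s₂) (1/2 + s₂/2)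
      (by linarith) ?_ ?_,
      vol_branch (W0 s₁ s₂) A (Set.Ico (1/2 + 1/(2*s₂)) 1) (Set.Ico 0 1) (2*s₂/(s₂-1)) (1 - 2*s₂/(s₂-1))
      (by linarith) ?_ ?_]
    · rw [vol_Ioc, vol_Ioc, vol_split A 0 (1/2) 1 (by norm_num) (by norm_num)]
      have f1 : volume (A ∩ Set.Ico (0:ℝ) (1/2)) ≠ ⊤ :=
        ((measure_mono Set.inter_subset_right).trans_lt measure_Ico_lt_top).ne
      have f2 : volume (A ∩ Set.Ico (1/2:ℝ) 1) ≠ ⊤ :=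
        ((measure_mono Set.inter_subset_right).trans_lt measure_Ico_lt_top).ne
      rw [← ENNReal.ofReal_toReal f1, ← ENNReal.ofReal_toReal f2]
      have g1 := ENNReal.toReal_nonneg (a := volume (A ∩ Set.Ico (0:ℝ) (1/2)))
      have g2 := ENNReal.toReal_nonneg (a := volume (A ∩ Set.Ico (1/2:ℝ) 1))
      generalize (volume (A ∩ Set.Ico (0:ℝ) (1/2))).toReal = u at *
      generalize (volume (A ∩ Set.Ico (1/2:ℝ) 1)).toReal = v at *
      rw [inv_neg, inv_neg, abs_neg, abs_neg, abs_of_pos (inv_pos.2 c1), abs_of_pos (inv_pos.2 c2),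
        abs_of_pos (inv_pos.2 p1), abs_of_pos (inv_pos.2 p2), i1, i2]
      have n1 : 0 ≤ (s₁-1)/(2*s₁) := by positivity
      have n2 : 0 ≤ (s₂-1)/(2*s₂) := by positivity
      have n3 : 0 ≤ s₁⁻¹ := by positivity
      have n4 : 0 ≤ s₂⁻¹ := by positivity
      rw [← ENNReal.ofReal_add g1 g2]
      rw [← ENNReal.ofReal_mul n1, ← ENNReal.ofReal_mul n2, ← ENNReal.ofReal_mul n3,
        ← ENNReal.ofReal_mul n4, ← ENNReal.ofReal_add (by positivity) (by positivity),
        ← ENNReal.ofReal_add (by positivity) (by positivity),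
        ← ENNReal.ofReal_mul ha, ← ENNReal.ofReal_mul hb, ← ENNReal.ofReal_mul ha,
        ← ENNReal.ofReal_mul hb, ← ENNReal.ofReal_add (by positivity) (by positivity),
        ← ENNReal.ofReal_add (by positivity) (by positivity)]
      congr 1
      field_simp
      ring
    · rintro x ⟨h1, h2⟩
      simp only [W0]
      rw [if_neg (by linarith), if_neg (by linarith), if_neg (by linarith)]
      ring
    · intro x
      generalize 2*s₂/(s₂-1) = c at *
      generalize 1/(2*s₂) = e at *
      simp only [Set.mem_Ico]
      constructor
      · rintro ⟨h1, h2⟩; constructor <;> nlinarith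
      · rintro ⟨h1, h2⟩; constructor <;> by_contra! h <;> nlinarith
    · rintro x ⟨h1, h2⟩
      simp only [W0]
      rw [if_neg (by linarith), if_neg (by linarith), if_pos (by linarith)]
      ring
    · intro x
      generalize 1/(2*s₂) = e at *
      simp only [Set.mem_Ico, Set.mem_Ioc]
      constructor
      · rintro ⟨h1, h2⟩; constructor <;> nlinarith
      · rintro ⟨h1, h2⟩; constructor <;> by_contra! h <;> nlinarith
    · rintro x ⟨h1, h2⟩
      simp only [W0]
      rw [if_neg (by linarith), if_pos (by linarith)]
      ring
    · intro x
      generalize 1/(2*s₁) = e at *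
      simp only [Set.mem_Ico]
      constructor
      · rintro ⟨h1, h2⟩; constructor <;> nlinarith
      · rintro ⟨h1, h2⟩; constructor <;> by_contra! h <;> nlinarith
    · rintro x ⟨h1, h2⟩
      simp only [W0]
      rw [if_pos (by linarith)]
      ring
    · intro x
      generalize 2*s₁/(s₁-1) = c at *
      generalize 1/(2*s₁) = e at *
      simp only [Set.mem_Ico, Set.mem_Ioc]
      constructor
      · rintro ⟨h1, h2⟩; constructor <;> nlinarith
      · rintro ⟨h1, h2⟩; constructor <;> by_contra! h <;> nlinarith
end

section
/- Suppose 1/s₁ + 1/s₂ > 1. Let x*_l = (s₁−1+pa−2ra)/(2(s₁−1+pa)) and x*_r = (s₂s₁−s₂+(2rs₁−q+ps₂+qs₁)a+(2rp+pq)a²)/(2(s₁−1+pa)(s₂+qa)). Then for all sufficiently small a > 0: (i) x*_l is a fixed point of W_a lying in the domain of the second branch; (ii) W_a(x*_r) = x*_l with x*_r in the domain of the third branch; (iii) W_a(1/2) − x*_r = ra·[s₁s₂−s₁−s₂+a(qs₁+ps₂−p−q+pqa)] / ((s₁−1+pa)(s₂+qa)) < 0; and (iv) W_a([x*_l, x*_r])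 ⊆ [x*_l, x*_r]. Moreover x*_l → 1/2 and x*_r → 1/2 as a → 0⁺. -/
open MeasureTheory Filter Topology

/-- The fixed point of the second branch of `W_a`. -/
noncomputable def xl (s₁ p r a : ℝ) : ℝ :=
  (s₁ - 1 + p*a - 2*r*a)/(2*(s₁ - 1 + p*a))

/-- The preimage of `xl` under the third branch of `W_a`. -/
noncomputable def xr (s₁ s₂ p q r a : ℝ) : ℝ :=
  (s₂*s₁ - s₂ + (2*r*s₁ - q + p*s₂ + q*s₁)*a + (2*r*p + p*q)*a^2)/(2*(s₁ - 1 + p*a)*(s₂ + q*a))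

theorem xl_eq' (s₁ p r a : ℝ) (h : 0 < s₁ - 1 + p*a) :
    xl s₁ p r a = 1/2 - r*a/(s₁ + p*a - 1) := by
  have h' : 0 < s₁ + p*a - 1 := by linarith
  unfold xl
  rw [show s₁ - 1 + p*a = s₁ + p*a - 1 by ring]
  field_simp

theorem xr_eq' (s₁ s₂ p q r a : ℝ) (h : 0 < s₁ - 1 + p*a) (hB : 0 < s₂ + q*a) :
    xr s₁ s₂ p q r a = 1/2 + (r*a + r*a/(s₁ + p*a - 1))/(s₂ + q*a) := by
  have h' : 0 < s₁ + p*a - 1 := by linarith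
  unfold xr
  rw [show s₁ - 1 + p*a = s₁ + p*a - 1 by ring]
  field_simp
  ring

/-- If `1/s₁ + 1/s₂ > 1`, then for sufficiently small `a > 0`: `xl` is a fixed point on the
second branch, `xr` is the preimage of `xl` on the third branch, `W_a(1/2) < xr` with the
explicit formula for `W_a(1/2) − xr`, and `[xl, xr]` is invariant under `W_a`; moreover
`xl → 1/2` and `xr → 1/2` as `a → 0⁺`. -/
theorem Wmap_invariant_interval
    (s₁ s₂ p q r : ℝ) (hs₁ : 1 < s₁) (hs₂ : 1 < s₂)
    (hp : 0 < p) (hq : 0 < q) (hr : 0 < r)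
    (hsum : 1 < 1/s₁ + 1/s₂) :
    (∃ a₀ > (0:ℝ), ∀ a, 0 < a → a < a₀ →
      (Wmap s₁ s₂ p q r a (xl s₁ p r a) = xl s₁ p r a ∧
        1/2 - (1/2 + r*a)/(s₁ + p*a) ≤ xl s₁ p r a ∧ xl s₁ p r a < 1/2) ∧
      (Wmap s₁ s₂ p q r a (xr s₁ s₂ p q r a) = xl s₁ p r a ∧
        1/2 ≤ xr s₁ s₂ p q r a ∧
        xr s₁ s₂ p q r a < 1/2 + (1/2 + r*a)/(s₂ + q*a)) ∧
      (Wmap s₁ s₂ p q r a (1/2) - xr s₁ s₂ p q r a =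
          r*a*(s₁*s₂ - s₁ - s₂ + a*(q*s₁ + p*s₂ - p - q + p*q*a)) /
            ((s₁ - 1 + p*a)*(s₂ + q*a)) ∧
        Wmap s₁ s₂ p q r a (1/2) - xr s₁ s₂ p q r a < 0) ∧
      Set.MapsTo (Wmap s₁ s₂ p q r a)
        (Set.Icc (xl s₁ p r a) (xr s₁ s₂ p q r a))
        (Set.Icc (xl s₁ p r a) (xr s₁ s₂ p q r a))) ∧
    Tendsto (fun a => xl s₁ p r a) (𝓝[>] (0:ℝ)) (𝓝 (1/2)) ∧
    Tendsto (fun a => xr s₁ s₂ p q r a) (𝓝[>] (0:ℝ)) (𝓝 (1/2)) := by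
  have hs : s₁*s₂ - s₁ - s₂ < 0 := by
    have h1 : 0 < s₁ := by linarith
    have h2 : 0 < s₂ := by linarith
    rw [div_add_div _ _ h1.ne' h2.ne', lt_div_iff₀ (by positivity)] at hsum
    linarith
  refine ⟨?_, ?_, ?_⟩
  · have e1 : ∀ᶠ a in 𝓝 (0:ℝ),
        s₁*s₂ - s₁ - s₂ + a*(q*s₁ + p*s₂ - p - q + p*q*a) < 0 := by
      have hc : Continuous fun a : ℝ =>
        s₁*s₂ - s₁ - s₂ + a*(q*s₁ + p*s₂ - p - q + p*q*a) := by fun_prop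
      exact hc.continuousAt.eventually_lt continuousAt_const (by simpa using hs)
    have e2 : ∀ᶠ a in 𝓝 (0:ℝ), 2*(r*a) < s₁ - 1 := by
      have hc : Continuous fun a : ℝ => 2*(r*a) := by fun_prop
      exact hc.continuousAt.eventually_lt continuousAt_const (by simp; linarith)
    obtain ⟨a₀, h0, hball⟩ := Metric.eventually_nhds_iff.1 (e1.and e2)
    refine ⟨a₀, h0, fun a ha haa => ?_⟩
    obtain ⟨hneg, hR2⟩ := hball (y := a) (by simpa [abs_of_pos ha] using haa)
    have hpa : 0 < p*a := by positivity
    have hqa : 0 < q*a := by positivity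
    have hR : 0 < r*a := by positivity
    have hd : 0 < s₁ - 1 + p*a := by linarith
    have hB : 0 < s₂ + q*a := by linarith
    have hform : 1/2 + r*a - xr s₁ s₂ p q r a =
          r*a*(s₁*s₂ - s₁ - s₂ + a*(q*s₁ + p*s₂ - p - q + p*q*a)) /
            ((s₁ - 1 + p*a)*(s₂ + q*a)) := by
      have h' : 0 < s₁ + p*a - 1 := by linarith
      rw [xr_eq' s₁ s₂ p q r a hd hB, show s₁ - 1 + p*a = s₁ + p*a - 1 by ring]
      obtain ⟨D, hD⟩ : ∃ D, D = s₁ + p*a - 1 := ⟨_, rfl⟩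
      obtain ⟨B, hBB⟩ : ∃ B, B = s₂ + q*a := ⟨_, rfl⟩
      rw [← hD] at h' ⊢
      rw [← hBB] at hB ⊢
      have e1 : s₁ = D + 1 - p*a := by linarith
      have e2 : s₂ = B - q*a := by linarith
      rw [e1, e2]
      field_simp
      ring
    have hlt : 1/2 + r*a - xr s₁ s₂ p q r a < 0 := by
      rw [hform]
      exact div_neg_of_neg_of_pos (mul_neg_of_pos_of_neg hR hneg) (by positivity)
    have hxl := xl_eq' s₁ p r a hd
    have hxr := xr_eq' s₁ s₂ p q r a hd hB
    generalize xl s₁ p r a = L at *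
    generalize xr s₁ s₂ p q r a = M at *
    have hA1 : 0 < s₁ + p*a - 1 := by linarith
    have hA : 0 < s₁ + p*a := by linarith
    have hu : 0 < r*a/(s₁ + p*a - 1) := by positivity
    have hL1 : L < 1/2 := by linarith
    have hfix : (s₁ + p*a)*(L - 1/2) + 1/2 + r*a = L := by
      rw [hxl]; field_simp; ring
    have hM1 : 1/2 < M := by linarith
    have hpre : -(s₂ + q*a)*(M - 1/2) + 1/2 + r*a = L := by
      rw [hxl, hxr]; field_simp; ring
    have hL0 : 0 < L := by
      have : r*a/(s₁ + p*a - 1) < 1/2 := by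
        rw [div_lt_iff₀ hA1]; linarith
      linarith
    have hc1 : 1/2 - (1/2 + r*a)/(s₁ + p*a) ≤ L := by
      have : 1/2 - L ≤ (1/2 + r*a)/(s₁ + p*a) := by
        rw [le_div_iff₀ hA]; linarith
      linarith
    have hc2 : M < 1/2 + (1/2 + r*a)/(s₂ + q*a) := by
      have : M - 1/2 < (1/2 + r*a)/(s₂ + q*a) := by
        rw [lt_div_iff₀ hB]; linarith
      linarith
    have w2 : ∀ x, L ≤ x → x < 1/2 →
        Wmap s₁ s₂ p q r a x = (s₁ + p*a)*(x - 1/2) + 1/2 + r*a := by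
      intro x h1 h2
      unfold Wmap
      rw [if_neg (by linarith), if_pos h2]
    have w3 : ∀ x, 1/2 ≤ x → x ≤ M →
        Wmap s₁ s₂ p q r a x = -(s₂ + q*a)*(x - 1/2) + 1/2 + r*a := by
      intro x h1 h2
      unfold Wmap
      rw [if_neg (by linarith), if_neg (by linarith), if_pos (by linarith)]
    have whalf : Wmap s₁ s₂ p q r a (1/2) = 1/2 + r*a := by
      rw [w3 _ le_rfl hM1.le]; ring
    refine ⟨⟨by rw [w2 L le_rfl hL1, hfix], hc1, hL1⟩,
      ⟨by rw [w3 M hM1.le le_rfl, hpre], hM1.le, hc2⟩,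
      ⟨by rw [whalf, hform], by rw [whalf]; exact hlt⟩, ?_⟩
    rintro x ⟨hx1, hx2⟩
    rcases lt_or_ge x (1/2) with h | h
    · rw [w2 x hx1 h]
      have k1 := mul_le_mul_of_nonneg_left hx1 hA.le
      have k2 := mul_lt_mul_of_pos_left h hA
      constructor <;> linarith
    · rw [w3 x h hx2]
      have k1 := mul_le_mul_of_nonneg_left hx2 hB.le
      have k2 := mul_le_mul_of_nonneg_left h hB.le
      constructor <;> linarith
  · have hne : (2*(s₁ - 1 + p*0)) ≠ 0 := by
      have : 0 < s₁ - 1 := by linarith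
      simp; exact this.ne'
    have hc : ContinuousAt (fun a => xl s₁ p r a) 0 := by
      unfold xl
      exact ContinuousAt.div (by fun_prop) (by fun_prop) hne
    have hv : xl s₁ p r 0 = 1/2 := by
      rw [xl_eq' _ _ _ _ (by linarith)]; simp
    have := hc.tendsto
    rw [hv] at this
    exact this.mono_left nhdsWithin_le_nhds
  · have hne : (2*(s₁ - 1 + p*0)*(s₂ + q*0)) ≠ 0 := by
      have : 0 < s₁ - 1 := by linarith
      have h2 : 0 < s₂ := by linarith
      simp; exact ⟨this.ne', h2.ne'⟩
    have hc : ContinuousAt (fun a => xr s₁ s₂ p q r a) 0 := by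
      unfold xr
      exact ContinuousAt.div (by fun_prop) (by fun_prop) hne
    have hv : xr s₁ s₂ p q r 0 = 1/2 := by
      rw [xr_eq' _ _ _ _ _ _ (by linarith) (by linarith)]; simp
    have := hc.tendsto
    rw [hv] at this
    exact this.mono_left nhdsWithin_le_nhds
end

section
/- Suppose 1/s₁ + 1/s₂ = 1 and a > 0 is sufficiently small. Then W_a(1/2) = 1/2 + ra, W_a²(1/2) = −ra(s₂+qa) + 1/2 + ra, and for every m with 3 ≤ m ≤ k(a), W_a^m(1/2) = −a²(s₁+pa)^{m−2}·(r(qs₁+ps₂−p−q)+rpqa)/(s₁+pa−1) + (s₁−1+pa−2ra)/(2(s₁+pa−1)). -/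
open MeasureTheory Filter Topology

/-- `k(a)`: the first iterate `j ≥ 1` at which the trajectory of `1/2` under `W_a`
drops below `1/2 − (1/2+ra)/(s₁+pa)`. -/
noncomputable def kIndex (s₁ s₂ p q r a : ℝ) : ℕ :=
  sInf {j : ℕ | 1 ≤ j ∧
    (Wmap s₁ s₂ p q r a)^[j] (1/2) ≤ 1/2 - (1/2 + r*a)/(s₁ + p*a)}

/-- Lemma 3(I): if `1/s₁ + 1/s₂ = 1` and `a > 0` is sufficiently small, then the first
`k(a)` iterates of `1/2` under `W_a` are given by explicit formulas. -/
theorem Wmap_iterates_formula_eq_one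
    (s₁ s₂ p q r : ℝ) (hs₁ : 1 < s₁) (hs₂ : 1 < s₂)
    (hp : 0 < p) (hq : 0 < q) (hr : 0 < r)
    (hsum : 1/s₁ + 1/s₂ = 1) :
    ∃ a₀ > (0:ℝ), ∀ a, 0 < a → a < a₀ →
      Wmap s₁ s₂ p q r a (1/2) = 1/2 + r*a ∧
      (Wmap s₁ s₂ p q r a)^[2] (1/2) = -(r*a)*(s₂ + q*a) + 1/2 + r*a ∧
      ∀ m, 3 ≤ m → m ≤ kIndex s₁ s₂ p q r a →
        (Wmap s₁ s₂ p q r a)^[m] (1/2) =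
          -a^2*(s₁ + p*a)^(m-2) * ((r*(q*s₁ + p*s₂ - p - q) + r*p*q*a)/(s₁ + p*a - 1))
            + (s₁ - 1 + p*a - 2*r*a)/(2*(s₁ + p*a - 1)) := by
  have hss : s₁ + s₂ = s₁ * s₂ := by
    have h1 : s₁ ≠ 0 := by linarith
    have h2 : s₂ ≠ 0 := by linarith
    field_simp at hsum
    linarith
  have hd : 0 < 2 * r * (s₂ + q) := by positivity
  refine ⟨min 1 (1 / (2 * r * (s₂ + q))), lt_min one_pos (by positivity), ?_⟩
  intro a ha hlt
  have ha1 : a < 1 := lt_of_lt_of_le hlt (min_le_left _ _)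
  have ha2 : a * (2 * r * (s₂ + q)) < 1 := by
    have := lt_of_lt_of_le hlt (min_le_right _ _)
    rwa [lt_div_iff₀ hd] at this
  have hpa : 0 < p * a := by positivity
  have hqa : 0 < q * a := by positivity
  have hra : 0 < r * a := by positivity
  have hS : 0 < s₁ + p * a := by linarith
  have hT : 0 < s₂ + q * a := by linarith
  have hS1 : 0 < s₁ + p * a - 1 := by linarith
  have hS1n : s₁ + p * a - 1 ≠ 0 := ne_of_gt hS1
  have hc : 0 < (1/2 + r*a)/(s₁ + p*a) := by positivity
  have hc2 : 0 < (1/2 + r*a)/(s₂ + q*a) := by positivity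
  have hsmall : r * a < (1/2 + r*a)/(s₂ + q*a) := by
    rw [lt_div_iff₀ hT]
    have : r * a * (q * a) ≤ r * a * q := by
      apply mul_le_mul_of_nonneg_left _ hra.le
      nlinarith
    nlinarith
  have e1 : Wmap s₁ s₂ p q r a (1/2) = 1/2 + r*a := by
    unfold Wmap
    rw [if_neg (by linarith), if_neg (by linarith), if_pos (by linarith)]
    ring
  have e2 : (Wmap s₁ s₂ p q r a)^[2] (1/2) = -(r*a)*(s₂ + q*a) + 1/2 + r*a := by
    rw [Function.iterate_succ_apply', Function.iterate_one, e1]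
    unfold Wmap
    rw [if_neg (by linarith), if_neg (by linarith), if_pos (by linarith)]
    ring
  refine ⟨e1, e2, ?_⟩
  have key : ∀ n : ℕ, n + 2 ≤ kIndex s₁ s₂ p q r a →
      (Wmap s₁ s₂ p q r a)^[n+2] (1/2) =
          -a^2*(s₁ + p*a)^n * ((r*(q*s₁ + p*s₂ - p - q) + r*p*q*a)/(s₁ + p*a - 1))
            + (s₁ - 1 + p*a - 2*r*a)/(2*(s₁ + p*a - 1)) := by
    intro n
    induction n with
    | zero =>
      intro _
      rw [Nat.zero_add, e2]
      obtain ⟨D, hD⟩ : ∃ D, D = s₁ + p * a - 1 := ⟨_, rfl⟩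
      rw [← hD] at hS1n ⊢
      field_simp
      rw [hD]
      linear_combination (2 * r * a) * hss
    | succ n ih =>
      intro hk
      have hf := ih (by omega)
      have hnot : ¬ ((Wmap s₁ s₂ p q r a)^[n+2] (1/2) ≤ 1/2 - (1/2 + r*a)/(s₁ + p*a)) := by
        intro h
        have hmem : kIndex s₁ s₂ p q r a ≤ n + 2 := Nat.sInf_le ⟨by omega, h⟩
        omega
      have hN : 0 < r*(q*s₁ + p*s₂ - p - q) + r*p*q*a := by
        have h1 : 0 < q * (s₁ - 1) := mul_pos hq (by linarith)
        have h2 : 0 < p * (s₂ - 1) := mul_pos hp (by linarith)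
        have h3 : 0 < q*s₁ + p*s₂ - p - q := by linarith
        positivity
      have hx : (s₁ - 1 + p*a - 2*r*a)/(2*(s₁ + p*a - 1)) < 1/2 := by
        rw [div_lt_iff₀ (by linarith)]
        linarith
      have hlt2 : (Wmap s₁ s₂ p q r a)^[n+2] (1/2) < 1/2 := by
        have : 0 < a^2*(s₁ + p*a)^n *
            ((r*(q*s₁ + p*s₂ - p - q) + r*p*q*a)/(s₁ + p*a - 1)) := by positivity
        rw [hf]
        linarith
      have hstep : (Wmap s₁ s₂ p q r a)^[n+1+2] (1/2) =
          (s₁ + p*a)*((Wmap s₁ s₂ p q r a)^[n+2] (1/2) - 1/2) + 1/2 + r*a := by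
        rw [show n + 1 + 2 = (n + 2) + 1 by omega, Function.iterate_succ_apply']
        generalize (Wmap s₁ s₂ p q r a)^[n+2] (1/2) = y at *
        unfold Wmap
        rw [if_neg (fun h => hnot h.le), if_pos hlt2]
      rw [hstep, hf]
      field_simp
      ring
  intro m hm hk
  obtain ⟨n, rfl⟩ : ∃ n, m = n + 2 := ⟨m - 2, by omega⟩
  rw [Nat.add_sub_cancel]
  exact key n hk
end

section
/- Suppose 1/s₁ + 1/s₂ = 1. Then lim_{a→0⁺} a·k(a) = 0, where k(a) is the first iterate at which the trajectory of 1/2 under W_a drops below 1/2 − (1/2+ra)/(s₁+pa). -/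
open MeasureTheory Filter Topology

/-- `k₁(a) = ⌊2k(a)/3⌋`, the integer part of `2k(a)/3`. -/
noncomputable def kIndex1 (s₁ s₂ p q r a : ℝ) : ℕ :=
  2 * kIndex s₁ s₂ p q r a / 3

theorem Wmap_iter_aux (s₁ s₂ p q r a : ℝ) (hS1 : 1 < s₁ + p*a) (hS2 : 1 < s₂ + q*a)
    (hra : 0 < r*a) (hsm : r*a*(s₂+q*a) < 1/2 + r*a)
    (D : ℝ) (hD : D = r*a*(s₂+q*a-1) - r*a/(s₁+p*a-1)) (hD0 : 0 < D) (n : ℕ)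
    (hn : ∀ j, 1 ≤ j → j < n + 2 →
      1/2 - (1/2 + r*a)/(s₁ + p*a) < (Wmap s₁ s₂ p q r a)^[j] (1/2)) :
    (Wmap s₁ s₂ p q r a)^[n+2] (1/2)
      = 1/2 - r*a/(s₁+p*a-1) - (s₁+p*a)^n * D := by
  have hT1 : 0 < (1/2 + r*a)/(s₁ + p*a) := by positivity
  have hT2 : 0 < (1/2 + r*a)/(s₂ + q*a) := by positivity
  have hT3 : r*a < (1/2 + r*a)/(s₂ + q*a) := by
    rw [lt_div_iff₀ (by linarith)]; exact hsm
  induction n with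
  | zero =>
    have h1 : Wmap s₁ s₂ p q r a (1/2) = 1/2 + r*a := by
      unfold Wmap
      rw [if_neg (by linarith), if_neg (by linarith), if_pos (by linarith)]; ring
    have h2 : Wmap s₁ s₂ p q r a (1/2 + r*a) = 1/2 + r*a - (s₂+q*a)*(r*a) := by
      unfold Wmap
      rw [if_neg (by linarith), if_neg (by linarith), if_pos (by linarith)]; ring
    show Wmap s₁ s₂ p q r a (Wmap s₁ s₂ p q r a (1/2)) = _
    rw [h1, h2, hD]; ring
  | succ m ih =>
    have ih' := ih (fun j h1 h2 => hn j h1 (by omega))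
    have hlow := hn (m+2) (by omega) (by omega)
    rw [show m + 1 + 2 = (m+2)+1 by ring, Function.iterate_succ_apply', ih']
    rw [ih'] at hlow
    have hy : 0 < r*a/(s₁+p*a-1) := div_pos hra (by linarith)
    have hz : 0 < (s₁+p*a)^m * D := by positivity
    unfold Wmap
    rw [if_neg (by linarith), if_pos (by linarith), pow_succ]
    have : s₁+p*a-1 ≠ 0 := by linarith
    have e : r*a = r*a/(s₁+p*a-1) * (s₁+p*a-1) := (div_mul_cancel₀ _ this).symm
    linear_combination e

theorem kIndex_bound_aux (s₁ s₂ p q r a : ℝ) (hs₁ : 1 < s₁) (hs₂ : 1 < s₂)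
    (hp : 0 < p) (hq : 0 < q) (hr : 0 < r)
    (hsum : 1/s₁ + 1/s₂ = 1) (ha : 0 < a) (ha1 : a < 1)
    (hsm : r*a*(s₂+q*a) < 1/2 + r*a) (C : ℝ)
    (hC : C = r*(p*(s₂-1)+q*(s₁-1))/(s₁-1+p)) :
    (kIndex s₁ s₂ p q r a : ℝ) ≤ 3 + |Real.log C + 2 * Real.log a| / Real.log s₁ := by
  have hlog : 0 < Real.log s₁ := Real.log_pos hs₁
  have hnn : 0 ≤ |Real.log C + 2 * Real.log a| / Real.log s₁ := by positivity
  rcases Nat.lt_or_ge (kIndex s₁ s₂ p q r a) 3 with hk | hk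
  · have : (kIndex s₁ s₂ p q r a : ℝ) ≤ 3 := by exact_mod_cast hk.le
    linarith
  obtain ⟨n, hn⟩ := Nat.exists_eq_add_of_le' hk
  have hpa : 0 < p*a := by positivity
  have hqa : 0 < q*a := by positivity
  have hra : 0 < r*a := by positivity
  have hprod : (s₁-1)*(s₂-1) = 1 := by
    have : s₁ ≠ 0 := by linarith
    have : s₂ ≠ 0 := by linarith
    field_simp at hsum
    linarith
  have hu : 0 < s₁ - 1 := by linarith
  have hv : 0 < s₂ - 1 := by linarith
  have hC0 : 0 < C := by rw [hC]; positivity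
  have hU : 0 < s₁+p*a-1 := by linarith
  have hDC : C*a^2 ≤ r*a*(s₂+q*a-1) - r*a/(s₁+p*a-1) := by
    have e : r*a*(s₂+q*a-1) - r*a/(s₁+p*a-1)
      = r*a*(a*(p*(s₂-1)+q*(s₁-1)) + p*q*a^2)/(s₁+p*a-1) := by
      rw [eq_div_iff hU.ne', sub_mul, div_mul_cancel₀ _ hU.ne']
      linear_combination (r*a)*hprod
    rw [e, hC, div_mul_eq_mul_div]
    apply div_le_div₀
    · positivity
    · have : 0 < r*a*(p*q*a^2) := by positivity
      nlinarith
    · exact hU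
    · nlinarith
  have hCa : 0 < C*a^2 := by positivity
  have hnot : ∀ j, 1 ≤ j → j < n + 3 →
      1/2 - (1/2 + r*a)/(s₁ + p*a) < (Wmap s₁ s₂ p q r a)^[j] (1/2) := by
    intro j h1 h2
    by_contra hcon
    have hle : kIndex s₁ s₂ p q r a ≤ j := Nat.sInf_le ⟨h1, not_lt.mp hcon⟩
    omega
  have hform := Wmap_iter_aux s₁ s₂ p q r a (by linarith) (by linarith) hra hsm _ rfl
    (by linarith) n (fun j h1 h2 => hnot j h1 (by omega))
  have hlow := hnot (n+2) (by omega) (by omega)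
  rw [hform] at hlow
  have hb : (1/2 + r*a)/(s₁ + p*a) < 1 + r*a/(s₁+p*a-1) := by
    have h1 : r*a/(s₁+p*a) ≤ r*a/(s₁+p*a-1) :=
      div_le_div_of_nonneg_left hra.le hU (by linarith)
    have h2 : (1/2)/(s₁+p*a) < 1 := by
      rw [div_lt_one (by linarith)]; linarith
    rw [add_div]; linarith
  have hmain : s₁^n * (C*a^2) < 1 := by
    calc s₁^n * (C*a^2) ≤ (s₁+p*a)^n * (r*a*(s₂+q*a-1) - r*a/(s₁+p*a-1)) := by
          apply mul_le_mul _ hDC hCa.le (by positivity)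
          exact pow_le_pow_left₀ (by linarith) (by linarith) n
      _ < 1 := by linarith
  have hl := Real.log_neg (by positivity) hmain
  rw [Real.log_mul (by positivity) hCa.ne', Real.log_mul hC0.ne' (by positivity),
    Real.log_pow, Real.log_pow] at hl
  have hfin : (n:ℝ) ≤ |Real.log C + 2 * Real.log a| / Real.log s₁ := by
    rw [le_div_iff₀ hlog]
    have := neg_abs_le (Real.log C + 2 * Real.log a)
    push_cast at hl
    linarith
  rw [hn]; push_cast; linarith

/-- Lemma 3(II): if `1/s₁ + 1/s₂ = 1`, then `a·k(a) → 0` as `a → 0⁺`. -/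
theorem Wmap_a_mul_k_tendsto_zero_eq_one
    (s₁ s₂ p q r : ℝ) (hs₁ : 1 < s₁) (hs₂ : 1 < s₂)
    (hp : 0 < p) (hq : 0 < q) (hr : 0 < r)
    (hsum : 1/s₁ + 1/s₂ = 1) :
    Tendsto (fun a => a * (kIndex s₁ s₂ p q r a : ℝ)) (𝓝[>] (0:ℝ)) (𝓝 0) := by
  set C := r*(p*(s₂-1)+q*(s₁-1))/(s₁-1+p) with hC
  have hid : Tendsto (fun a : ℝ => a) (𝓝[>] (0:ℝ)) (𝓝 0) :=
    tendsto_id.mono_left nhdsWithin_le_nhds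
  have hlg : Tendsto (fun a : ℝ => Real.log a * a) (𝓝[>] (0:ℝ)) (𝓝 0) := by
    have h := (Real.continuous_mul_log.tendsto 0).mono_left
      (nhdsWithin_le_nhds (s := Set.Ioi (0:ℝ)))
    simpa [mul_comm] using h
  have hlim : Tendsto (fun a : ℝ => 3*a + |a * Real.log C + 2 * (Real.log a * a)| / Real.log s₁)
      (𝓝[>] (0:ℝ)) (𝓝 0) := by
    have h := (hid.const_mul 3).add ((((hid.mul_const (Real.log C)).add
      (hlg.const_mul 2)).abs).div_const (Real.log s₁))
    simpa using h
  have hev1 : ∀ᶠ a in 𝓝[>] (0:ℝ), 0 < a := self_mem_nhdsWithin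
  have hev2 : ∀ᶠ a in 𝓝[>] (0:ℝ), a < 1 := hid.eventually (gt_mem_nhds one_pos)
  have hev3 : ∀ᶠ a in 𝓝[>] (0:ℝ), r*a*(s₂+q*a) < 1/2 + r*a := by
    apply Filter.Eventually.filter_mono nhdsWithin_le_nhds
    have hc1 : Continuous (fun a : ℝ => r*a*(s₂+q*a)) := by fun_prop
    have hc2 : Continuous (fun a : ℝ => 1/2 + r*a) := by fun_prop
    exact hc1.continuousAt.eventually_lt hc2.continuousAt (by norm_num)
  refine squeeze_zero' ?_ ?_ hlim
  · filter_upwards [hev1] with a ha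
    positivity
  · filter_upwards [hev1, hev2, hev3] with a ha ha1 ha3
    have h := kIndex_bound_aux s₁ s₂ p q r a hs₁ hs₂ hp hq hr hsum ha ha1 ha3 C hC
    have h2 := mul_le_mul_of_nonneg_left h ha.le
    have e : |a * Real.log C + 2 * (Real.log a * a)| = a * |Real.log C + 2 * Real.log a| := by
      rw [show a * Real.log C + 2 * (Real.log a * a) = a * (Real.log C + 2 * Real.log a) by ring,
        abs_mul, abs_of_pos ha]
    rw [e]
    calc _ ≤ _ := h2
      _ = _ := by ring
end

section
/- Suppose 1/s₁ + 1/s₂ = 1. Then lim_{a→0⁺} 1/(a·(s₁+pa)^{k(a)}) = 0; moreover, for all sufficiently small a > 0, 1/(a·(s₁+pa)^{k(a)}) ≤ 2a(r(qs₁+ps₂−p−q)+rpqa)/((s₁−1+pa−2ra)(s₁+pa)). -/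
open MeasureTheory Filter Topology

theorem W_orbit (s₁ s₂ p q r a : ℝ) (ha : 0 < a) (hr : 0 < r)
    (hS : 1 < s₁ + p*a) (hT : 1 < s₂ + q*a)
    (hTr : r*a*(s₂+q*a) < 1/2 + r*a)
    (hD : 0 < (s₁+p*a)*(s₂+q*a) - (s₁+p*a) - (s₂+q*a)) (j : ℕ)
    (hj : ∀ i, 1 ≤ i → i ≤ j + 1 →
      1/2 - (1/2 + r*a)/(s₁ + p*a) < (Wmap s₁ s₂ p q r a)^[i] (1/2)) :
    (Wmap s₁ s₂ p q r a)^[j+2] (1/2) = 1/2 - r*a/(s₁+p*a-1) -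
      (s₁+p*a)^j * (r*a*((s₁+p*a)*(s₂+q*a) - (s₁+p*a) - (s₂+q*a))/(s₁+p*a-1)) := by
  have hra : 0 < r*a := mul_pos hr ha
  have hS1 : 0 < s₁ + p*a - 1 := by linarith
  induction j with
  | zero =>
    have h1 : Wmap s₁ s₂ p q r a (1/2) = 1/2 + r*a := by
      unfold Wmap
      have : 0 < (1/2 + r*a)/(s₁ + p*a) := by positivity
      have : 0 < (1/2 + r*a)/(s₂ + q*a) := by positivity
      rw [if_neg (by linarith), if_neg (by linarith), if_pos (by linarith)]
      ring
    have h2 : Wmap s₁ s₂ p q r a (1/2 + r*a) = 1/2 + r*a - (s₂+q*a)*(r*a) := by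
      unfold Wmap
      have : 0 < (1/2 + r*a)/(s₁ + p*a) := by positivity
      have : r*a < (1/2 + r*a)/(s₂ + q*a) := by
        rw [lt_div_iff₀ (by linarith)]; exact hTr
      rw [if_neg (by linarith), if_neg (by linarith), if_pos (by linarith)]
      ring
    simp only [zero_add, Function.iterate_succ, Function.comp, Function.iterate_zero, id, h1, h2]
    have hne := hS1.ne'
    generalize s₁ + p*a = S at hne ⊢
    field_simp
    ring
  | succ j ih =>
    have ih' := ih (fun i h1 h2 => hj i h1 (by omega))
    have hlt := hj (j+2) (by omega) (by omega)
    have e : j + 1 + 2 = (j + 2) + 1 := by omega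
    rw [e, Function.iterate_succ_apply', ]
    rw [ih'] at hlt ⊢
    have hpos : 0 < (s₁+p*a)^j * (r*a*((s₁+p*a)*(s₂+q*a) - (s₁+p*a) - (s₂+q*a))/(s₁+p*a-1)) := by
      positivity
    have hpos2 : 0 < r*a/(s₁+p*a-1) := by positivity
    unfold Wmap
    rw [if_neg (by linarith), if_pos (by linarith), pow_succ]
    field_simp
    ring

theorem W_bound (s₁ s₂ p q r a : ℝ) (ha : 0 < a) (hr : 0 < r)
    (hS : 1 < s₁ + p*a) (hT : 1 < s₂ + q*a)
    (hTr : r*a*(s₂+q*a) < 1/2 + r*a) (hSr : 0 < s₁ - 1 + p*a - 2*r*a)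
    (hD : 0 < (s₁+p*a)*(s₂+q*a) - (s₁+p*a) - (s₂+q*a)) :
    1/(a * (s₁ + p*a)^(kIndex s₁ s₂ p q r a)) ≤
      2*r*((s₁+p*a)*(s₂+q*a) - (s₁+p*a) - (s₂+q*a)) / ((s₁ - 1 + p*a - 2*r*a)*(s₁ + p*a)) := by
  have hra : 0 < r*a := mul_pos hr ha
  have hS1 : 0 < s₁ + p*a - 1 := by linarith
  have hS0 : 0 < s₁ + p*a := by linarith
  have horb := W_orbit s₁ s₂ p q r a ha hr hS hT hTr hD
  have hne : {j : ℕ | 1 ≤ j ∧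
    (Wmap s₁ s₂ p q r a)^[j] (1/2) ≤ 1/2 - (1/2 + r*a)/(s₁ + p*a)}.Nonempty := by
    by_contra hcon
    rw [Set.not_nonempty_iff_eq_empty, Set.eq_empty_iff_forall_notMem] at hcon
    have hall : ∀ i, 1 ≤ i →
      1/2 - (1/2 + r*a)/(s₁ + p*a) < (Wmap s₁ s₂ p q r a)^[i] (1/2) := by
      intro i hi
      by_contra hc
      exact hcon i ⟨hi, not_lt.mp hc⟩
    set E := r*a*((s₁+p*a)*(s₂+q*a) - (s₁+p*a) - (s₂+q*a))/(s₁+p*a-1) with hE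
    have hE0 : 0 < E := by positivity
    obtain ⟨n, hn⟩ := pow_unbounded_of_one_lt (((1/2 + r*a)/(s₁ + p*a))/E) hS
    have h1 := hall (n+2) (by omega)
    rw [horb n (fun i h _ => hall i h)] at h1
    rw [div_lt_iff₀ hE0] at hn
    have : 0 < r*a/(s₁+p*a-1) := by positivity
    linarith
  have hmem := Nat.sInf_mem hne
  have hmin : ∀ i, 1 ≤ i → i < kIndex s₁ s₂ p q r a →
      1/2 - (1/2 + r*a)/(s₁ + p*a) < (Wmap s₁ s₂ p q r a)^[i] (1/2) := by
    intro i hi hik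
    by_contra hc
    exact Nat.notMem_of_lt_sInf hik ⟨hi, not_lt.mp hc⟩
  change 1 ≤ kIndex s₁ s₂ p q r a ∧ (Wmap s₁ s₂ p q r a)^[kIndex s₁ s₂ p q r a] (1/2) ≤
    1/2 - (1/2 + r*a)/(s₁ + p*a) at hmem
  generalize kIndex s₁ s₂ p q r a = k at hmem hmin
  obtain ⟨hk1, hk⟩ := hmem
  have hk2 : k ≠ 1 := by
    rintro rfl
    have h1 : Wmap s₁ s₂ p q r a (1/2) = 1/2 + r*a := by
      unfold Wmap
      have : 0 < (1/2 + r*a)/(s₁ + p*a) := by positivity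
      have : 0 < (1/2 + r*a)/(s₂ + q*a) := by positivity
      rw [if_neg (by linarith), if_neg (by linarith), if_pos (by linarith)]
      ring
    rw [Function.iterate_one, h1] at hk
    have : 0 < (1/2 + r*a)/(s₁ + p*a) := by positivity
    linarith
  obtain ⟨j, rfl⟩ : ∃ j, k = j + 2 := ⟨k - 2, by omega⟩
  rw [horb j (fun i h h' => hmin i h (by omega))] at hk
  generalize (s₁+p*a)*(s₂+q*a) - (s₁+p*a) - (s₂+q*a) = D at *
  have hk' : (1/2 + r*a)/(s₁ + p*a) ≤ (r*a + (s₁+p*a)^j*(r*a*D))/(s₁+p*a-1) := by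
    have : (r*a + (s₁+p*a)^j*(r*a*D))/(s₁+p*a-1) =
      r*a/(s₁+p*a-1) + (s₁+p*a)^j*(r*a*D/(s₁+p*a-1)) := by ring
    rw [this]; linarith
  rw [div_le_div_iff₀ hS0 hS1] at hk'
  rw [div_le_div_iff₀ (by positivity) (by positivity), pow_add]
  have := mul_le_mul_of_nonneg_right hk' hS0.le
  nlinarith

theorem Wmap_inv_a_pow_k_tendsto_zero_eq_one
    (s₁ s₂ p q r : ℝ) (hs₁ : 1 < s₁) (hs₂ : 1 < s₂)
    (hp : 0 < p) (hq : 0 < q) (hr : 0 < r)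
    (hsum : 1/s₁ + 1/s₂ = 1) :
    Tendsto (fun a => 1/(a * (s₁ + p*a)^(kIndex s₁ s₂ p q r a)))
      (𝓝[>] (0:ℝ)) (𝓝 0) ∧
    ∃ a₀ > (0:ℝ), ∀ a, 0 < a → a < a₀ →
      1/(a * (s₁ + p*a)^(kIndex s₁ s₂ p q r a)) ≤
        2*a*(r*(q*s₁ + p*s₂ - p - q) + r*p*q*a) / ((s₁ - 1 + p*a - 2*r*a)*(s₁ + p*a)) := by
  have hC : s₁*s₂ = s₁ + s₂ := by
    field_simp at hsum
    linarith
  have hD (a : ℝ) : (s₁+p*a)*(s₂+q*a) - (s₁+p*a) - (s₂+q*a) =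
      a*((q*s₁ + p*s₂ - p - q) + p*q*a) := by
    linear_combination hC
  have hc0 : 0 < q*s₁ + p*s₂ - p - q := by nlinarith
  have hev1 : ∀ᶠ a in 𝓝 (0:ℝ), r*a*(s₂+q*a) < 1/2 + r*a :=
    ContinuousAt.eventually_lt (by fun_prop) (by fun_prop) (by norm_num)
  have hev2 : ∀ᶠ a in 𝓝 (0:ℝ), 0 < s₁ - 1 + p*a - 2*r*a :=
    ContinuousAt.eventually_lt (by fun_prop) (by fun_prop) (by simp; linarith)
  obtain ⟨a₀, ha₀, hball⟩ := Metric.eventually_nhds_iff.mp (hev1.and hev2)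
  have main : ∀ a, 0 < a → a < a₀ →
      1/(a * (s₁ + p*a)^(kIndex s₁ s₂ p q r a)) ≤
        2*a*(r*(q*s₁ + p*s₂ - p - q) + r*p*q*a) / ((s₁ - 1 + p*a - 2*r*a)*(s₁ + p*a)) := by
    intro a ha haa
    obtain ⟨h1, h2⟩ := hball (y := a) (by rw [Real.dist_eq, sub_zero, abs_of_pos ha]; exact haa)
    have hpa : 0 < p*a := mul_pos hp ha
    have hqa : 0 < q*a := mul_pos hq ha
    have := W_bound s₁ s₂ p q r a ha hr (by linarith) (by linarith) h1 h2
      (by rw [hD]; positivity)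
    rw [hD] at this
    convert this using 2
    ring
  refine ⟨?_, a₀, ha₀, main⟩
  have hlim : Tendsto (fun a : ℝ => 2*a*(r*(q*s₁ + p*s₂ - p - q) + r*p*q*a) /
      ((s₁ - 1 + p*a - 2*r*a)*(s₁ + p*a))) (𝓝[>] (0:ℝ)) (𝓝 0) := by
    have hc : ContinuousAt (fun a : ℝ => 2*a*(r*(q*s₁ + p*s₂ - p - q) + r*p*q*a) /
      ((s₁ - 1 + p*a - 2*r*a)*(s₁ + p*a))) 0 := by
      apply ContinuousAt.div (by fun_prop) (by fun_prop)
      have h1 : 0 < s₁ - 1 := by linarith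
      have h2 : 0 < s₁ := by linarith
      simpa using ⟨h1.ne', h2.ne'⟩
    have := hc.tendsto
    simp only [mul_zero, zero_mul, zero_div] at this
    exact this.mono_left nhdsWithin_le_nhds
  have hev : ∀ᶠ a in 𝓝[>] (0:ℝ), a ∈ Set.Ioo 0 a₀ := Ioo_mem_nhdsGT ha₀
  refine tendsto_of_tendsto_of_tendsto_of_le_of_le' tendsto_const_nhds hlim ?_ ?_
  · filter_upwards [hev] with a ha
    have h0 := ha.1
    positivity
  · filter_upwards [hev] with a ha
    exact main a ha.1 ha.2
end

section
/- Suppose 1/s₁ + 1/s₂ = 1 and set k₁(a) = ⌊2k(a)/3⌋. Then lim_{a→0⁺} 1/(a·(s₁+pa)^{k₁(a)}) = 0. -/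
open MeasureTheory Filter Topology

lemma W_core (s₁ s₂ p q r a A B ρ : ℝ) (hA : s₁ + p*a = A) (hB : s₂ + q*a = B)
    (hρ : r*a = ρ) (h1 : 1 < A) (h2 : 1 < B) (h3 : 0 < ρ) (h4 : 1 < (A-1)*(B-1))
    (h5 : ρ*B < 1/2) :
    ∃ m, kIndex s₁ s₂ p q r a = m+2 ∧
      (1/2+ρ)/A - ρ/(A-1) ≤ A^m * (ρ*((A-1)*(B-1)-1)/(A-1)) := by
  obtain ⟨δ, hδ⟩ : ∃ δ, δ = ρ*((A-1)*(B-1)-1)/(A-1) := ⟨_, rfl⟩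
  obtain ⟨S, hS⟩ : ∃ S : Set ℕ, S = {j : ℕ | 1 ≤ j ∧
    (Wmap s₁ s₂ p q r a)^[j] (1/2) ≤ 1/2 - (1/2 + r*a)/(s₁ + p*a)} := ⟨_, rfl⟩
  have hA1 : 0 < A - 1 := by linarith
  have hA0 : 0 < A := by linarith
  have hB0 : 0 < B := by linarith
  have hδ0 : 0 < δ := by
    rw [hδ]
    apply div_pos _ hA1
    apply mul_pos h3; linarith
  have hT : 0 < (1/2+ρ)/A := by positivity
  have hy : 0 < ρ/(A-1) := by positivity
  have hyA : ρ/(A-1) * A = ρ/(A-1) + ρ := by field_simp; ring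
  have e1 : Wmap s₁ s₂ p q r a (1/2) = 1/2 + ρ := by
    unfold Wmap
    rw [hA, hB, hρ, if_neg (by linarith), if_neg (by linarith), if_pos]
    · ring
    · have : 0 < (1/2+ρ)/B := by positivity
      linarith
  have e2 : Wmap s₁ s₂ p q r a (1/2 + ρ) = 1/2 - ρ/(A-1) - δ := by
    unfold Wmap
    rw [hA, hB, hρ, if_neg (by linarith), if_neg (by linarith), if_pos]
    · rw [hδ]; field_simp; ring
    · have : ρ < (1/2+ρ)/B := by rw [lt_div_iff₀ hB0]; linarith
      linarith
  have n1 : 1 ∉ S := by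
    rw [hS]; simp only [Set.mem_setOf_eq, Function.iterate_one, e1, hA, hρ]
    intro h; linarith [h.2]
  have L : ∀ m, (∀ j, j < m+2 → j ∉ S) →
      (Wmap s₁ s₂ p q r a)^[m+2] (1/2) = 1/2 - ρ/(A-1) - A^m*δ := by
    intro m
    induction m with
    | zero => 
      intro _
      rw [Function.iterate_succ_apply', Function.iterate_succ_apply', Function.iterate_zero,
        id, e1, e2]; simp
    | succ m ih =>
      intro h
      have h' := ih (fun j hj => h j (by omega))
      have hm := h (m+2) (by omega)
      have e : m + 1 + 2 = (m+2)+1 := by omega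
      rw [e, Function.iterate_succ_apply', h']
      rw [hS, Set.mem_setOf_eq, h', hA, hρ] at hm
      have hm' : 1/2 - (1/2+ρ)/A < 1/2 - ρ/(A-1) - A^m*δ := by
        by_contra hc
        exact hm ⟨by omega, not_lt.mp hc⟩
      have : 0 < A^m*δ := by positivity
      unfold Wmap
      rw [hA, hB, hρ, if_neg (by linarith), if_pos (by linarith)]
      rw [pow_succ]
      linear_combination -hyA
  have ne : S.Nonempty := by
    by_contra hne
    rw [Set.not_nonempty_iff_eq_empty] at hne
    obtain ⟨m, hm⟩ := pow_unbounded_of_one_lt (((1/2+ρ)/A)/δ) h1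
    rw [div_lt_iff₀ hδ0] at hm
    have hl := L m (by simp [hne])
    have : m + 2 ∈ S := by
      rw [hS, Set.mem_setOf_eq, hl, hA, hρ]
      exact ⟨by omega, by linarith⟩
    simp [hne] at this
  have hk : kIndex s₁ s₂ p q r a = sInf S := by rw [hS]; rfl
  have hmem := Nat.sInf_mem ne
  have hge : 2 ≤ sInf S := by
    by_contra hlt
    have : sInf S = 0 ∨ sInf S = 1 := by omega
    rcases this with h | h
    · rw [h, hS] at hmem
      have := hmem.1
      omega
    · rw [h] at hmem; exact n1 hmem
  obtain ⟨m, hm⟩ := Nat.exists_eq_add_of_le' hge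
  refine ⟨m, by rw [hk, hm], ?_⟩
  have hl := L m (fun j hj => Nat.notMem_of_lt_sInf (by omega))
  rw [hm, hS, Set.mem_setOf_eq, hl, hA, hρ] at hmem
  rw [← hδ]
  linarith [hmem.2]

/-- Lemma 3(IV): if `1/s₁ + 1/s₂ = 1`, then `1/(a·(s₁+pa)^{k₁(a)}) → 0` as `a → 0⁺`,
where `k₁(a) = ⌊2k(a)/3⌋`. -/
theorem Wmap_inv_a_pow_k1_tendsto_zero_eq_one
    (s₁ s₂ p q r : ℝ) (hs₁ : 1 < s₁) (hs₂ : 1 < s₂)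
    (hp : 0 < p) (hq : 0 < q) (hr : 0 < r)
    (hsum : 1/s₁ + 1/s₂ = 1) :
    Tendsto (fun a => 1/(a * (s₁ + p*a)^(kIndex1 s₁ s₂ p q r a)))
      (𝓝[>] (0:ℝ)) (𝓝 0) := by
  have hs1 : 0 < s₁ - 1 := by linarith
  have hprod : (s₁-1)*(s₂-1) = 1 := by
    have : s₁ ≠ 0 := by linarith
    have : s₂ ≠ 0 := by linarith
    field_simp at hsum
    linarith
  obtain ⟨c, hc⟩ : ∃ c, c = p*(s₂-1)+q*(s₁-1)+p*q := ⟨_, rfl⟩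
  have hc0 : 0 < c := by
    have := mul_pos hp (sub_pos.mpr hs₂)
    have := mul_pos hq hs1
    have := mul_pos hp hq
    linarith
  obtain ⟨C, hC⟩ : ∃ C, C = r*c/(s₁-1) := ⟨_, rfl⟩
  have hC0 : 0 < C := by rw [hC]; positivity
  obtain ⟨c0, hc0'⟩ : ∃ c0, c0 = 1/(4*(s₁+p)) := ⟨_, rfl⟩
  have hc00 : 0 < c0 := by rw [hc0']; positivity
  have small : ∀ t : ℝ, 0 < t → ∀ᶠ a in 𝓝[>] (0:ℝ), a < t := fun t ht =>
    mem_nhdsWithin_of_mem_nhds (Iio_mem_nhds ht)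
  have key : ∀ᶠ a in 𝓝[>] (0:ℝ), 0 < a ∧
      (c0/C)^2 ≤ a * (a * (s₁ + p*a)^(kIndex1 s₁ s₂ p q r a))^3 := by
    filter_upwards [self_mem_nhdsWithin, small 1 one_pos,
      small (1/(2*(r*(s₂+q)))) (by positivity), small (c0*(s₁-1)/r) (by positivity)]
      with a ha0 ha1 ha2 ha3
    have ha0 : 0 < a := ha0
    refine ⟨ha0, ?_⟩
    have hpa : 0 < p*a := by positivity
    have hqa : 0 < q*a := by positivity
    have hpa1 : p*a ≤ p := by nlinarith
    have hqa1 : q*a ≤ q := by nlinarith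
    have hexp : (s₁+p*a-1)*(s₂+q*a-1) - 1 = a*(p*(s₂-1)+q*(s₁-1)+p*q*a) := by
      linear_combination hprod
    have hpos : 0 < p*(s₂-1)+q*(s₁-1)+p*q*a := by
      have := mul_pos hp (sub_pos.mpr hs₂)
      have := mul_pos hq hs1
      have := mul_pos (mul_pos hp hq) ha0
      linarith
    have hle : p*(s₂-1)+q*(s₁-1)+p*q*a ≤ c := by
      have := mul_pos hp hq
      rw [hc]; nlinarith
    obtain ⟨m, hk, hm⟩ := W_core s₁ s₂ p q r a _ _ _ rfl rfl rfl (by linarith) (by linarith)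
      (by positivity) (by have := mul_pos ha0 hpos; linarith)
      (by
        rw [lt_div_iff₀ (by positivity)] at ha2
        have : r*a*(s₂+q*a) ≤ r*a*(s₂+q) := by gcongr
        linarith)
    obtain ⟨A, hA⟩ : ∃ A, A = s₁ + p*a := ⟨_, rfl⟩
    rw [hexp] at hm
    rw [← hA] at hm ⊢
    have hA1 : 1 < A := by linarith
    have hA1' : s₁ - 1 ≤ A - 1 := by linarith
    have b1 : r*a*(a*(p*(s₂-1)+q*(s₁-1)+p*q*a))/(A-1) ≤ C*a^2 := by
      calc _ ≤ r*a*(a*c)/(s₁-1) := by gcongr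
        _ = C*a^2 := by rw [hC]; ring
    have b2 : r*a/(A-1) ≤ c0 := by
      calc r*a/(A-1) ≤ r*a/(s₁-1) := by gcongr
        _ ≤ c0 := by
          rw [lt_div_iff₀ hr] at ha3
          rw [div_le_iff₀ hs1]; linarith
    have b3 : 2*c0 ≤ (1/2+r*a)/A := by
      calc 2*c0 = (1/2+0)/(s₁+p) := by rw [hc0']; field_simp; norm_num
        _ ≤ (1/2+r*a)/A := by
          have : 0 ≤ r*a := by positivity
          have : A ≤ s₁+p := by linarith
          gcongr
    have b4 : c0 ≤ A^m*(C*a^2) := by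
      calc c0 ≤ _ := by linarith
        _ ≤ _ := hm
        _ ≤ _ := by gcongr
    have b5 : c0/C ≤ A^m*a^2 := by rw [div_le_iff₀ hC0]; linarith
    have b6 : A^(2*m) ≤ A^(kIndex1 s₁ s₂ p q r a*3) := by
      apply pow_le_pow_right₀ hA1.le
      unfold kIndex1
      rw [hk]; omega
    calc (c0/C)^2 ≤ (A^m*a^2)^2 := by gcongr
      _ = a^4*A^(2*m) := by ring
      _ ≤ a^4*A^(kIndex1 s₁ s₂ p q r a*3) := by gcongr
      _ = _ := by rw [pow_mul]; ring
  rw [Metric.tendsto_nhds]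
  intro ε hε
  filter_upwards [key, small ((c0/C)^2*ε^3) (by positivity)] with a ⟨ha, hk⟩ hs
  have hX : 0 < a * (s₁ + p*a)^(kIndex1 s₁ s₂ p q r a) := by positivity
  generalize a * (s₁ + p*a)^(kIndex1 s₁ s₂ p q r a) = X at hk hX
  rw [Real.dist_eq, sub_zero, abs_of_pos (by positivity), div_lt_iff₀ hX]
  have : (1:ℝ)^3 < (ε*X)^3 := by
    have h : (c0/C)^2*ε^3 ≤ a*X^3*ε^3 := by gcongr
    have h2 : a*1 < a*(ε*X)^3 := by
      calc a*1 < (c0/C)^2*ε^3 := by linarith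
        _ ≤ a*X^3*ε^3 := h
        _ = _ := by ring
    rw [one_pow]
    exact lt_of_mul_lt_mul_left h2 ha.le
  exact lt_of_pow_lt_pow_left₀ 3 (by positivity) this
end

section
/- Suppose 1/s₁ + 1/s₂ = 1 and set k₁(a) = ⌊2k(a)/3⌋. Then lim_{a→0⁺} a²·(s₁+pa)^{k₁(a)} = 0. -/
open MeasureTheory Filter Topology

lemma Wmap_orbit_bound
    (s₁ s₂ p q r a : ℝ) (hs₁ : 1 < s₁) (hs₂ : 1 < s₂)
    (hp : 0 < p) (hq : 0 < q) (hr : 0 < r) (hsum : 1/s₁ + 1/s₂ = 1)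
    (ha : 0 < a) (hsmall : r*a*(s₂+q*a) < 1/2) (j : ℕ)
    (hj : ∀ i, 1 ≤ i → i < j + 2 →
      1/2 - (1/2 + r*a)/(s₁ + p*a) < (Wmap s₁ s₂ p q r a)^[i] (1/2)) :
    (Wmap s₁ s₂ p q r a)^[j+2] (1/2) ≤
      1/2 - r*a/(s₁+p*a-1) - (s₁+p*a)^j*(r*q*a^2) := by
  have hpa : 0 < p*a := by positivity
  have hqa : 0 < q*a := by positivity
  have hra : 0 < r*a := by positivity
  have hS : 0 < s₁ + p*a := by linarith
  have hS1 : 0 < s₁ + p*a - 1 := by linarith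
  have hR : 0 < s₂ + q*a := by linarith
  have hd : 0 < (1/2 + r*a)/(s₁ + p*a) := by positivity
  have he : 0 < (1/2 + r*a)/(s₂ + q*a) := by positivity
  induction j with
  | zero =>
    have h1 : Wmap s₁ s₂ p q r a (1/2) = 1/2 + r*a := by
      unfold Wmap
      rw [if_neg (by linarith), if_neg (by linarith), if_pos (by linarith)]
      ring
    have hlt : r*a < (1/2 + r*a)/(s₂ + q*a) := by
      rw [lt_div_iff₀ hR]; linarith
    have h2 : Wmap s₁ s₂ p q r a (1/2 + r*a) = -(s₂ + q*a)*(r*a) + 1/2 + r*a := by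
      unfold Wmap
      rw [if_neg (by linarith), if_neg (by linarith), if_pos (by linarith)]
      ring
    have h3 : (Wmap s₁ s₂ p q r a)^[0+2] (1/2) = -(s₂ + q*a)*(r*a) + 1/2 + r*a := by
      simp only [Nat.zero_add, Function.iterate_succ, Function.iterate_zero, Function.comp, id]
      rw [h1, h2]
    rw [h3]
    have hs : (s₁-1)*(s₂-1) = 1 := by
      have : s₁ ≠ 0 := by linarith
      have : s₂ ≠ 0 := by linarith
      field_simp at hsum
      linarith
    have h4 : r*a/(s₁+p*a-1) ≤ r*a*(s₂-1) := by
      rw [div_le_iff₀ hS1]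
      have : 0 ≤ r*a*((s₂-1)*(p*a)) := by
        have : 0 < s₂ - 1 := by linarith
        positivity
      have e : r*a*(s₂-1)*(s₁+p*a-1) = r*a*((s₁-1)*(s₂-1)) + r*a*((s₂-1)*(p*a)) := by ring
      rw [e, hs]; linarith
    have e : (s₁+p*a)^0*(r*q*a^2) = q*a*(r*a) := by ring
    rw [e]
    linarith
  | succ j ih =>
    have ih' := ih (fun i h1 h2 => hj i h1 (by omega))
    have hx := hj (j+2) (by omega) (by omega)
    rw [show j+1+2 = (j+2)+1 by ring, Function.iterate_succ_apply']
    generalize (Wmap s₁ s₂ p q r a)^[j+2] (1/2) = x at ih' hx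
    have hf : 0 < r*a/(s₁+p*a-1) := by positivity
    have hg : 0 < (s₁+p*a)^j*(r*q*a^2) := by positivity
    have hW : Wmap s₁ s₂ p q r a x = (s₁ + p*a)*(x - 1/2) + 1/2 + r*a := by
      unfold Wmap
      rw [if_neg (by linarith), if_pos (by linarith)]
    rw [hW]
    have hm := mul_le_mul_of_nonneg_left ih' hS.le
    have e : (s₁+p*a)*(r*a/(s₁+p*a-1)) = r*a + r*a/(s₁+p*a-1) := by
      field_simp
      ring
    have e2 : (s₁+p*a)^(j+1)*(r*q*a^2) = (s₁+p*a)*((s₁+p*a)^j*(r*q*a^2)) := by ring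
    rw [e2]
    linarith

lemma Wmap_pow_kIndex_bound
    (s₁ s₂ p q r a : ℝ) (hs₁ : 1 < s₁) (hs₂ : 1 < s₂)
    (hp : 0 < p) (hq : 0 < q) (hr : 0 < r) (hsum : 1/s₁ + 1/s₂ = 1)
    (ha : 0 < a) (ha1 : a < 1) (hsmall : r*a*(s₂+q*a) < 1/2) :
    a^2 * (s₁+p*a)^(kIndex s₁ s₂ p q r a) ≤ (s₁+p)^2*((1/2+r)/(r*q) + 1) := by
  have hpa : 0 < p*a := by positivity
  have hra : 0 < r*a := by positivity
  have hS : 1 < s₁ + p*a := by linarith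
  have hS0 : 0 < s₁ + p*a := by linarith
  have hS1 : 0 < s₁ + p*a - 1 := by linarith
  have hSle : s₁ + p*a ≤ s₁ + p := by nlinarith
  have hSS : (s₁+p*a)^2 ≤ (s₁+p)^2 := by gcongr
  have ha2 : a^2 ≤ 1 := by nlinarith
  have hc : 0 < (1/2+r)/(r*q) := by positivity
  by_cases hk : kIndex s₁ s₂ p q r a ≤ 2
  · have h1 : (s₁+p*a)^(kIndex s₁ s₂ p q r a) ≤ (s₁+p*a)^2 :=
      pow_le_pow_right₀ hS.le hk
    have h2 : a^2 * (s₁+p*a)^(kIndex s₁ s₂ p q r a) ≤ 1 * (s₁+p)^2 :=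
      mul_le_mul ha2 (h1.trans hSS) (by positivity) (by norm_num)
    have h3 : 0 ≤ (s₁+p)^2*((1/2+r)/(r*q)) := by positivity
    linarith
  · obtain ⟨j, hj⟩ : ∃ j, kIndex s₁ s₂ p q r a = j + 3 :=
      ⟨kIndex s₁ s₂ p q r a - 3, by omega⟩
    have hn : ∀ i, 1 ≤ i → i < j + 3 →
        1/2 - (1/2 + r*a)/(s₁ + p*a) < (Wmap s₁ s₂ p q r a)^[i] (1/2) := by
      intro i h1 h2
      rw [← hj] at h2
      have := Nat.notMem_of_lt_sInf h2
      by_contra hcon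
      exact this ⟨h1, not_lt.mp hcon⟩
    have hb := Wmap_orbit_bound s₁ s₂ p q r a hs₁ hs₂ hp hq hr hsum ha hsmall j
      (fun i h1 h2 => hn i h1 (by omega))
    have hx := hn (j+2) (by omega) (by omega)
    have hf : 0 < r*a/(s₁+p*a-1) := by positivity
    have hlt : (s₁+p*a)^j*(r*q*a^2) < (1/2 + r*a)/(s₁+p*a) := by linarith
    rw [lt_div_iff₀ hS0] at hlt
    have h5 : a^2 * (s₁+p*a)^(j+3) * (r*q) ≤ (s₁+p)^2 * (1/2+r) := by
      have e : a^2 * (s₁+p*a)^(j+3) * (r*q)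
        = (s₁+p*a)^2 * ((s₁+p*a)^j*(r*q*a^2)*(s₁+p*a)) := by ring
      rw [e]
      have : (s₁+p*a)^j*(r*q*a^2)*(s₁+p*a) ≤ 1/2 + r := by nlinarith
      exact mul_le_mul hSS this (by positivity) (by positivity)
    rw [hj]
    have h6 : a^2 * (s₁+p*a)^(j+3) ≤ (s₁+p)^2 * ((1/2+r)/(r*q)) := by
      rw [← mul_div_assoc, le_div_iff₀ (by positivity)]
      exact h5
    have : 0 ≤ (s₁+p)^2 := by positivity
    linarith

/-- Lemma 3(V): if `1/s₁ + 1/s₂ = 1`, then `a²·(s₁+pa)^{k₁(a)} → 0` as `a → 0⁺`,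
where `k₁(a) = ⌊2k(a)/3⌋`. -/
theorem Wmap_a_sq_pow_k1_tendsto_zero_eq_one
    (s₁ s₂ p q r : ℝ) (hs₁ : 1 < s₁) (hs₂ : 1 < s₂)
    (hp : 0 < p) (hq : 0 < q) (hr : 0 < r)
    (hsum : 1/s₁ + 1/s₂ = 1) :
    Tendsto (fun a => a^2 * (s₁ + p*a)^(kIndex1 s₁ s₂ p q r a))
      (𝓝[>] (0:ℝ)) (𝓝 0) := by
  set C : ℝ := (s₁+p)^2*((1/2+r)/(r*q) + 1) with hC
  have hlim : Tendsto (fun a : ℝ => a^2 * C^2) (𝓝[>] (0:ℝ)) (𝓝 0) := by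
    have h : Continuous (fun a : ℝ => a^2 * C^2) := by fun_prop
    have := (h.tendsto 0).mono_left (nhdsWithin_le_nhds (s := Set.Ioi (0:ℝ)))
    simpa using this
  have hsm : ∀ᶠ a in 𝓝[>] (0:ℝ), r*a*(s₂+q*a) < 1/2 := by
    have h : Continuous (fun a : ℝ => r*a*(s₂+q*a)) := by fun_prop
    have := (h.tendsto 0).mono_left (nhdsWithin_le_nhds (s := Set.Ioi (0:ℝ)))
    exact this.eventually_lt_const (by norm_num)
  have h1 : ∀ᶠ a in 𝓝[>] (0:ℝ), a < 1 :=
    nhdsWithin_le_nhds (eventually_lt_nhds (by norm_num))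
  rw [Metric.tendsto_nhds]
  intro ε hε
  have hε3 : ∀ᶠ a in 𝓝[>] (0:ℝ), a^2 * C^2 < ε^3 :=
    hlim.eventually_lt_const (by positivity)
  filter_upwards [hsm, h1, hε3, self_mem_nhdsWithin] with a hsm h1 h3 ha
  have ha : 0 < a := ha
  have hb := Wmap_pow_kIndex_bound s₁ s₂ p q r a hs₁ hs₂ hp hq hr hsum ha h1 hsm
  rw [← hC] at hb
  have hS : 1 < s₁ + p*a := by nlinarith [mul_pos hp ha]
  have hS0 : 0 < s₁ + p*a := by linarith
  have hT : 0 ≤ a^2 * (s₁ + p*a)^(kIndex1 s₁ s₂ p q r a) := by positivity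
  rw [Real.dist_eq, sub_zero, abs_of_nonneg hT]
  refine lt_of_pow_lt_pow_left₀ 3 hε.le (lt_of_le_of_lt ?_ h3)
  have hk : kIndex1 s₁ s₂ p q r a * 3 ≤ kIndex s₁ s₂ p q r a * 2 := by
    unfold kIndex1; omega
  calc (a^2 * (s₁ + p*a)^(kIndex1 s₁ s₂ p q r a))^3
      = a^6 * (s₁ + p*a)^(kIndex1 s₁ s₂ p q r a * 3) := by
        rw [mul_pow, ← pow_mul, ← pow_mul]
    _ ≤ a^6 * (s₁ + p*a)^(kIndex s₁ s₂ p q r a * 2) :=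
        mul_le_mul_of_nonneg_left (pow_le_pow_right₀ hS.le hk) (by positivity)
    _ = a^2 * (a^2 * (s₁ + p*a)^(kIndex s₁ s₂ p q r a))^2 := by
        rw [mul_pow, ← pow_mul (s₁ + p*a)]; ring
    _ ≤ a^2 * C^2 := by gcongr
end

section
/- Suppose 1/s₁ + 1/s₂ = 1 and set k₁(a) = ⌊2k(a)/3⌋. Then lim_{a→0⁺} W_a^{k₁(a)}(1/2) = 1/2. -/
open MeasureTheory Filter Topology

lemma Wmap_aux (s₁ s₂ p q r a : ℝ) (hA : 1 < s₁ + p*a) (hB : 1 < s₂ + q*a)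
    (hra : 0 < r*a) (hsm : r*a*(s₂ + q*a) < 1/2 + r*a) (D : ℝ) (hD : 0 ≤ D)
    (hDdef : D = r*a*((s₁ + p*a - 1)*(s₂ + q*a - 1) - 1)/(s₁ + p*a - 1)) (n : ℕ)
    (hn : ∀ j, 1 ≤ j → j < n + 2 →
      1/2 - (1/2 + r*a)/(s₁ + p*a) < (Wmap s₁ s₂ p q r a)^[j] (1/2)) :
    (Wmap s₁ s₂ p q r a)^[n+2] (1/2)
      = 1/2 - D * (s₁ + p*a)^n - r*a/(s₁ + p*a - 1) := by
  set A := s₁ + p*a with hAdef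
  set B := s₂ + q*a with hBdef
  have hA1 : A - 1 ≠ 0 := by linarith
  have hAp : 0 < (1/2 + r*a)/A := by apply div_pos <;> linarith
  have hBp : 0 < (1/2 + r*a)/B := by apply div_pos <;> linarith
  have h1 : Wmap s₁ s₂ p q r a (1/2) = 1/2 + r*a := by
    unfold Wmap
    rw [← hAdef, ← hBdef, if_neg (by linarith), if_neg (by linarith), if_pos (by linarith)]
    ring
  have h3 : r*a < (1/2 + r*a)/B := by
    rw [lt_div_iff₀ (by linarith)]; exact hsm
  have h2 : Wmap s₁ s₂ p q r a (1/2 + r*a) = 1/2 + r*a - B*(r*a) := by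
    unfold Wmap
    rw [← hAdef, ← hBdef, if_neg (by linarith), if_neg (by linarith), if_pos (by linarith)]
    ring
  induction n with
  | zero =>
    simp only [zero_add, Function.iterate_succ, Function.iterate_zero, Function.comp, id]
    rw [h1, h2, hDdef]
    field_simp
    ring
  | succ n ih =>
    have ih' := ih (fun j h1 h2 => hn j h1 (by omega))
    have ht := hn (n+2) (by omega) (by omega)
    have hlt : (Wmap s₁ s₂ p q r a)^[n+2] (1/2) < 1/2 := by
      rw [ih']
      have : 0 ≤ D * A^n := mul_nonneg hD (pow_nonneg (by linarith) _)
      have : 0 < r*a/(A-1) := div_pos hra (by linarith)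
      linarith
    rw [show n + 1 + 2 = (n+2) + 1 by ring, Function.iterate_succ_apply']
    generalize hx : (Wmap s₁ s₂ p q r a)^[n+2] (1/2) = x at *
    have : Wmap s₁ s₂ p q r a x = A*(x-1/2) + 1/2 + r*a := by
      unfold Wmap
      rw [← hAdef, if_neg (by linarith), if_pos hlt]
    rw [this, ih', pow_succ]
    field_simp
    ring

/-- Lemma 3(VI): if `1/s₁ + 1/s₂ = 1`, then `W_a^{k₁(a)}(1/2) → 1/2` as `a → 0⁺`,
where `k₁(a) = ⌊2k(a)/3⌋`. -/
theorem Wmap_iterate_k1_tendsto_half_eq_one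
    (s₁ s₂ p q r : ℝ) (hs₁ : 1 < s₁) (hs₂ : 1 < s₂)
    (hp : 0 < p) (hq : 0 < q) (hr : 0 < r)
    (hsum : 1/s₁ + 1/s₂ = 1) :
    Tendsto (fun a => (Wmap s₁ s₂ p q r a)^[kIndex1 s₁ s₂ p q r a] (1/2))
      (𝓝[>] (0:ℝ)) (𝓝 (1/2)) := by
  rw [Metric.tendsto_nhds]
  intro ε hε
  have hs : (s₁ - 1)*(s₂ - 1) = 1 := by
    have h1 : s₁ ≠ 0 := by linarith
    have h2 : s₂ ≠ 0 := by linarith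
    field_simp at hsum
    linarith
  have tA : Tendsto (fun a : ℝ => s₁ + p*a - 1) (𝓝[>] 0) (𝓝 (s₁ - 1)) := by
    have : Continuous (fun a : ℝ => s₁ + p*a - 1) := by fun_prop
    simpa using (this.tendsto 0).mono_left nhdsWithin_le_nhds
  have tR : Tendsto (fun a : ℝ => r*a) (𝓝[>] 0) (𝓝 0) := by
    have : Continuous (fun a : ℝ => r*a) := by fun_prop
    simpa using (this.tendsto 0).mono_left nhdsWithin_le_nhds
  have tS : Tendsto (fun a : ℝ => r*a*(s₂ + q*a)) (𝓝[>] 0) (𝓝 0) := by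
    have : Continuous (fun a : ℝ => r*a*(s₂ + q*a)) := by fun_prop
    simpa using (this.tendsto 0).mono_left nhdsWithin_le_nhds
  have tN : Tendsto (fun a : ℝ => r*a*((s₁ + p*a - 1)*(s₂ + q*a - 1) - 1)) (𝓝[>] 0) (𝓝 0) := by
    have : Continuous (fun a : ℝ => r*a*((s₁ + p*a - 1)*(s₂ + q*a - 1) - 1)) := by fun_prop
    simpa using (this.tendsto 0).mono_left nhdsWithin_le_nhds
  have hne : s₁ - 1 ≠ 0 := by linarith
  have tD := tN.div tA hne
  have tE := tR.div tA hne
  rw [zero_div] at tD tE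
  have hε3 : 0 < (ε/2)^3 := by positivity
  filter_upwards [self_mem_nhdsWithin, tR.eventually_lt_const hε,
    tR.eventually_lt_const (show (0:ℝ) < 1/2 by norm_num),
    tS.eventually_lt_const (show (0:ℝ) < 1/2 by norm_num),
    tD.eventually_lt_const hε3, tE.eventually_lt_const (half_pos hε)]
    with a ha hr1 hr2 hS hDs hEs
  have ha : 0 < a := ha
  simp only [Pi.div_apply] at hDs hEs
  have hra : 0 < r*a := mul_pos hr ha
  have hpa : 0 < p*a := mul_pos hp ha
  have hqa : 0 < q*a := mul_pos hq ha
  have hA : 1 < s₁ + p*a := by linarith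
  have hB : 1 < s₂ + q*a := by linarith
  obtain ⟨D, hDdef⟩ : ∃ D, D = r*a*((s₁ + p*a - 1)*(s₂ + q*a - 1) - 1)/(s₁ + p*a - 1) := ⟨_, rfl⟩
  rw [← hDdef] at hDs
  have hD : 0 ≤ D := by
    rw [hDdef]
    apply div_nonneg _ (by linarith)
    apply mul_nonneg hra.le
    nlinarith [mul_pos hpa hqa, mul_pos hpa (sub_pos.2 hs₂), mul_pos hqa (sub_pos.2 hs₁)]
  have hk : ∀ j, 1 ≤ j → j < kIndex s₁ s₂ p q r a →
      1/2 - (1/2 + r*a)/(s₁ + p*a) < (Wmap s₁ s₂ p q r a)^[j] (1/2) := by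
    intro j h1 h2
    by_contra hc
    exact Nat.notMem_of_lt_sInf h2 ⟨h1, not_lt.1 hc⟩
  have key := Wmap_aux s₁ s₂ p q r a hA hB hra (by linarith) D hD hDdef
  have hk1 : kIndex1 s₁ s₂ p q r a = 2 * kIndex s₁ s₂ p q r a / 3 := rfl
  generalize kIndex s₁ s₂ p q r a = k at *
  generalize kIndex1 s₁ s₂ p q r a = k1 at *
  rcases k1 with _ | _ | n
  · simpa using hε
  · have hBp : 0 < (1/2 + r*a)/(s₂ + q*a) := by apply div_pos <;> linarith
    have hAp : 0 < (1/2 + r*a)/(s₁ + p*a) := by apply div_pos <;> linarith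
    have h1 : Wmap s₁ s₂ p q r a (1/2) = 1/2 + r*a := by
      unfold Wmap
      rw [if_neg (by linarith), if_neg (by linarith), if_pos (by linarith)]
      ring
    simp only [zero_add, Function.iterate_one]
    rw [h1, Real.dist_eq, add_sub_cancel_left, abs_of_pos hra]
    exact hr1
  · obtain ⟨m, rfl⟩ : ∃ m, k = m + 3 := ⟨k - 3, by omega⟩
    have hE : 0 < r*a/(s₁ + p*a - 1) := div_pos hra (by linarith)
    have hm := key m (fun j h1 h2 => hk j h1 (by omega))
    have hn := key n (fun j h1 h2 => hk j h1 (by omega))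
    have ht := hk (m+2) (by omega) (by omega)
    rw [hm] at ht
    have hlt1 : (1/2 + r*a)/(s₁ + p*a) < 1 := by
      rw [div_lt_one (by linarith)]; linarith
    rw [show n + 1 + 1 = n + 2 by ring, hn]
    have hApos : 0 < s₁ + p*a := by linarith
    set A := s₁ + p*a
    have hDm : D * A^m ≤ 1 := by linarith
    have hDm0 : 0 ≤ D * A^m := by positivity
    have hDn0 : 0 ≤ D * A^n := by positivity
    have hc : (D * A^n)^3 ≤ D := by
      calc (D * A^n)^3 = D^3 * A^(3*n) := by ring
        _ ≤ D^3 * A^(2*m) := by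
          apply mul_le_mul_of_nonneg_left _ (by positivity)
          exact pow_le_pow_right₀ hA.le (by omega)
        _ = D * (D * A^m)^2 := by ring
        _ ≤ D * 1 := mul_le_mul_of_nonneg_left (pow_le_one₀ hDm0 hDm) hD
        _ = D := mul_one D
    have hlt : D * A^n < ε/2 := lt_of_pow_lt_pow_left₀ 3 (by positivity) (hc.trans_lt hDs)
    rw [Real.dist_eq, abs_lt]
    constructor <;> linarith
end

section
/- Suppose 1/s₁ + 1/s₂ < 1 and a > 0 is sufficiently small. Then W_a(1/2) = 1/2 + ra, W_a²(1/2) = −ra(s₂+qa) + 1/2 + ra, and for every m with 3 ≤ m ≤ k(a), W_a^m(1/2) = −a(s₁+pa)^{m−2}·r[s₁s₂−s₁−s₂+a(qs₁+ps₂−p−q+pqa)]/(s₁+pa−1) + (s₁−1+pa−2ra)/(2(s₁+pa−1)). -/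
open MeasureTheory Filter Topology

/-- Lemma 5(I): if `1/s₁ + 1/s₂ < 1` and `a > 0` is sufficiently small, then the first
`k(a)` iterates of `1/2` under `W_a` are given by explicit formulas. -/
theorem Wmap_iterates_formula_lt_one
    (s₁ s₂ p q r : ℝ) (hs₁ : 1 < s₁) (hs₂ : 1 < s₂)
    (hp : 0 < p) (hq : 0 < q) (hr : 0 < r)
    (hsum : 1/s₁ + 1/s₂ < 1) :
    ∃ a₀ > (0:ℝ), ∀ a, 0 < a → a < a₀ →
      Wmap s₁ s₂ p q r a (1/2) = 1/2 + r*a ∧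
      (Wmap s₁ s₂ p q r a)^[2] (1/2) = -(r*a)*(s₂ + q*a) + 1/2 + r*a ∧
      ∀ m, 3 ≤ m → m ≤ kIndex s₁ s₂ p q r a →
        (Wmap s₁ s₂ p q r a)^[m] (1/2) =
          -a*(s₁ + p*a)^(m-2) *
            (r*(s₁*s₂ - s₁ - s₂ + a*(q*s₁ + p*s₂ - p - q + p*q*a))/(s₁ + p*a - 1))
            + (s₁ - 1 + p*a - 2*r*a)/(2*(s₁ + p*a - 1)) := by
  have hs12 : 0 < s₁*s₂ - s₁ - s₂ := by
    have h1 : (0:ℝ) < s₁ := by linarith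
    have h2 : (0:ℝ) < s₂ := by linarith
    rw [div_add_div _ _ h1.ne' h2.ne', div_lt_one (by positivity)] at hsum
    linarith
  have hD : 0 < 2*r*(s₂+q) := by positivity
  refine ⟨min 1 (1/(2*r*(s₂+q))), lt_min one_pos (by positivity), ?_⟩
  intro a ha ha0
  have ha1 : a < 1 := lt_of_lt_of_le ha0 (min_le_left _ _)
  have ha2 : a < 1/(2*r*(s₂+q)) := lt_of_lt_of_le ha0 (min_le_right _ _)
  rw [lt_div_iff₀ hD] at ha2
  have hpa : 0 < p*a := by positivity
  have hqa : 0 < q*a := by positivity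
  have hra : 0 < r*a := by positivity
  have hS : 1 < s₁ + p*a := by linarith
  have hT : 1 < s₂ + q*a := by linarith
  have hqa1 : q*a < q := by nlinarith
  have hk : r*a*(s₂+q*a) < 1/2 := by nlinarith
  have hB : 0 < s₁*s₂ - s₁ - s₂ + a*(q*s₁ + p*s₂ - p - q + p*q*a) := by
    have h1 : 0 < q*(s₁-1) := mul_pos hq (by linarith)
    have h2 : 0 < p*(s₂-1) := mul_pos hp (by linarith)
    have h3 : 0 < p*q*a := by positivity
    have : 0 < a*(q*s₁ + p*s₂ - p - q + p*q*a) := mul_pos ha (by linarith)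
    linarith
  have hS0 : 0 < s₁ + p*a := by linarith
  have hT0 : 0 < s₂ + q*a := by linarith
  have hc1 : 0 < (1/2 + r*a)/(s₁ + p*a) := by positivity
  have hc2 : 0 < (1/2 + r*a)/(s₂ + q*a) := by positivity
  have e1 : Wmap s₁ s₂ p q r a (1/2) = 1/2 + r*a := by
    unfold Wmap
    rw [if_neg (by linarith), if_neg (by linarith), if_pos (by linarith)]
    ring
  have e2 : (Wmap s₁ s₂ p q r a)^[2] (1/2) = -(r*a)*(s₂ + q*a) + 1/2 + r*a := by
    have hlt : r*a < (1/2 + r*a)/(s₂ + q*a) := by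
      rw [lt_div_iff₀ hT0]; linarith
    rw [Function.iterate_succ_apply', Function.iterate_one, e1]
    unfold Wmap
    rw [if_neg (by linarith), if_neg (by linarith), if_pos (by linarith)]
    ring
  refine ⟨e1, e2, ?_⟩
  have hS1 : 0 < s₁ + p*a - 1 := by linarith
  have hS1n : s₁ + p*a - 1 ≠ 0 := ne_of_gt hS1
  have hS1m : s₁ + a*p - 1 ≠ 0 := by rwa [mul_comm a p]
  have key : ∀ n, n + 2 ≤ kIndex s₁ s₂ p q r a →
        (Wmap s₁ s₂ p q r a)^[n+2] (1/2) =
          -a*(s₁ + p*a)^n *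
            (r*(s₁*s₂ - s₁ - s₂ + a*(q*s₁ + p*s₂ - p - q + p*q*a))/(s₁ + p*a - 1))
            + (s₁ - 1 + p*a - 2*r*a)/(2*(s₁ + p*a - 1)) := by
    intro n
    induction n with
    | zero =>
      intro _
      rw [Nat.zero_add, e2]
      field_simp
      ring
    | succ n ih =>
      intro hn
      have ih' := ih (by omega)
      have hnot := Nat.notMem_of_lt_sInf (show n + 2 < sInf _ from lt_of_lt_of_le (by omega) hn)
      have hgt : 1/2 - (1/2 + r*a)/(s₁ + p*a) < (Wmap s₁ s₂ p q r a)^[n+2] (1/2) := by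
        by_contra hcon
        exact hnot ⟨by omega, not_lt.mp hcon⟩
      have hlt : (Wmap s₁ s₂ p q r a)^[n+2] (1/2) < 1/2 := by
        rw [ih']
        have h1 : 0 < a*(s₁ + p*a)^n *
            (r*(s₁*s₂ - s₁ - s₂ + a*(q*s₁ + p*s₂ - p - q + p*q*a))/(s₁ + p*a - 1)) := by
          positivity
        have h2 : (s₁ - 1 + p*a - 2*r*a)/(2*(s₁ + p*a - 1)) < 1/2 := by
          rw [div_lt_div_iff₀ (by positivity) (by norm_num)]
          linarith
        linarith
      rw [show n + 1 + 2 = (n + 2) + 1 from rfl, Function.iterate_succ_apply']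
      have hW : ∀ x, 1/2 - (1/2 + r*a)/(s₁ + p*a) < x → x < 1/2 →
          Wmap s₁ s₂ p q r a x = (s₁ + p*a)*(x - 1/2) + 1/2 + r*a := by
        intro x h1 h2
        unfold Wmap
        rw [if_neg (by linarith), if_pos h2]
      rw [hW _ hgt hlt, ih', pow_succ]
      field_simp
      ring
  intro m hm hmk
  obtain ⟨n, rfl⟩ : ∃ n, m = n + 2 := ⟨m - 2, by omega⟩
  exact key n hmk
end

section
/- Suppose 1/s₁ + 1/s₂ < 1. Then lim_{a→0⁺} a·k(a) = 0, where k(a) is the first iterate at which the trajectory of 1/2 under W_a drops below 1/2 − (1/2+ra)/(s₁+pa). -/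
open MeasureTheory Filter Topology

lemma kIndex_bound (s₁ s₂ p q r a : ℝ) (hs₁ : 1 < s₁) (hs₂ : 1 < s₂)
    (hp : 0 < p) (hq : 0 < q) (hr : 0 < r) (ha : 0 < a)
    (h1 : 1 + 2*(r*a) ≤ s₁) (h2 : r*a*(s₂ + q*a - 1) < 1/2) (N : ℕ)
    (hδ : 0 < s₂ - 1 - 1/(s₁-1))
    (hN : N + 3 ≤ kIndex s₁ s₂ p q r a) :
    r*a*(s₂ - 1 - 1/(s₁-1)) * s₁^N < 1/2 := by
  have hra : 0 < r*a := mul_pos hr ha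
  have hpa : 0 < p*a := mul_pos hp ha
  have hqa : 0 < q*a := mul_pos hq ha
  have hthr : 0 ≤ 1/2 - (1/2 + r*a)/(s₁ + p*a) := by
    rw [sub_nonneg, div_le_iff₀ (by linarith)]; linarith
  have hpos1 : 0 < (1/2 + r*a)/(s₁ + p*a) := by positivity
  have hlt2 : r*a < (1/2 + r*a)/(s₂ + q*a) := by
    rw [lt_div_iff₀ (by linarith)]; linarith
  have hne : ∀ j, 1 ≤ j → j < kIndex s₁ s₂ p q r a →
      1/2 - (1/2 + r*a)/(s₁ + p*a) < (Wmap s₁ s₂ p q r a)^[j] (1/2) := by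
    intro j hj hjk
    by_contra hc
    exact Nat.notMem_of_lt_sInf hjk ⟨hj, not_lt.mp hc⟩
  have hx1 : Wmap s₁ s₂ p q r a (1/2) = 1/2 + r*a := by
    unfold Wmap
    rw [if_neg (by linarith), if_neg (by linarith), if_pos (by linarith)]
    ring
  have hx2 : Wmap s₁ s₂ p q r a (1/2 + r*a) = 1/2 - r*a*(s₂ + q*a - 1) := by
    unfold Wmap
    rw [if_neg (by linarith), if_neg (by linarith), if_pos (by linarith)]
    ring
  have hi : 0 < 1/(s₁-1) := one_div_pos.mpr (by linarith)
  have hi2 : s₁ * (1/(s₁-1)) - 1 = 1/(s₁-1) := by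
    have : s₁ - 1 ≠ 0 := by linarith
    field_simp
    ring
  set c := 1/(s₁-1) with hc
  have key : ∀ n, n ≤ N → r*a*(c + (s₂ - 1 - c) * s₁^n) ≤
      1/2 - (Wmap s₁ s₂ p q r a)^[n+2] (1/2) := by
    intro n
    induction n with
    | zero =>
      intro _
      have : (Wmap s₁ s₂ p q r a)^[0+2] (1/2) = 1/2 - r*a*(s₂ + q*a - 1) := by
        simp only [zero_add, Function.iterate_succ, Function.iterate_zero, Function.comp, id]
        rw [hx1, hx2]
      rw [this]
      nlinarith [mul_pos hra hqa]
    | succ n ih =>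
      intro hn
      have h := ih (by omega)
      have hx := hne (n+2) (by omega) (by omega)
      rw [show n + 1 + 2 = (n+2)+1 by ring, Function.iterate_succ_apply']
      set x := (Wmap s₁ s₂ p q r a)^[n+2] (1/2) with hxd
      have hpw : 0 < s₁^n := by positivity
      have hl : 0 < r*a*(c + (s₂ - 1 - c) * s₁^n) := by positivity
      have hW : Wmap s₁ s₂ p q r a x = (s₁ + p*a)*(x - 1/2) + 1/2 + r*a := by
        unfold Wmap
        rw [if_neg (by linarith), if_pos (by linarith)]
      rw [hW]
      have e1 : 0 ≤ p*a*(1/2 - x) := mul_nonneg hpa.le (by linarith)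
      have e2 := mul_le_mul_of_nonneg_left h (by linarith : 0 ≤ s₁)
      have e3 : r*a*(c + (s₂ - 1 - c) * s₁^(n+1)) =
          s₁ * (r*a*(c + (s₂ - 1 - c) * s₁^n)) - r*a := by
        rw [pow_succ]
        linear_combination (-(r*a)) * hi2
      rw [e3]
      linarith
  have h := key N le_rfl
  have hx := hne (N+2) (by omega) (by omega)
  have := mul_pos hra hi
  linarith

/-- Lemma 5(II): if `1/s₁ + 1/s₂ < 1`, then `a·k(a) → 0` as `a → 0⁺`. -/
theorem Wmap_a_mul_k_tendsto_zero_lt_one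
    (s₁ s₂ p q r : ℝ) (hs₁ : 1 < s₁) (hs₂ : 1 < s₂)
    (hp : 0 < p) (hq : 0 < q) (hr : 0 < r)
    (hsum : 1/s₁ + 1/s₂ < 1) :
    Tendsto (fun a => a * (kIndex s₁ s₂ p q r a : ℝ)) (𝓝[>] (0:ℝ)) (𝓝 0) := by
  have hδ : 0 < s₂ - 1 - 1/(s₁-1) := by
    have h0 : 0 < s₁ - 1 := by linarith
    rw [div_add_div _ _ (by linarith) (by linarith), div_lt_one (by positivity)] at hsum
    rw [sub_pos, div_lt_iff₀ h0]
    nlinarith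
  obtain ⟨K, hK⟩ := (tendsto_pow_const_div_const_pow_of_one_lt 2 hs₁).bddAbove_range
  have hK' : ∀ n : ℕ, (n:ℝ)^2 ≤ K * s₁^n := by
    intro n
    have := hK ⟨n, rfl⟩
    rwa [div_le_iff₀ (by positivity)] at this
  have hK0 : 0 ≤ K := by simpa using hK' 0
  set δ := s₂ - 1 - 1/(s₁-1) with hδd
  set C := K / (2*(r*δ)) with hC
  have hC0 : 0 ≤ C := by positivity
  have hlim : Tendsto (fun a : ℝ => 3*a + √(C*a)) (𝓝[>] 0) (𝓝 0) := by
    have : Continuous (fun a : ℝ => 3*a + √(C*a)) := by fun_prop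
    have h := this.tendsto 0
    simp only [mul_zero, Real.sqrt_zero, add_zero] at h
    exact h.mono_left nhdsWithin_le_nhds
  have ev1 : ∀ᶠ a in 𝓝[>] (0:ℝ), 1 + 2*(r*a) < s₁ := by
    have : Continuous (fun a : ℝ => 1 + 2*(r*a)) := by fun_prop
    exact ((this.tendsto 0).mono_left nhdsWithin_le_nhds).eventually_lt_const (by simpa using hs₁)
  have ev2 : ∀ᶠ a in 𝓝[>] (0:ℝ), r*a*(s₂ + q*a - 1) < 1/2 := by
    have : Continuous (fun a : ℝ => r*a*(s₂ + q*a - 1)) := by fun_prop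
    exact ((this.tendsto 0).mono_left nhdsWithin_le_nhds).eventually_lt_const (by norm_num)
  refine tendsto_of_tendsto_of_tendsto_of_le_of_le' tendsto_const_nhds hlim ?_ ?_
  · filter_upwards [self_mem_nhdsWithin] with a ha
    have : (0:ℝ) < a := ha
    positivity
  · filter_upwards [self_mem_nhdsWithin, ev1, ev2] with a ha h1 h2
    have ha : (0:ℝ) < a := ha
    rcases Nat.lt_or_ge (kIndex s₁ s₂ p q r a) 3 with hk | hk
    · have hk' : (kIndex s₁ s₂ p q r a : ℝ) ≤ 3 := by exact_mod_cast hk.le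
      have := Real.sqrt_nonneg (C*a)
      nlinarith
    · obtain ⟨N, hN⟩ := Nat.exists_eq_add_of_le' hk
      have hb := kIndex_bound s₁ s₂ p q r a hs₁ hs₂ hp hq hr ha h1.le h2 N hδ hN.ge
      rw [hN]
      push_cast
      have hs : a * (N:ℝ) ≤ √(C*a) := by
        apply Real.le_sqrt_of_sq_le
        have hCe : C * (2*(r*δ)) = K := by
          rw [hC]; field_simp
        have e1 : a * s₁^N * (2*(r*δ)) ≤ 1 := by
          rw [← hδd] at hb
          linarith
        have e2 : a * (N:ℝ)^2 ≤ C := by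
          calc a * (N:ℝ)^2 ≤ a * (K * s₁^N) := mul_le_mul_of_nonneg_left (hK' N) ha.le
            _ = C * (a * s₁^N * (2*(r*δ))) := by rw [← hCe]; ring
            _ ≤ C * 1 := mul_le_mul_of_nonneg_left e1 hC0
            _ = C := mul_one C
        nlinarith
      linarith
end

section
/- Suppose 1/s₁ + 1/s₂ < 1 and set k₁(a) = ⌊2k(a)/3⌋. Then lim_{a→0⁺} a·(s₁+pa)^{k₁(a)} = 0. -/
open MeasureTheory Filter Topology

theorem aux_orbit (s₁ s₂ p q r a : ℝ) (hs₁ : 1 < s₁) (hs₂ : 1 < s₂)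
    (hp : 0 < p) (hq : 0 < q) (hr : 0 < r) (ha : 0 < a) (hc : 0 < (s₂-1) - 1/(s₁-1))
    (hau : r * a * (s₂ + q * a) < 1/2) (n : ℕ)
    (hn : n + 2 < kIndex s₁ s₂ p q r a + 1) :
    (Wmap s₁ s₂ p q r a)^[n+2] (1/2) - 1/2 ≤
      -(r*a/(s₁+p*a-1)) - ((s₂-1) - 1/(s₁-1)) * (r*a) * (s₁+p*a)^n := by
  have hpa : 0 < p * a := mul_pos hp ha
  have hqa : 0 < q * a := mul_pos hq ha
  have hra : 0 < r * a := mul_pos hr ha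
  induction n with
  | zero =>
    have h1 : Wmap s₁ s₂ p q r a (1/2) = 1/2 + r*a := by
      unfold Wmap
      have e1 : 0 < (1/2 + r*a)/(s₁ + p*a) := by positivity
      have e2 : 0 < (1/2 + r*a)/(s₂ + q*a) := by positivity
      rw [if_neg (by linarith), if_neg (by linarith), if_pos (by linarith)]
      ring
    have h2 : Wmap s₁ s₂ p q r a (1/2 + r*a) = 1/2 + r*a - (s₂+q*a)*(r*a) := by
      unfold Wmap
      have e1 : 0 < (1/2 + r*a)/(s₁ + p*a) := by positivity
      have e2 : r*a < (1/2 + r*a)/(s₂ + q*a) := by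
        rw [lt_div_iff₀ (by positivity)]
        linarith
      rw [if_neg (by linarith), if_neg (by linarith), if_pos (by linarith)]
      ring
    have h3 : (Wmap s₁ s₂ p q r a)^[0+2] (1/2) = 1/2 + r*a - (s₂+q*a)*(r*a) := by
      rw [← h2, ← h1]; rfl
    rw [h3]
    have h4 : 1/(s₁+p*a-1) ≤ 1/(s₁-1) :=
      one_div_le_one_div_of_le (by linarith) (by linarith)
    have h5 : r*a/(s₁+p*a-1) = (1/(s₁+p*a-1)) * (r*a) := by ring
    rw [h5, pow_zero]
    nlinarith [mul_le_mul_of_nonneg_right h4 hra.le, mul_pos hqa hra]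
  | succ n ih =>
    have ih := ih (by omega)
    have hgt : 1/2 - (1/2 + r*a)/(s₁ + p*a) < (Wmap s₁ s₂ p q r a)^[n+2] (1/2) := by
      by_contra hcon
      have := Nat.notMem_of_lt_sInf (show n + 2 < sInf {j : ℕ | 1 ≤ j ∧
        (Wmap s₁ s₂ p q r a)^[j] (1/2) ≤ 1/2 - (1/2 + r*a)/(s₁ + p*a)} by
          unfold kIndex at hn; omega)
      exact this ⟨by omega, not_lt.mp hcon⟩
    have ht1 : 0 < s₁ + p*a - 1 := by linarith
    have e3 : 0 < r*a/(s₁+p*a-1) := by positivity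
    have e4 : 0 ≤ ((s₂-1) - 1/(s₁-1)) * (r*a) * (s₁+p*a)^n :=
      mul_nonneg (mul_nonneg hc.le hra.le) (by positivity)
    have hstep : (Wmap s₁ s₂ p q r a)^[n+1+2] (1/2) =
        (s₁+p*a) * ((Wmap s₁ s₂ p q r a)^[n+2] (1/2) - 1/2) + 1/2 + r*a := by
      rw [show n + 1 + 2 = (n+2)+1 by ring, Function.iterate_succ_apply']
      generalize (Wmap s₁ s₂ p q r a)^[n+2] (1/2) = x at *
      unfold Wmap
      rw [if_neg (by linarith), if_pos (by linarith)]
    rw [hstep]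
    have e5 := mul_le_mul_of_nonneg_left ih (show 0 ≤ s₁ + p*a by positivity)
    have e6 : (s₁+p*a) * (r*a/(s₁+p*a-1)) = r*a + r*a/(s₁+p*a-1) := by
      field_simp
      ring
    rw [pow_succ]
    linarith

theorem aux_bound (s₁ s₂ p q r a : ℝ) (hs₁ : 1 < s₁) (hs₂ : 1 < s₂)
    (hp : 0 < p) (hq : 0 < q) (hr : 0 < r) (ha : 0 < a) (ha1 : a ≤ 1)
    (hc : 0 < (s₂-1) - 1/(s₁-1))
    (hau : r * a * (s₂ + q * a) < 1/2) :
    a * (s₁+p*a)^(kIndex s₁ s₂ p q r a) ≤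
      (s₁+p)^3 * (1 + 1/(((s₂-1) - 1/(s₁-1)) * r)) := by
  have hpa : 0 < p * a := mul_pos hp ha
  have hqa : 0 < q * a := mul_pos hq ha
  have hra : 0 < r * a := mul_pos hr ha
  have hpa' : p * a ≤ p := by nlinarith
  have hra2 : r * a < 1/2 := by nlinarith
  have ho := aux_orbit s₁ s₂ p q r a hs₁ hs₂ hp hq hr ha hc hau
  set c := (s₂-1) - 1/(s₁-1) with hcdef
  have hT : s₁ + p*a ≤ s₁ + p := by linarith
  have ht1 : 1 ≤ s₁ + p*a := by linarith
  have hcr : 0 < 1/(c*r) := by positivity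
  have hT3 : (0:ℝ) < (s₁+p)^3 := by positivity
  by_cases hk : kIndex s₁ s₂ p q r a ≤ 2
  · have h1 : (s₁+p*a)^(kIndex s₁ s₂ p q r a) ≤ (s₁+p)^3 :=
      (pow_le_pow_right₀ ht1 (by omega : _ ≤ 3)).trans
        (pow_le_pow_left₀ (by linarith) hT 3)
    have h2 : a * (s₁+p*a)^(kIndex s₁ s₂ p q r a) ≤ 1 * (s₁+p)^3 :=
      mul_le_mul ha1 h1 (by positivity) (by norm_num)
    nlinarith [mul_pos hT3 hcr]
  · obtain ⟨n, hn⟩ : ∃ n, kIndex s₁ s₂ p q r a = n + 3 :=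
      ⟨kIndex s₁ s₂ p q r a - 3, by omega⟩
    have hgt : 1/2 - (1/2 + r*a)/(s₁ + p*a) < (Wmap s₁ s₂ p q r a)^[n+2] (1/2) := by
      by_contra hcon
      have := Nat.notMem_of_lt_sInf (show n + 2 < sInf {j : ℕ | 1 ≤ j ∧
        (Wmap s₁ s₂ p q r a)^[j] (1/2) ≤ 1/2 - (1/2 + r*a)/(s₁ + p*a)} by
          unfold kIndex at hn; omega)
      exact this ⟨by omega, not_lt.mp hcon⟩
    have h1 := ho n (by omega)
    have e3 : 0 ≤ r*a/(s₁+p*a-1) := div_nonneg hra.le (by linarith)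
    have e4 : (1/2 + r*a)/(s₁ + p*a) ≤ 1 := by
      rw [div_le_one (by linarith)]; linarith
    have e5 : c * (r*a) * (s₁+p*a)^n ≤ 1 := by linarith
    have e6 : a * (s₁+p*a)^n ≤ 1/(c*r) := by
      rw [le_div_iff₀ (by positivity)]
      linarith
    have e7 : (s₁+p*a)^3 ≤ (s₁+p)^3 := pow_le_pow_left₀ (by linarith) hT 3
    rw [hn, pow_add, ← mul_assoc]
    have := mul_le_mul e6 e7 (by positivity) hcr.le
    linarith

/-- Lemma 5(III): if `1/s₁ + 1/s₂ < 1`, then `a·(s₁+pa)^{k₁(a)} → 0` as `a → 0⁺`,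
where `k₁(a) = ⌊2k(a)/3⌋`. -/
theorem Wmap_a_pow_k1_tendsto_zero_lt_one
    (s₁ s₂ p q r : ℝ) (hs₁ : 1 < s₁) (hs₂ : 1 < s₂)
    (hp : 0 < p) (hq : 0 < q) (hr : 0 < r)
    (hsum : 1/s₁ + 1/s₂ < 1) :
    Tendsto (fun a => a * (s₁ + p*a)^(kIndex1 s₁ s₂ p q r a))
      (𝓝[>] (0:ℝ)) (𝓝 0) := by
  have hc : 0 < (s₂-1) - 1/(s₁-1) := by
    have h1 : 0 < s₁ - 1 := by linarith
    rw [div_add_div _ _ (by linarith) (by linarith), div_lt_one (by positivity)] at hsum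
    rw [sub_pos, div_lt_iff₀ h1]
    nlinarith
  set C := (s₁+p)^3 * (1 + 1/(((s₂-1) - 1/(s₁-1)) * r)) with hC
  have hlim : Tendsto (fun a : ℝ => (C^2 * a) ^ ((1:ℝ)/3)) (𝓝[>] (0:ℝ)) (𝓝 0) := by
    have h : ContinuousAt (fun a : ℝ => (C^2 * a) ^ ((1:ℝ)/3)) 0 :=
      ContinuousAt.rpow_const (by fun_prop) (Or.inr (by norm_num))
    have h2 := h.tendsto.mono_left (nhdsWithin_le_nhds (s := Set.Ioi 0))
    have h3 : (C^2 * (0:ℝ)) ^ ((1:ℝ)/3) = 0 := by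
      rw [mul_zero, Real.zero_rpow (by norm_num)]
    rwa [h3] at h2
  have hsmall : ∀ᶠ a in 𝓝[>] (0:ℝ), r * a * (s₂ + q * a) < 1/2 := by
    have h : ContinuousAt (fun a : ℝ => r * a * (s₂ + q * a)) 0 := by fun_prop
    have h2 := h.tendsto.mono_left (nhdsWithin_le_nhds (s := Set.Ioi 0))
    exact h2.eventually_lt_const (by norm_num)
  have hone : ∀ᶠ a in 𝓝[>] (0:ℝ), a < 1 :=
    (tendsto_id.mono_left nhdsWithin_le_nhds).eventually_lt_const
      (by norm_num : (0:ℝ) < 1)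
  have hpos : ∀ᶠ a in 𝓝[>] (0:ℝ), 0 < a := self_mem_nhdsWithin
  refine squeeze_zero' ?_ ?_ hlim
  · filter_upwards [hpos] with a ha
    have := mul_pos hp ha
    positivity
  · filter_upwards [hpos, hone, hsmall] with a ha ha1 hau
    have hb := aux_bound s₁ s₂ p q r a hs₁ hs₂ hp hq hr ha ha1.le hc hau
    rw [← hC] at hb
    have hpa := mul_pos hp ha
    have ht1 : 1 ≤ s₁ + p*a := by linarith
    have hk : kIndex1 s₁ s₂ p q r a * 3 ≤ kIndex s₁ s₂ p q r a * 2 := by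
      unfold kIndex1; omega
    have hpow := pow_le_pow_right₀ ht1 hk
    rw [pow_mul, pow_mul] at hpow
    have h0 : 0 ≤ a * (s₁+p*a)^(kIndex s₁ s₂ p q r a) := by positivity
    have hsq := pow_le_pow_left₀ h0 hb 2
    have h3 : (a * (s₁+p*a)^(kIndex1 s₁ s₂ p q r a))^3 ≤ C^2 * a := by
      calc (a * (s₁+p*a)^(kIndex1 s₁ s₂ p q r a))^3
          = a^3 * ((s₁+p*a)^(kIndex1 s₁ s₂ p q r a))^3 := by rw [mul_pow]
        _ ≤ a^3 * ((s₁+p*a)^(kIndex s₁ s₂ p q r a))^2 :=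
            mul_le_mul_of_nonneg_left hpow (by positivity)
        _ = (a * (s₁+p*a)^(kIndex s₁ s₂ p q r a))^2 * a := by ring
        _ ≤ C^2 * a := mul_le_mul_of_nonneg_right hsq ha.le
    have h4 : 0 ≤ a * (s₁+p*a)^(kIndex1 s₁ s₂ p q r a) := by positivity
    calc a * (s₁+p*a)^(kIndex1 s₁ s₂ p q r a)
        = ((a * (s₁+p*a)^(kIndex1 s₁ s₂ p q r a))^3) ^ ((1:ℝ)/3) := by
          rw [← Real.rpow_natCast (_ : ℝ) 3, ← Real.rpow_mul h4]
          norm_num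
      _ ≤ _ := Real.rpow_le_rpow (by positivity) h3 (by norm_num)
end
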